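/- arXiv:1012.5043 — 7 statements merged into one kernel-verified Lean document; each statement's English description precedes it below -/
import Mathlib

section
/- There exists a universal constant C > 0 such that for every power of 2 n ≥ 2, every positive integer c, and every classical deterministic one-way protocol for the Hidden Matching problem HM(n) using c bits of communication (message function μ : {0,1}^n → {0,1}^c and Bob's output function mapping each message m and each perfect matching M to a pair (i,j) ∈ M and a bit v), the winning probability Pr[v = x_i ⊕ x_j] over uniformly random x ∈ {0,1}^n and a uniformly random perfect matching M is at most 1/2 + C·c/√n. -/
open scoped Classical
open Finset

/-- A perfect matching on `Fin n`, represented as a fixed-point-free involution: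
the pair `(i, M i)` is matched for every `i`. -/
def Matching (n : ℕ) : Type :=
  {M : Fin n → Fin n // (∀ i, M (M i) = i) ∧ ∀ i, M i ≠ i}

noncomputable instance (n : ℕ) : Fintype (Matching n) :=
  Subtype.fintype _

lemma le_of_sq_le_sq_aux {a b : ℝ} (h : a ^ 2 ≤ b ^ 2) (hb : 0 ≤ b) : a ≤ b :=
  abs_le_of_sq_le_sq' h hb |>.2

/-- The sign of a bit. -/
noncomputable def sgn (b : Bool) : ℝ := if b then -1 else 1

lemma sgn_sq (b : Bool) : sgn b * sgn b = 1 := by cases b <;> simp [sgn]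

lemma sum_cube_succ {n : ℕ} (f : (Fin (n+1) → Bool) → ℝ) :
    ∑ x, f x = ∑ y : Fin n → Bool, (f (Fin.cons true y) + f (Fin.cons false y)) := by
  rw [← (Fin.consEquiv (fun _ => Bool)).sum_comp, Fintype.sum_prod_type, Fintype.sum_bool,
    ← Finset.sum_add_distrib]
  rfl

lemma cs_quad {n : ℕ} (B : Fin n → Fin n → ℝ) (d : Fin n → ℝ) :
    (∑ i, ∑ j, B i j * (d i * d j)) ^ 2 ≤ (∑ i, ∑ j, B i j ^ 2) * (∑ i, d i ^ 2) ^ 2 := by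
  have h := Finset.sum_mul_sq_le_sq_mul_sq (Finset.univ : Finset (Fin n × Fin n))
    (fun p => B p.1 p.2) (fun p => d p.1 * d p.2)
  simp only [Fintype.sum_prod_type] at h
  refine h.trans (le_of_eq ?_)
  congr 1
  rw [sq (∑ i, d i ^ 2), Finset.sum_mul_sum]
  simp only [mul_pow]

lemma chaos (n : ℕ) : ∀ B : Fin n → Fin n → ℝ, (∑ i, ∑ j, B i j ^ 2) ≤ 1 / 16 →
    ∑ x : Fin n → Bool, Real.exp (∑ i, ∑ j, B i j * (sgn (x i) * sgn (x j)))
      ≤ 2 ^ n * Real.exp (∑ i, B i i + 3 * ∑ i, ∑ j, B i j ^ 2) := by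
  induction n with
  | zero => intro B _; simp
  | succ n ih =>
    intro B hB
    set d : Fin n → ℝ := fun i => B 0 i.succ + B i.succ 0 with hd
    set B' : Fin n → Fin n → ℝ := fun i j => B i.succ j.succ with hB'
    set N : ℝ := ∑ i : Fin n, (B 0 i.succ ^ 2 + B i.succ 0 ^ 2) with hN
    set F : ℝ := ∑ i, ∑ j, B' i j ^ 2 with hF
    set D : ℝ := ∑ i, d i ^ 2 with hD
    have hsplit : ∑ i, ∑ j, B i j ^ 2 = B 0 0 ^ 2 + N + F := by
      simp only [Fin.sum_univ_succ, Finset.sum_add_distrib, hN, hF, hB']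
      ring
    have hN0 : 0 ≤ N := by positivity
    have hF0 : 0 ≤ F := by positivity
    have hD0 : 0 ≤ D := by positivity
    have hDN : D ≤ 2 * N := by
      rw [hD, hN, Finset.mul_sum]
      apply Finset.sum_le_sum
      intro i _
      simp only [hd]
      nlinarith [sq_nonneg (B 0 i.succ - B i.succ 0)]
    rw [hsplit] at hB ⊢
    have hb0 := sq_nonneg (B 0 0)
    set X : ℝ := ∑ i, ∑ j, B' i j * (d i * d j) with hX
    have hcs : X ^ 2 ≤ F * D ^ 2 := cs_quad B' d
    have hX1 : X ≤ D / 4 := by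
      refine le_of_sq_le_sq_aux ?_ (by positivity)
      nlinarith [sq_nonneg D]
    set B2 : Fin n → Fin n → ℝ := fun i j => B' i j + d i * d j / 2 with hB2
    have hB2n : ∑ i, ∑ j, B2 i j ^ 2 = F + X + D ^ 2 / 4 := by
      have : D ^ 2 = ∑ i, ∑ j, (d i * d j) ^ 2 := by
        rw [hD, sq, Finset.sum_mul_sum]
        simp only [mul_pow]
      rw [this, hF, hX]
      simp only [Finset.sum_div, ← Finset.sum_add_distrib, hB2]
      refine Finset.sum_congr rfl fun i _ => Finset.sum_congr rfl fun j _ => ?_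
      ring
    have hB2le : ∑ i, ∑ j, B2 i j ^ 2 ≤ F + 9 / 16 * N := by
      rw [hB2n]; nlinarith
    have htr : ∑ i, B2 i i = ∑ i, B' i i + D / 2 := by
      rw [hD]
      simp only [Finset.sum_div, ← Finset.sum_add_distrib, hB2]
      refine Finset.sum_congr rfl fun i _ => ?_
      ring
    have ih2 := ih B2 (by linarith)
    have hpt : ∀ y : Fin n → Bool,
        Real.exp (∑ i, ∑ j, B i j * (sgn ((Fin.cons true y : Fin (n+1) → Bool) i) *
            sgn ((Fin.cons true y : Fin (n+1) → Bool) j))) +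
        Real.exp (∑ i, ∑ j, B i j * (sgn ((Fin.cons false y : Fin (n+1) → Bool) i) *
            sgn ((Fin.cons false y : Fin (n+1) → Bool) j)))
        ≤ 2 * Real.exp (B 0 0) *
          Real.exp (∑ i, ∑ j, B2 i j * (sgn (y i) * sgn (y j))) := by
      intro y
      set L : ℝ := ∑ i, d i * sgn (y i) with hL
      set Q : ℝ := ∑ i, ∑ j, B' i j * (sgn (y i) * sgn (y j)) with hQ
      have hgen : ∀ b : Bool, ∑ i, ∑ j, B i j * (sgn ((Fin.cons b y : Fin (n+1) → Bool) i) *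
            sgn ((Fin.cons b y : Fin (n+1) → Bool) j)) = B 0 0 + Q + sgn b * L := by
        intro b
        simp only [Fin.sum_univ_succ, Fin.cons_zero, Fin.cons_succ, sgn_sq,
          Finset.sum_add_distrib, hQ, hL, hd, hB', add_mul, Finset.mul_sum, mul_add]
        have e1 : ∀ i : Fin n, B 0 i.succ * (sgn b * sgn (y i)) = sgn b * (B 0 i.succ * sgn (y i)) :=
          fun i => by ring
        have e2 : ∀ i : Fin n, B i.succ 0 * (sgn (y i) * sgn b) = sgn b * (B i.succ 0 * sgn (y i)) :=
          fun i => by ring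
        simp only [e1, e2]
        ring
      have hB2y : ∑ i, ∑ j, B2 i j * (sgn (y i) * sgn (y j)) = Q + L ^ 2 / 2 := by
        rw [hL, sq, Finset.sum_mul_sum, hQ]
        simp only [Finset.sum_div, ← Finset.sum_add_distrib, hB2]
        refine Finset.sum_congr rfl fun i _ => Finset.sum_congr rfl fun j _ => ?_
        ring
      rw [hgen, hgen, hB2y]
      have hc := Real.cosh_le_exp_half_sq L
      rw [Real.cosh_eq] at hc
      simp only [sgn, if_true, Bool.false_eq_true, if_false, Real.exp_add, one_mul, neg_mul]
      have := mul_le_mul_of_nonneg_left hc (mul_pos (Real.exp_pos (B 0 0)) (Real.exp_pos Q)).le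
      nlinarith
    rw [sum_cube_succ]
    refine (Finset.sum_le_sum fun y _ => hpt y).trans ?_
    rw [← Finset.mul_sum]
    refine (mul_le_mul_of_nonneg_left ih2 (by positivity)).trans ?_
    rw [show 2 * Real.exp (B 0 0) * (2 ^ n * Real.exp (∑ i, B2 i i + 3 * ∑ i, ∑ j, B2 i j ^ 2))
      = 2 ^ (n+1) * Real.exp (B 0 0 + (∑ i, B2 i i + 3 * ∑ i, ∑ j, B2 i j ^ 2)) by
        rw [Real.exp_add (B 0 0)]; ring]
    apply mul_le_mul_of_nonneg_left _ (by positivity)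
    apply Real.exp_le_exp.mpr
    rw [htr, Fin.sum_univ_succ (fun i => B i i)]
    simp only [hB'] at *
    linarith

/-- Conjugation of a matching by a permutation. -/
def Matching.conj {n : ℕ} (e : Equiv.Perm (Fin n)) (M : Matching n) : Matching n :=
  ⟨fun i => e (M.1 (e.symm i)), by
    refine ⟨fun i => by simp [M.2.1], fun i h => ?_⟩
    apply M.2.2 (e.symm i)
    exact (Equiv.eq_symm_apply e).2 h⟩

lemma card_le_of_swap {n : ℕ} (i j j' : Fin n) (hj : j ≠ i) (hj' : j' ≠ i) :
    (univ.filter fun M : Matching n => M.1 i = j).card ≤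
    (univ.filter fun M : Matching n => M.1 i = j').card := by
  apply Finset.card_le_card_of_injOn (Matching.conj (Equiv.swap j j'))
  · intro M hM
    simp only [coe_filter, mem_univ, true_and, Set.mem_ofPred_eq] at hM ⊢
    simp [Matching.conj, Equiv.swap_apply_of_ne_of_ne hj.symm hj'.symm, hM]
  · intro M _ M' _ h
    apply Subtype.ext
    funext a
    have := congrFun (congrArg Subtype.val h) (Equiv.swap j j' a)
    simpa [Matching.conj] using this

lemma card_fiber {n : ℕ} (i j : Fin n) (hj : j ≠ i) :
    ((n : ℝ) - 1) * (univ.filter fun M : Matching n => M.1 i = j).card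
      = Fintype.card (Matching n) := by
  have h1 : Fintype.card (Matching n) =
      ∑ a : Fin n, (univ.filter fun M : Matching n => M.1 i = a).card := by
    rw [← Finset.card_univ]
    exact Finset.card_eq_sum_card_fiberwise (fun _ _ => Finset.mem_coe.2 (mem_univ _))
  have h2 : ∀ a : Fin n, (univ.filter fun M : Matching n => M.1 i = a).card =
      if a = i then 0 else (univ.filter fun M : Matching n => M.1 i = j).card := by
    intro a
    split_ifs with h
    · subst h
      rw [Finset.card_eq_zero, Finset.filter_eq_empty_iff]
      exact fun M _ => M.2.2 a
    · exact le_antisymm (card_le_of_swap i a j h hj) (card_le_of_swap i j a hj h)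
  rw [h1, Finset.sum_congr rfl fun a _ => h2 a]
  push_cast
  have h3 : ∀ (a : Fin n) (r : ℝ), (if a = i then 0 else r) = r - if a = i then r else 0 := by
    intro a r; split_ifs <;> simp
  simp only [h3, Finset.sum_sub_distrib, Finset.sum_const, Finset.sum_ite_eq', mem_univ, if_true,
    Finset.card_univ, Fintype.card_fin, nsmul_eq_mul]
  ring

/-- Averaging of a nonnegative function over matchings. -/
lemma sum_matching {n : ℕ} (hn : 2 ≤ n) (G : Fin n → Fin n → ℝ) (hG : ∀ i, G i i = 0) :
    ∑ M : Matching n, ∑ i, G i (M.1 i) =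
      Fintype.card (Matching n) / ((n : ℝ) - 1) * ∑ i, ∑ j, G i j := by
  rw [Finset.sum_comm, Finset.mul_sum]
  refine Finset.sum_congr rfl fun i _ => ?_
  have hn' : (n : ℝ) - 1 ≠ 0 := by
    have : (2 : ℝ) ≤ n := by exact_mod_cast hn
    linarith
  rw [← Finset.sum_fiberwise (univ : Finset (Matching n)) (fun M => M.1 i), Finset.mul_sum]
  refine Finset.sum_congr rfl fun j _ => ?_
  rw [Finset.sum_congr rfl (g := fun _ => G i j) (fun M hM => by
    rw [(Finset.mem_filter.1 hM).2]), Finset.sum_const, nsmul_eq_mul]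
  by_cases h : j = i
  · subst h; simp [hG]
  · rw [← card_fiber i j h]; field_simp

lemma ind_eq (v a b : Bool) (p : Decidable (v = xor a b)) :
    (@ite ℝ (v = xor a b) p 1 0) = 1 / 2 + 1 / 2 * (sgn v * (sgn a * sgn b)) := by
  cases v <;> cases a <;> cases b <;> simp [sgn] <;> norm_num

/-- Off-diagonal degree-two coefficients of the message class `m`. -/
noncomputable def coef {n c : ℕ} (μ : (Fin n → Bool) → (Fin c → Bool)) (m : Fin c → Bool)
    (i j : Fin n) : ℝ :=
  if i = j then 0 else ∑ x, if μ x = m then sgn (x i) * sgn (x j) else 0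

/-- Their Euclidean norm. -/
noncomputable def nrm {n c : ℕ} (μ : (Fin n → Bool) → (Fin c → Bool)) (m : Fin c → Bool) : ℝ :=
  Real.sqrt (∑ i, ∑ j, coef μ m i j ^ 2)

lemma sum_nrm {n c : ℕ} (hc : 1 ≤ c) (μ : (Fin n → Bool) → (Fin c → Bool)) :
    ∑ m, nrm μ m ≤ 4 * (2 ^ n * c) := by
  set B : (Fin c → Bool) → Fin n → Fin n → ℝ := fun m i j => coef μ m i j / (4 * nrm μ m) with hB
  set q : (Fin c → Bool) → (Fin n → Bool) → ℝ :=
    fun m x => ∑ i, ∑ j, B m i j * (sgn (x i) * sgn (x j)) with hq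
  have hsq : ∀ m, ∑ i, ∑ j, coef μ m i j ^ 2 = nrm μ m ^ 2 := fun m =>
    (Real.sq_sqrt (by positivity)).symm
  have hBn : ∀ m, ∑ i, ∑ j, B m i j ^ 2 ≤ 1 / 16 := by
    intro m
    simp only [hB, div_pow, ← Finset.sum_div]
    rw [hsq]
    by_cases h : nrm μ m = 0
    · simp [h]
    · apply le_of_eq; field_simp; norm_num
  have htr : ∀ m, ∑ i, B m i i = 0 := fun m => by simp [hB, coef]
  have hE : ∀ m, ∑ x, Real.exp (q m x) ≤ 2 ^ n * Real.exp (3 / 16) := by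
    intro m
    refine (chaos n (B m) (hBn m)).trans ?_
    apply mul_le_mul_of_nonneg_left _ (by positivity)
    apply Real.exp_le_exp.mpr
    rw [htr]; linarith [hBn m]
  have hT : ∀ m, nrm μ m = 4 * ∑ x, if μ x = m then q m x else 0 := by
    intro m
    have h1 : ∑ x, (if μ x = m then q m x else 0) = ∑ i, ∑ j, B m i j * coef μ m i j := by
      have : ∀ x, (if μ x = m then q m x else 0) =
          ∑ i, ∑ j, B m i j * (if μ x = m then sgn (x i) * sgn (x j) else 0) := by
        intro x; split_ifs <;> simp [hq]
      rw [Finset.sum_congr rfl fun x _ => this x, Finset.sum_comm]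
      refine Finset.sum_congr rfl fun i _ => ?_
      rw [Finset.sum_comm]
      refine Finset.sum_congr rfl fun j _ => ?_
      rw [← Finset.mul_sum]
      by_cases h : i = j
      · subst h; simp [hB, coef]
      · simp [coef, h]
    rw [h1]
    have h2 : ∀ i j, B m i j * coef μ m i j = coef μ m i j ^ 2 / (4 * nrm μ m) := by
      intro i j; simp only [hB]; ring
    simp only [h2, ← Finset.sum_div]
    rw [hsq]
    by_cases h : nrm μ m = 0
    · simp [h]
    · field_simp
  set a : ℝ := c * Real.log 2 + 3 / 16 with ha
  have hsum : ∑ x, q (μ x) x ≤ 2 ^ n * a := by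
    have h1 : ∀ x, q (μ x) x ≤ Real.exp (-a) * ∑ m, Real.exp (q m x) + (a - 1) := by
      intro x
      have e1 := Real.add_one_le_exp (q (μ x) x - a)
      have e2 : Real.exp (q (μ x) x) ≤ ∑ m, Real.exp (q m x) :=
        Finset.single_le_sum (f := fun m => Real.exp (q m x))
          (fun m _ => (Real.exp_pos _).le) (mem_univ _)
      have e3 := mul_le_mul_of_nonneg_left e2 (Real.exp_pos (-a)).le
      rw [← Real.exp_add, neg_add_eq_sub] at e3
      linarith
    refine (Finset.sum_le_sum fun x _ => h1 x).trans ?_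
    rw [Finset.sum_add_distrib, ← Finset.mul_sum, Finset.sum_comm]
    have h2 : ∑ m : Fin c → Bool, ∑ x, Real.exp (q m x) ≤ 2 ^ n * Real.exp a := by
      refine (Finset.sum_le_sum fun m _ => hE m).trans ?_
      rw [Finset.sum_const, nsmul_eq_mul, ha, Real.exp_add, Real.exp_nat_mul,
        Real.exp_log (by norm_num)]
      simp only [Finset.card_univ, Fintype.card_fun, Fintype.card_bool, Fintype.card_fin]
      push_cast
      apply le_of_eq; ring
    have h3 := mul_le_mul_of_nonneg_left h2 (Real.exp_pos (-a)).le
    have h4 : Real.exp (-a) * (2 ^ n * Real.exp a) = 2 ^ n := by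
      rw [mul_left_comm, ← Real.exp_add]; simp
    rw [h4] at h3
    simp only [Finset.sum_const, Finset.card_univ, Fintype.card_fun, Fintype.card_bool,
      Fintype.card_fin, nsmul_eq_mul]
    push_cast
    linarith
  have hac : a ≤ c := by
    have := Real.log_two_lt_d9
    have hc' : (1 : ℝ) ≤ c := by exact_mod_cast hc
    rw [ha]; nlinarith
  rw [Finset.sum_congr rfl fun m _ => hT m, ← Finset.mul_sum, Finset.sum_comm]
  simp only [Finset.sum_ite_eq, mem_univ, if_true]
  have : (2 : ℝ) ^ n * a ≤ 2 ^ n * c := by gcongr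
  linarith

lemma sum_abs_coef {n c : ℕ} (hn : 2 ≤ n) (μ : (Fin n → Bool) → (Fin c → Bool))
    (m : Fin c → Bool) (f : Matching n → Fin n) :
    ∑ M : Matching n, |coef μ m (f M) (M.1 (f M))| ≤
      Fintype.card (Matching n) / Real.sqrt ((n : ℝ) - 1) * nrm μ m := by
  have hn' : (0 : ℝ) < (n : ℝ) - 1 := by
    have : (2 : ℝ) ≤ n := by exact_mod_cast hn
    linarith
  have hs := Real.sqrt_pos.2 hn'
  have hnn : 0 ≤ nrm μ m := Real.sqrt_nonneg _
  apply le_of_sq_le_sq_aux _ (by positivity)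
  have h1 := sq_sum_le_card_mul_sum_sq (s := (univ : Finset (Matching n)))
    (f := fun M => |coef μ m (f M) (M.1 (f M))|)
  refine h1.trans ?_
  have h2 : ∑ M : Matching n, |coef μ m (f M) (M.1 (f M))| ^ 2 ≤
      Fintype.card (Matching n) / ((n : ℝ) - 1) * nrm μ m ^ 2 := by
    rw [nrm, Real.sq_sqrt (by positivity),
      ← sum_matching hn (fun i j => coef μ m i j ^ 2) (fun i => by simp [coef])]
    apply Finset.sum_le_sum
    intro M _
    rw [sq_abs]
    exact Finset.single_le_sum (f := fun i => coef μ m i (M.1 i) ^ 2)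
      (fun i _ => sq_nonneg _) (mem_univ _)
  rw [Finset.card_univ]
  refine (mul_le_mul_of_nonneg_left h2 (by positivity)).trans (le_of_eq ?_)
  rw [mul_pow, div_pow, Real.sq_sqrt hn'.le]
  ring

lemma advantage {n c : ℕ} (hn : 2 ≤ n) (hc : 1 ≤ c) (μ : (Fin n → Bool) → (Fin c → Bool))
    (out : (Fin c → Bool) → Matching n → Fin n × Bool) :
    ∑ x : Fin n → Bool, ∑ M : Matching n, sgn (out (μ x) M).2 *
      (sgn (x (out (μ x) M).1) * sgn (x (M.1 (out (μ x) M).1))) ≤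
      Fintype.card (Matching n) / Real.sqrt ((n : ℝ) - 1) * (4 * (2 ^ n * c)) := by
  have h1 : ∑ x : Fin n → Bool, ∑ M : Matching n, sgn (out (μ x) M).2 *
      (sgn (x (out (μ x) M).1) * sgn (x (M.1 (out (μ x) M).1))) =
      ∑ m, ∑ M : Matching n, sgn (out m M).2 * coef μ m (out m M).1 (M.1 (out m M).1) := by
    rw [← Finset.sum_fiberwise univ μ]
    refine Finset.sum_congr rfl fun m _ => ?_
    rw [Finset.sum_comm]
    refine Finset.sum_congr rfl fun M _ => ?_
    rw [coef, if_neg (M.2.2 _).symm, Finset.mul_sum, Finset.sum_filter]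
    refine Finset.sum_congr rfl fun x _ => ?_
    split_ifs with h
    · rw [h]
    · simp
  rw [h1]
  refine le_trans ?_ (mul_le_mul_of_nonneg_left (sum_nrm hc μ) (by positivity))
  rw [Finset.mul_sum]
  apply Finset.sum_le_sum
  intro m _
  refine le_trans ?_ (sum_abs_coef hn μ m (fun M => (out m M).1))
  apply Finset.sum_le_sum
  intro M _
  refine (le_abs_self _).trans ?_
  rw [abs_mul]
  have : |sgn (out m M).2| = 1 := by unfold sgn; split_ifs <;> simp
  rw [this, one_mul]

/-- For every power of two `n = 2^k ≥ 2` and every deterministic one-way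
protocol for Hidden Matching with `c` bits of communication (message function `μ`,
Bob's output `out` giving, for each message and matching, an index `i` (matched to
`j = M i`) and a bit `v`), the winning probability over uniform `x` and uniform
perfect matching `M` is at most `1/2 + C·c/√n` for a universal constant `C > 0`. -/
theorem hidden_matching_classical_upper_bound :
    ∃ C : ℝ, 0 < C ∧
      ∀ k : ℕ, 1 ≤ k →
      ∀ c : ℕ, 1 ≤ c →
      ∀ (μ : (Fin (2 ^ k) → Bool) → (Fin c → Bool))
        (out : (Fin c → Bool) → Matching (2 ^ k) → Fin (2 ^ k) × Bool),
        (∑ x : Fin (2 ^ k) → Bool, ∑ M : Matching (2 ^ k),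
            if (out (μ x) M).2
                = xor (x (out (μ x) M).1) (x (M.1 (out (μ x) M).1))
            then (1 : ℝ) else 0)
          / ((2 : ℝ) ^ (2 ^ k) * (Fintype.card (Matching (2 ^ k))))
        ≤ 1 / 2 + C * c / Real.sqrt (2 ^ k) := by
  refine ⟨3, by norm_num, ?_⟩
  intro k hk c hc μ out
  have hn : 2 ≤ 2 ^ k := by
    calc 2 = 2 ^ 1 := by norm_num
      _ ≤ 2 ^ k := Nat.pow_le_pow_right (by norm_num) hk
  have hadv := advantage hn hc μ out
  simp only [ind_eq, Finset.sum_add_distrib, ← Finset.mul_sum]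
  generalize (∑ x : Fin (2 ^ k) → Bool, ∑ M : Matching (2 ^ k), sgn (out (μ x) M).2 *
      (sgn (x (out (μ x) M).1) * sgn (x (M.1 (out (μ x) M).1)))) = A at hadv ⊢
  simp only [Finset.sum_const, Finset.card_univ, Fintype.card_fun, Fintype.card_bool,
      Fintype.card_fin, nsmul_eq_mul]
  push_cast at hadv ⊢
  have hn2 : (2 : ℝ) ≤ 2 ^ k := by exact_mod_cast hn
  generalize hr : ((2 : ℝ) ^ k) = r at hadv hn2 ⊢
  have hP : (0 : ℝ) < 2 ^ (2 ^ k) := by positivity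
  generalize ((2 : ℝ) ^ (2 ^ k)) = P at hadv hP ⊢
  generalize hK : ((Fintype.card (Matching (2 ^ k)) : ℕ) : ℝ) = K at hadv ⊢
  have hK0 : 0 ≤ K := by rw [← hK]; positivity
  have hs : 0 < Real.sqrt (r - 1) := Real.sqrt_pos.2 (by linarith)
  have hsr : 0 < Real.sqrt r := Real.sqrt_pos.2 (by linarith)
  have hcmp : 2 * Real.sqrt r ≤ 3 * Real.sqrt (r - 1) := by
    apply le_of_sq_le_sq_aux _ (by positivity)
    rw [mul_pow, mul_pow, Real.sq_sqrt (by linarith), Real.sq_sqrt (by linarith)]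
    linarith
  have hc0 : (0 : ℝ) ≤ c := by positivity
  have hfin : 2 * c / Real.sqrt (r - 1) ≤ 3 * c / Real.sqrt r := by
    rw [div_le_div_iff₀ hs hsr]
    nlinarith
  rcases hK0.eq_or_lt with h0 | hKpos
  · rw [← h0, mul_zero, div_zero]
    positivity
  · refine le_trans ?_ (add_le_add_right hfin (1 / 2))
    rw [div_le_iff₀ (by positivity)]
    have e : (1 / 2 + 2 * c / Real.sqrt (r - 1)) * (P * K) =
        P * (K * (1 / 2)) + 1 / 2 * (K / Real.sqrt (r - 1) * (4 * (P * c))) := by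
      ring
    rw [e]
    linarith
end

section
/- There exists a universal constant C > 0 such that for every positive integer n and every nonempty subset X ⊆ {0,1}^n with density p = |X|/2^n, defining β_{ij} = (1/|X|) Σ_{x ∈ X} (−1)^{x_i ⊕ x_j} for each ordered pair (i,j) with i ≠ j, one has Σ_{i ≠ j} β_{ij}² ≤ C·(1 + log₂(1/p))². -/
open scoped Classical
open Finset

namespace LevelTwo

/-- The sign of a bit. -/
noncomputable def sg (b : Bool) : ℝ := if b then -1 else 1

/-- Flip coordinate `i`. -/
def flip {n : ℕ} (i : Fin n) (x : Fin n → Bool) : Fin n → Bool :=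
  fun j => if j = i then !(x j) else x j

lemma flip_invol {n : ℕ} (i : Fin n) : Function.Involutive (flip i) := by
  intro x
  funext j
  by_cases h : j = i <;> simp [flip, h]

lemma sg_flip_same {n : ℕ} (i : Fin n) (x : Fin n → Bool) : sg (flip i x i) = - sg (x i) := by
  cases h : x i <;> simp [flip, sg, h]

lemma flip_ne {n : ℕ} {i j : Fin n} (h : j ≠ i) (x : Fin n → Bool) : flip i x j = x j := by
  simp [flip, h]

lemma sg_sq (b : Bool) : sg b ^ 2 = 1 := by cases b <;> simp [sg]

lemma sum_flip {n : ℕ} (i : Fin n) (G : (Fin n → Bool) → ℝ) :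
    ∑ x, G (flip i x) = ∑ x, G x :=
  Equiv.sum_comp (flip_invol i).toPerm G

lemma exp_avg (b : Bool) (c F : ℝ) :
    Real.exp (F + sg b * c) + Real.exp (F + -sg b * c) ≤ 2 * Real.exp (F + c ^ 2 / 2) := by
  have h := Real.cosh_le_exp_half_sq c
  rw [Real.cosh_eq] at h
  have hF := Real.exp_pos F
  cases b <;> simp only [sg, Real.exp_add] <;> simp <;> nlinarith

/-- One-coordinate averaging. -/
lemma step {n : ℕ} (i : Fin n) (F c : (Fin n → Bool) → ℝ)
    (hF : ∀ x, F (flip i x) = F x) (hc : ∀ x, c (flip i x) = c x) :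
    ∑ x, Real.exp (F x + sg (x i) * c x) ≤ ∑ x, Real.exp (F x + c x ^ 2 / 2) := by
  have h1 := sum_flip i (fun x => Real.exp (F x + sg (x i) * c x))
  simp only [hF, hc, sg_flip_same] at h1
  have h2 : ∑ x, (Real.exp (F x + sg (x i) * c x) + Real.exp (F x + -sg (x i) * c x))
      ≤ ∑ x, 2 * Real.exp (F x + c x ^ 2 / 2) :=
    sum_le_sum fun x _ => exp_avg _ _ _
  rw [sum_add_distrib, ← mul_sum] at h2
  linarith

lemma many {n : ℕ} (S : Finset (Fin n)) (c : Fin n → (Fin n → Bool) → ℝ)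
    (hc : ∀ i ∈ S, ∀ k, ∀ x, c k (flip i x) = c k x) :
    ∀ F : (Fin n → Bool) → ℝ, (∀ i ∈ S, ∀ x, F (flip i x) = F x) →
    ∑ x, Real.exp (F x + ∑ i ∈ S, sg (x i) * c i x)
      ≤ ∑ x, Real.exp (F x + ∑ i ∈ S, c i x ^ 2 / 2) := by
  induction S using Finset.induction_on with
  | empty => intro F _; simp
  | insert i S hi ih =>
    intro F hF
    have hS : ∀ j ∈ S, j ≠ i := fun j hj h => hi (h ▸ hj)
    have h1 := step i (fun x => F x + ∑ j ∈ S, sg (x j) * c j x) (c i)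
      (by
        intro x
        simp only [hF i (mem_insert_self _ _)]
        congr 1
        refine sum_congr rfl fun j hj => ?_
        rw [flip_ne (hS j hj), hc i (mem_insert_self _ _)])
      (hc i (mem_insert_self _ _) i)
    have h2 := ih (fun j hj => hc j (mem_insert_of_mem hj)) (fun x => F x + c i x ^ 2 / 2)
      (by
        intro j hj x
        simp only [hF j (mem_insert_of_mem hj), hc j (mem_insert_of_mem hj)])
    simp only [sum_insert hi]
    calc _ = ∑ x, Real.exp (F x + ∑ j ∈ S, sg (x j) * c j x + sg (x i) * c i x) := by
            refine sum_congr rfl fun x _ => ?_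
            congr 1; ring
      _ ≤ _ := h1
      _ = ∑ x, Real.exp (F x + c i x ^ 2 / 2 + ∑ j ∈ S, sg (x j) * c j x) := by
            refine sum_congr rfl fun x _ => ?_
            congr 1; ring
      _ ≤ _ := h2
      _ = _ := by
            refine sum_congr rfl fun x _ => ?_
            congr 1; ring

lemma subg {n : ℕ} (a : Fin n → ℝ) (T : Finset (Fin n)) :
    ∀ s : ℝ, 0 ≤ s → 4 * s * ∑ j ∈ T, a j ^ 2 ≤ 1 →
    ∑ x : Fin n → Bool, Real.exp (s * (∑ j ∈ T, a j * sg (x j)) ^ 2)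
      ≤ 2 ^ n * Real.exp (2 * s * ∑ j ∈ T, a j ^ 2) := by
  induction T using Finset.induction_on with
  | empty => intro s _ _; simp
  | insert i T hi ih =>
    intro s hs h
    have hT : ∀ j ∈ T, j ≠ i := fun j hj h => hi (h ▸ hj)
    simp only [sum_insert hi] at h ⊢
    set A := ∑ j ∈ T, a j ^ 2 with hA
    have hA0 : 0 ≤ A := sum_nonneg fun j _ => sq_nonneg _
    set v := s * a i ^ 2 with hv
    have hv0 : 0 ≤ v := by positivity
    have hu0 : 0 ≤ s * A := by positivity
    have hl : ∀ x, ∑ j ∈ T, a j * sg (flip i x j) = ∑ j ∈ T, a j * sg (x j) := fun x =>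
      sum_congr rfl fun j hj => by rw [flip_ne (hT j hj)]
    have h1 := step i (fun x => s * a i ^ 2 + s * (∑ j ∈ T, a j * sg (x j)) ^ 2)
      (fun x => 2 * s * a i * (∑ j ∈ T, a j * sg (x j)))
      (by intro x; simp only [hl]) (by intro x; simp only [hl])
    have h2 := ih (s * (1 + 2 * v)) (by positivity) (by nlinarith)
    calc _ = ∑ x : Fin n → Bool, Real.exp (s * a i ^ 2 + s * (∑ j ∈ T, a j * sg (x j)) ^ 2 +
              sg (x i) * (2 * s * a i * (∑ j ∈ T, a j * sg (x j)))) := by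
            refine sum_congr rfl fun x _ => ?_
            congr 1
            linear_combination (s * a i ^ 2) * sg_sq (x i)
      _ ≤ _ := h1
      _ = Real.exp v * ∑ x : Fin n → Bool,
            Real.exp (s * (1 + 2 * v) * (∑ j ∈ T, a j * sg (x j)) ^ 2) := by
            rw [mul_sum]
            refine sum_congr rfl fun x _ => ?_
            rw [← Real.exp_add]
            congr 1
            rw [hv]; ring
      _ ≤ Real.exp v * (2 ^ n * Real.exp (2 * (s * (1 + 2 * v)) * A)) := by gcongr
      _ = 2 ^ n * Real.exp (v + 2 * (s * (1 + 2 * v)) * A) := by rw [Real.exp_add]; ring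
      _ ≤ _ := by
            gcongr
            nlinarith

/-- Exponential moment of the bipartite chaos. -/
lemma chaos {n : ℕ} (S T : Finset (Fin n)) (hST : Disjoint S T) (b : Fin n → Fin n → ℝ) (l B : ℝ)
    (hB : B = ∑ i ∈ S, ∑ j ∈ T, b i j ^ 2) (hB0 : 0 < B) (hl : 2 * l ^ 2 * B ≤ 1) :
    ∑ x : Fin n → Bool, Real.exp (∑ i ∈ S, sg (x i) * (l * ∑ j ∈ T, b i j * sg (x j)))
      ≤ 2 ^ n * Real.exp (1 / 2) := by
  have h1 := many S (fun i x => l * ∑ j ∈ T, b i j * sg (x j))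
    (by
      intro i hi k x
      have : ∀ j ∈ T, j ≠ i := fun j hj h => (Finset.disjoint_left.mp hST hi) (h ▸ hj)
      congr 1
      exact sum_congr rfl fun j hj => by rw [flip_ne (this j hj)])
    (fun _ => 0) (by simp)
  simp only [zero_add] at h1
  refine h1.trans ?_
  set Bi : Fin n → ℝ := fun i => ∑ j ∈ T, b i j ^ 2 with hBi
  have hBi0 : ∀ i, 0 ≤ Bi i := fun i => sum_nonneg fun j _ => sq_nonneg _
  have hw : ∑ i ∈ S, Bi i / B = 1 := by
    rw [← sum_div, ← hB, div_self hB0.ne']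
  have hpt : ∀ x : Fin n → Bool,
      Real.exp (∑ i ∈ S, (l * ∑ j ∈ T, b i j * sg (x j)) ^ 2 / 2) ≤
      ∑ i ∈ S, Bi i / B * Real.exp (l ^ 2 * B / (2 * Bi i) * (∑ j ∈ T, b i j * sg (x j)) ^ 2) := by
    intro x
    have hJ := convexOn_exp.map_sum_le (t := S) (w := fun i => Bi i / B)
      (p := fun i => l ^ 2 * B / (2 * Bi i) * (∑ j ∈ T, b i j * sg (x j)) ^ 2)
      (fun i _ => div_nonneg (hBi0 i) hB0.le) hw (fun _ _ => Set.mem_univ _)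
    simp only [smul_eq_mul] at hJ
    refine le_trans (le_of_eq ?_) hJ
    congr 1
    refine sum_congr rfl fun i _ => ?_
    by_cases h0 : Bi i = 0
    · have hz : ∀ j ∈ T, b i j = 0 := fun j hj => by
        have := (sum_eq_zero_iff_of_nonneg (fun j _ => sq_nonneg (b i j))).mp h0 j hj
        exact pow_eq_zero_iff (two_ne_zero) |>.mp this
      have : ∑ j ∈ T, b i j * sg (x j) = 0 := sum_eq_zero fun j hj => by rw [hz j hj, zero_mul]
      rw [this, h0]; simp
    · have := hB0.ne'
      field_simp
  calc _ ≤ ∑ x : Fin n → Bool, ∑ i ∈ S, Bi i / B *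
        Real.exp (l ^ 2 * B / (2 * Bi i) * (∑ j ∈ T, b i j * sg (x j)) ^ 2) :=
        sum_le_sum fun x _ => hpt x
    _ = ∑ i ∈ S, Bi i / B * ∑ x : Fin n → Bool,
        Real.exp (l ^ 2 * B / (2 * Bi i) * (∑ j ∈ T, b i j * sg (x j)) ^ 2) := by
        rw [sum_comm]
        exact sum_congr rfl fun i _ => (mul_sum _ _ _).symm
    _ ≤ ∑ i ∈ S, Bi i / B * (2 ^ n * Real.exp (1 / 2)) := by
        refine sum_le_sum fun i _ => mul_le_mul_of_nonneg_left ?_ (div_nonneg (hBi0 i) hB0.le)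
        have hle : 4 * (l ^ 2 * B / (2 * Bi i)) * Bi i ≤ 1 := by
          by_cases h0 : Bi i = 0
          · rw [h0]; simp
          · have : 4 * (l ^ 2 * B / (2 * Bi i)) * Bi i = 2 * l ^ 2 * B := by
              field_simp; ring
            rw [this]; exact hl
        have h3 := subg (b i) T (l ^ 2 * B / (2 * Bi i))
          (div_nonneg (by positivity) (by linarith [hBi0 i])) hle
        refine h3.trans ?_
        gcongr
        change 2 * (l ^ 2 * B / (2 * Bi i)) * Bi i ≤ 1 / 2
        linarith
    _ = _ := by rw [← sum_mul, hw, one_mul]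

lemma bipartite {n : ℕ} (X : Finset (Fin n → Bool)) (hX : X.Nonempty)
    (S T : Finset (Fin n)) (hST : Disjoint S T) (b : Fin n → Fin n → ℝ)
    (hb : ∀ i j, b i j = (∑ x ∈ X, sg (x i) * sg (x j)) / X.card) :
    ∑ i ∈ S, ∑ j ∈ T, b i j ^ 2 ≤ 2 * (1 + Real.log ((2 : ℝ) ^ n / X.card)) ^ 2 := by
  set B := ∑ i ∈ S, ∑ j ∈ T, b i j ^ 2 with hB
  have hB0 : 0 ≤ B := sum_nonneg fun i _ => sum_nonneg fun j _ => sq_nonneg _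
  rcases hB0.eq_or_lt with h0 | hpos
  · rw [← h0]; positivity
  have hc : (0 : ℝ) < X.card := by exact_mod_cast hX.card_pos
  have hcard : (X.card : ℝ) ≤ 2 ^ n := by
    have := Finset.card_le_univ X
    simp at this
    exact_mod_cast this
  have hL : 0 ≤ Real.log ((2 : ℝ) ^ n / X.card) :=
    Real.log_nonneg (by rw [le_div_iff₀ hc]; linarith)
  set l := 1 / Real.sqrt (2 * B) with hl
  have hs : 0 < Real.sqrt (2 * B) := Real.sqrt_pos.mpr (by linarith)
  have hss : Real.sqrt (2 * B) ^ 2 = 2 * B := Real.sq_sqrt (by linarith)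
  have hl2 : 2 * l ^ 2 * B = 1 := by
    rw [hl, div_pow, hss]; field_simp
  have h1 := chaos S T hST b l B hB hpos hl2.le
  set q : (Fin n → Bool) → ℝ := fun x =>
    ∑ i ∈ S, sg (x i) * (l * ∑ j ∈ T, b i j * sg (x j)) with hq
  have hq1 : ∑ x ∈ X, 1 / (X.card : ℝ) * q x = l * B := by
    rw [hB, hq]
    simp only [mul_sum]
    rw [sum_comm]
    refine sum_congr rfl fun i _ => ?_
    rw [sum_comm]
    refine sum_congr rfl fun j _ => ?_
    have : b i j ^ 2 = b i j * ((∑ x ∈ X, sg (x i) * sg (x j)) / X.card) := by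
      rw [← hb, sq]
    rw [this, sum_div, mul_sum, mul_sum]
    refine sum_congr rfl fun x _ => ?_
    ring
  have hJ := convexOn_exp.map_sum_le (t := X) (w := fun _ => 1 / (X.card : ℝ)) (p := q)
    (fun _ _ => by positivity) (by simp [hc.ne']) (fun _ _ => Set.mem_univ _)
  simp only [smul_eq_mul] at hJ
  rw [hq1, ← mul_sum] at hJ
  have h2 : ∑ x ∈ X, Real.exp (q x) ≤ ∑ x, Real.exp (q x) :=
    sum_le_sum_of_subset_of_nonneg (subset_univ _) fun _ _ _ => (Real.exp_pos _).le
  have h3 : Real.exp (l * B) ≤ Real.exp (Real.log ((2 : ℝ) ^ n / X.card) + 1 / 2) := by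
    rw [Real.exp_add, Real.exp_log (by positivity)]
    calc _ ≤ _ := hJ
      _ ≤ 1 / (X.card : ℝ) * (2 ^ n * Real.exp (1 / 2)) := by
          gcongr
          exact h2.trans h1
      _ = _ := by ring
  rw [Real.exp_le_exp] at h3
  have hl0 : 0 < l := by positivity
  have h4 : (l * B) ^ 2 ≤ (Real.log ((2 : ℝ) ^ n / X.card) + 1 / 2) ^ 2 := by
    gcongr
  have h5 : 2 * (l * B) ^ 2 = B := by linear_combination B * hl2
  nlinarith

lemma sum_sg {n : ℕ} (i : Fin n) : ∑ x : Fin n → Bool, sg (x i) = 0 := by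
  have := sum_flip i (fun x => sg (x i))
  simp only [sg_flip_same, sum_neg_distrib] at this
  linarith

lemma sum_sg2 {n : ℕ} {i j : Fin n} (h : i ≠ j) :
    ∑ x : Fin n → Bool, sg (x i) * sg (x j) = 0 := by
  have := sum_flip i (fun x => sg (x i) * sg (x j))
  simp only [sg_flip_same, flip_ne h.symm, neg_mul, sum_neg_distrib] at this
  linarith

lemma sum_ind {n : ℕ} {i j : Fin n} (h : i ≠ j) :
    ∑ y : Fin n → Bool, (if y i = true then (if y j = false then (1 : ℝ) else 0) else 0)
      = 2 ^ n / 4 := by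
  have : ∀ y : Fin n → Bool, (if y i = true then (if y j = false then (1 : ℝ) else 0) else 0)
      = 1 / 4 - sg (y i) * (1 / 4) + sg (y j) * (1 / 4) - sg (y i) * sg (y j) * (1 / 4) := by
    intro y
    cases y i <;> cases y j <;> simp [sg] <;> norm_num
  simp only [this, sum_sub_distrib, sum_add_distrib, ← sum_mul, sum_sg, sum_sg2 h]
  simp
  ring

lemma cut {n : ℕ} (w : Fin n → Fin n → ℝ) :
    ∃ y : Fin n → Bool, (∑ i, ∑ j, if i ≠ j then w i j else 0) ≤
      4 * ∑ i ∈ univ.filter (fun i => y i = true), ∑ j ∈ univ.filter (fun j => y j = false), w i j := by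
  have key : ∑ y : Fin n → Bool, (∑ i, ∑ j, if i ≠ j then w i j else 0) ≤
      ∑ y : Fin n → Bool, 4 * ∑ i ∈ univ.filter (fun i => y i = true),
        ∑ j ∈ univ.filter (fun j => y j = false), w i j := by
    apply le_of_eq
    have e : ∀ y : Fin n → Bool, 4 * ∑ i ∈ univ.filter (fun i => y i = true),
        ∑ j ∈ univ.filter (fun j => y j = false), w i j =
        ∑ i, ∑ j, 4 * w i j *
          (if y i = true then (if y j = false then (1 : ℝ) else 0) else 0) := by
      intro y
      rw [sum_filter, mul_sum]
      refine sum_congr rfl fun i _ => ?_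
      rw [sum_filter]
      cases y i
      · simp
      · simp only [if_true, mul_sum]
        refine sum_congr rfl fun j _ => ?_
        cases y j <;> simp
    simp only [e]
    rw [sum_comm, sum_comm (s := univ (α := Fin n → Bool))]
    refine sum_congr rfl fun i _ => ?_
    rw [sum_comm, sum_comm (s := univ (α := Fin n → Bool))]
    refine sum_congr rfl fun j _ => ?_
    rw [← mul_sum]
    by_cases h : i = j
    · subst h
      have : ∀ y : Fin n → Bool,
        (if y i = true then (if y i = false then (1 : ℝ) else 0) else 0) = 0 := by
        intro y; cases y i <;> simp
      simp [this]
    · rw [sum_ind h]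
      simp [h]
      ring
  obtain ⟨y, -, hy⟩ := exists_le_of_sum_le univ_nonempty key
  exact ⟨y, hy⟩

end LevelTwo

/-- For every nonempty `X ⊆ {0,1}^n` of density `p = |X|/2^n`, with
`β_{ij}` the bias of the parity `x_i ⊕ x_j` over a uniform `x ∈ X`, one has
`Σ_{i≠j} β_{ij}² ≤ C·(1 + log₂(1/p))²` for a universal constant `C > 0`
(a consequence of the KKL inequality). -/
theorem level_two_fourier_weight_bound :
    ∃ C : ℝ, 0 < C ∧
      ∀ (n : ℕ), 0 < n →
      ∀ (X : Finset (Fin n → Bool)), X.Nonempty →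
        (∑ i : Fin n, ∑ j : Fin n,
            if i ≠ j then
              ((∑ x ∈ X, if xor (x i) (x j) then (-1 : ℝ) else 1) / X.card) ^ 2
            else 0)
          ≤ C * (1 + Real.logb 2 ((2 : ℝ) ^ n / X.card)) ^ 2 := by
  refine ⟨8, by norm_num, ?_⟩
  intro n _ X hX
  have hb : ∀ i j : Fin n, (∑ x ∈ X, if xor (x i) (x j) then (-1 : ℝ) else 1) =
      ∑ x ∈ X, LevelTwo.sg (x i) * LevelTwo.sg (x j) := by
    intro i j
    refine sum_congr rfl fun x _ => ?_
    cases x i <;> cases x j <;> simp [LevelTwo.sg]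
  simp only [hb]
  obtain ⟨y, hy⟩ := LevelTwo.cut (n := n)
    (fun i j => ((∑ x ∈ X, LevelTwo.sg (x i) * LevelTwo.sg (x j)) / X.card) ^ 2)
  refine hy.trans ?_
  have h := LevelTwo.bipartite X hX (univ.filter (fun i => y i = true))
    (univ.filter (fun j => y j = false))
    (by
      rw [Finset.disjoint_left]
      intro i hi hj
      simp at hi hj
      simp [hi] at hj)
    (fun i j => (∑ x ∈ X, LevelTwo.sg (x i) * LevelTwo.sg (x j)) / X.card) (fun _ _ => rfl)
  have hc : (0 : ℝ) < X.card := by exact_mod_cast hX.card_pos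
  have hcard : (X.card : ℝ) ≤ 2 ^ n := by
    have := Finset.card_le_univ X
    simp at this
    exact_mod_cast this
  have hL : 0 ≤ Real.log ((2 : ℝ) ^ n / X.card) :=
    Real.log_nonneg (by rw [le_div_iff₀ hc]; linarith)
  have hlog : Real.log ((2 : ℝ) ^ n / X.card) ≤ Real.logb 2 ((2 : ℝ) ^ n / X.card) := by
    rw [Real.logb, le_div_iff₀ (Real.log_pos (by norm_num))]
    have : Real.log 2 ≤ 1 := by linarith [Real.log_two_lt_d9]
    nlinarith
  have h2 : (1 + Real.log ((2 : ℝ) ^ n / X.card)) ^ 2 ≤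
      (1 + Real.logb 2 ((2 : ℝ) ^ n / X.card)) ^ 2 := by gcongr
  linarith
end

section
/- There exist constants K > 0 and n₀ such that for every power of 2 n ≥ n₀ and every even integer c with 4 ≤ c ≤ √n, there exists a randomized one-way protocol with shared randomness (a probability distribution over deterministic protocols) for the Hidden Matching problem HM(n) using c bits of communication such that for every input pair (x, M), the probability over the shared randomness that Bob's output (i,j,v) satisfies v = x_i ⊕ x_j is at least 1/2 + K·c/√n. -/
open scoped Classical
open Finset

/-- Sign of a bit. -/
noncomputable def hmSgn (b : Bool) : ℝ := if b then -1 else 1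

lemma hmSgn_xor (a b : Bool) : hmSgn (xor a b) = hmSgn a * hmSgn b := by
  cases a <;> cases b <;> simp [hmSgn]

lemma hmSgn_sq (a : Bool) : hmSgn a * hmSgn a = 1 := by
  cases a <;> simp [hmSgn]

lemma hm_win (v a b : Bool) :
    (if v = xor a b then (1 : ℝ) else 0) = (1 + hmSgn v * (hmSgn a * hmSgn b)) / 2 := by
  cases v <;> cases a <;> cases b <;> norm_num [hmSgn]

/-- Signed sum of a bit string. -/
noncomputable def hmS {s : ℕ} (y : Fin s → Bool) : ℝ := ∑ t, hmSgn (y t)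

/-- Majority bit. -/
noncomputable def hmMaj {s : ℕ} (y : Fin s → Bool) : Bool := decide (hmS y < 0)

lemma hmMaj_mul {s : ℕ} (y : Fin s → Bool) : hmSgn (hmMaj y) * hmS y = |hmS y| := by
  unfold hmMaj hmSgn
  by_cases h : hmS y < 0
  · simp [h, abs_of_neg h]
  · simp [h, abs_of_nonneg (not_lt.mp h)]

lemma hm_sum_succ {s : ℕ} (F : ℝ → ℝ) :
    ∑ y : Fin (s + 1) → Bool, F (hmS y) =
      ∑ y : Fin s → Bool, (F (hmS y + 1) + F (hmS y - 1)) := by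
  rw [← (Fin.consEquiv (fun _ : Fin (s + 1) => Bool)).sum_comp]
  rw [Fintype.sum_prod_type_right]
  refine Finset.sum_congr rfl fun y _ => ?_
  rw [Fintype.sum_bool, add_comm]
  congr 2 <;> simp [hmS, Fin.consEquiv, Fin.sum_univ_succ, hmSgn] <;> ring

lemma hm_m2 (s : ℕ) : ∑ y : Fin s → Bool, (hmS y) ^ 2 = 2 ^ s * s := by
  induction s with
  | zero => simp [hmS]
  | succ s ih =>
    rw [hm_sum_succ (fun z => z ^ 2)]
    have : ∀ y : Fin s → Bool, ((hmS y + 1) ^ 2 + (hmS y - 1) ^ 2) = 2 * hmS y ^ 2 + 2 := by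
      intro y; ring
    simp only [this, Finset.sum_add_distrib, ← Finset.mul_sum, ih]
    simp
    ring

lemma hm_m4 (s : ℕ) : ∑ y : Fin s → Bool, (hmS y) ^ 4 = 2 ^ s * (3 * s ^ 2 - 2 * s) := by
  induction s with
  | zero => simp [hmS]
  | succ s ih =>
    rw [hm_sum_succ (fun z => z ^ 4)]
    have : ∀ y : Fin s → Bool, ((hmS y + 1) ^ 4 + (hmS y - 1) ^ 4)
        = 2 * hmS y ^ 4 + 12 * hmS y ^ 2 + 2 := by
      intro y; ring
    simp only [this, Finset.sum_add_distrib, ← Finset.mul_sum, ih, hm_m2]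
    simp
    ring

lemma hm_pt (u q : ℝ) (hq : 0 < q) (hu : 0 ≤ u) :
    u ^ 2 / (2 * q) - u ^ 4 / (18 * q ^ 3) ≤ u := by
  obtain ⟨w, rfl⟩ : ∃ w, u = w * q := ⟨u / q, by field_simp⟩
  have hw : 0 ≤ w := by
    by_contra h
    push Not at h
    nlinarith
  have e : (w * q) ^ 2 / (2 * q) - (w * q) ^ 4 / (18 * q ^ 3)
      = q * (w * (w / 2 - w ^ 3 / 18)) := by
    field_simp
  rw [e, mul_comm w q]
  refine mul_le_mul_of_nonneg_left ?_ hq.le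
  have : w / 2 - w ^ 3 / 18 ≤ 1 := by
    nlinarith [mul_nonneg hw (sq_nonneg (w - 2)), sq_nonneg (w - 2)]
  nlinarith

lemma hm_abs (s : ℕ) (hs : 0 < s) :
    2 ^ s * (Real.sqrt s / 3) ≤ ∑ y : Fin s → Bool, |hmS y| := by
  have hs' : (0 : ℝ) < s := by exact_mod_cast hs
  set q := Real.sqrt s with hq
  have hq0 : 0 < q := Real.sqrt_pos.mpr hs'
  have hqq : q ^ 2 = s := Real.sq_sqrt hs'.le
  have h1 : ∑ y : Fin s → Bool, ((hmS y) ^ 2 / (2 * q) - (hmS y) ^ 4 / (18 * q ^ 3))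
      ≤ ∑ y : Fin s → Bool, |hmS y| := by
    refine Finset.sum_le_sum fun y _ => ?_
    have := hm_pt |hmS y| q hq0 (abs_nonneg _)
    rwa [sq_abs, Even.pow_abs (by decide)] at this
  refine le_trans ?_ h1
  rw [Finset.sum_sub_distrib, ← Finset.sum_div, ← Finset.sum_div, hm_m2, hm_m4, ← hqq]
  have e : (2 : ℝ) ^ s * q ^ 2 / (2 * q) - 2 ^ s * (3 * (q ^ 2) ^ 2 - 2 * q ^ 2) / (18 * q ^ 3)
      = 2 ^ s * (q / 3) + 2 ^ s / (9 * q) := by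
    field_simp
    ring
  rw [e]
  have : (0 : ℝ) ≤ 2 ^ s / (9 * q) := by positivity
  linarith

lemma hm_symm {s : ℕ} (t t' : Fin s) :
    ∑ y : Fin s → Bool, hmSgn (hmMaj y) * hmSgn (y t)
      = ∑ y : Fin s → Bool, hmSgn (hmMaj y) * hmSgn (y t') := by
  rw [← ((Equiv.swap t t').arrowCongr (Equiv.refl Bool)).sum_comp]
  refine Finset.sum_congr rfl fun y _ => ?_
  have h : hmS ((Equiv.swap t t').arrowCongr (Equiv.refl Bool) y) = hmS y := by
    unfold hmS
    rw [← Equiv.sum_comp (Equiv.swap t t')]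
    simp [Equiv.arrowCongr]
  have h2 : hmMaj ((Equiv.swap t t').arrowCongr (Equiv.refl Bool) y) = hmMaj y := by
    unfold hmMaj; rw [h]
  rw [h2]
  simp [Equiv.arrowCongr]

lemma hm_beta {s : ℕ} (t : Fin s) :
    2 ^ s / (3 * Real.sqrt s) ≤ ∑ y : Fin s → Bool, hmSgn (hmMaj y) * hmSgn (y t) := by
  have hs : 0 < s := t.pos
  have hs' : (0 : ℝ) < s := by exact_mod_cast hs
  have h : (s : ℝ) * ∑ y : Fin s → Bool, hmSgn (hmMaj y) * hmSgn (y t)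
      = ∑ y : Fin s → Bool, |hmS y| := by
    have : ∑ t' : Fin s, ∑ y : Fin s → Bool, hmSgn (hmMaj y) * hmSgn (y t')
        = (s : ℝ) * ∑ y : Fin s → Bool, hmSgn (hmMaj y) * hmSgn (y t) := by
      rw [Finset.sum_congr rfl fun t' _ => hm_symm t' t]
      simp
    rw [← this, Finset.sum_comm]
    refine Finset.sum_congr rfl fun y _ => ?_
    rw [← Finset.mul_sum, ← hmMaj_mul]
    rfl
  have h2 := hm_abs s hs
  rw [← h] at h2
  have hq0 : 0 < Real.sqrt s := Real.sqrt_pos.mpr hs'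
  have hqq : Real.sqrt s * Real.sqrt s = s := Real.mul_self_sqrt hs'.le
  refine le_of_mul_le_mul_left (le_trans (le_of_eq ?_) h2) hs'
  rw [mul_div_assoc', div_eq_iff (by positivity)]
  linear_combination (-(2 : ℝ) ^ s) * hqq

lemma hm_beta_mask {s : ℕ} (t : Fin s) (z : Fin s → Bool) :
    2 ^ s / (3 * Real.sqrt s) ≤ ∑ r : Fin s → Bool,
      hmSgn (hmMaj (fun t' => xor (z t') (r t'))) * (hmSgn (r t) * hmSgn (z t)) := by
  have hinv : Function.Involutive (fun (r : Fin s → Bool) t' => xor (z t') (r t')) := by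
    intro r; funext t'; simp
  refine le_trans (hm_beta t) (le_of_eq ?_)
  rw [← Equiv.sum_comp hinv.toPerm]
  refine Finset.sum_congr rfl fun r _ => ?_
  simp only [Function.Involutive.coe_toPerm]
  rw [hmSgn_xor]
  ring

lemma hm_miss {N : ℕ} {V : Type} [Fintype V] [DecidableEq V] (T : Finset (Fin N)) (hT : T.card = Fintype.card V)
    (hN : 0 < N) (hlam : (N : ℝ) ≤ 4 * (Fintype.card V : ℝ) ^ 2) :
    (N : ℝ) ^ Fintype.card V / 5 ≤
      ((Finset.univ.filter fun p : V → Fin N => ∃ v, p v ∈ T).card : ℝ) := by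
  set m := Fintype.card V with hm
  have hN' : (0 : ℝ) < N := by exact_mod_cast hN
  have hmN : m ≤ N := by
    rw [← hT]; simpa using Finset.card_le_univ T
  have hneg : (Finset.univ.filter fun p : V → Fin N => ¬ ∃ v, p v ∈ T)
      = Fintype.piFinset (fun _ => Tᶜ) := by
    ext p; simp
  have hc : (Finset.univ.filter fun p : V → Fin N => ¬ ∃ v, p v ∈ T).card = (N - m) ^ m := by
    rw [hneg, Fintype.card_piFinset]
    simp [Finset.card_compl, hT, ← hm]
  have htot := Finset.card_filter_add_card_filter_not (s := (Finset.univ : Finset (V → Fin N)))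
    (fun p => ∃ v, p v ∈ T)
  rw [hc] at htot
  have htot' : ((Finset.univ.filter fun p : V → Fin N => ∃ v, p v ∈ T).card : ℝ)
      + ((N : ℝ) - m) ^ m = (N : ℝ) ^ m := by
    have : (Finset.univ : Finset (V → Fin N)).card = N ^ m := by simp [hm]
    rw [this] at htot
    rw [← Nat.cast_sub hmN]
    exact_mod_cast htot
  have hmN' : (m : ℝ) ≤ N := by exact_mod_cast hmN
  -- (1 - m/N)^m ≤ 4/5
  set x : ℝ := m / N with hx
  have hx0 : 0 ≤ x := by positivity
  have hx1 : x ≤ 1 := by rw [hx, div_le_one hN']; exact hmN'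
  have hb : 1 + (m : ℝ) * x ≤ (1 + x) ^ m :=
    one_add_mul_le_pow (by linarith) m
  have hmx : (1 : ℝ) / 4 ≤ m * x := by
    rw [hx, mul_div_assoc', le_div_iff₀ hN']; nlinarith
  have hprod : (1 - x) ^ m * (1 + x) ^ m ≤ 1 := by
    rw [← mul_pow]
    exact pow_le_one₀ (mul_nonneg (by linarith) (by linarith)) (by nlinarith)
  have hp0 : 0 ≤ (1 - x) ^ m := pow_nonneg (by linarith) m
  have h45 : (1 - x) ^ m ≤ 4 / 5 := by nlinarith
  have hfac : ((N : ℝ) - m) ^ m = (N : ℝ) ^ m * (1 - x) ^ m := by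
    rw [← mul_pow, hx]; congr 1; field_simp
  have hNm : (0 : ℝ) < (N : ℝ) ^ m := by positivity
  rw [hfac] at htot'
  nlinarith

/-- The protocol for abstract parameters. -/
lemma hm_protocol (N h s : ℕ) (hN : 0 < N) (hs : 0 < s) (hle : h * s ≤ N)
    (hlam : (N : ℝ) ≤ 4 * ((h * s : ℕ) : ℝ) ^ 2) (c : ℕ) (hc : c = h + h) :
    ∃ (R : Type) (_ : Fintype R) (w : R → ℝ)
        (μ : R → (Fin N → Bool) → (Fin c → Bool))
        (out : R → (Fin c → Bool) → Matching N → Fin N × Bool),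
        (∀ r, 0 ≤ w r) ∧ (∑ r, w r) = 1 ∧
        ∀ (x : Fin N → Bool) (M : Matching N),
          1 / 2 + 1 / (90 * (s : ℝ)) ≤
            ∑ r, w r *
              (if (out r (μ r x) M).2
                  = xor (x (out r (μ r x) M).1) (x (M.1 (out r (μ r x) M).1))
               then (1 : ℝ) else 0) := by
  subst hc
  have hs' : (0 : ℝ) < s := by exact_mod_cast hs
  have hN' : (0 : ℝ) < N := by exact_mod_cast hN
  let V := Fin h × Fin s
  have hV : Fintype.card V = h * s := by simp [V]
  obtain ⟨e⟩ : Nonempty (V ↪ Fin N) :=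
    Function.Embedding.nonempty_of_card_le (by simpa [hV] using hle)
  let R := (V → Fin N) × Bool × (Fin s → Bool) × (Fin s → Bool)
  let C : ℝ := (N : ℝ) ^ (h * s) * (2 * (2 ^ s * 2 ^ s))
  have hC : 0 < C := by positivity
  have hcard : (Fintype.card R : ℝ) = C := by
    simp [R, C, V]
  let y1 : (Fin N → Bool) → Fin h → (Fin s → Bool) := fun x a t => x (e (a, t))
  let y2 : (Fin N → Bool) → (V → Fin N) → Fin h → (Fin s → Bool) := fun x p a t => x (p (a, t))
  let μ : R → (Fin N → Bool) → (Fin (h + h) → Bool) := fun r x =>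
    Fin.append
      (fun a => hmMaj (fun t => xor (y1 x a t) (r.2.2.1 t)))
      (fun a => hmMaj (fun t => xor (y2 x r.1 a t) (r.2.2.2 t)))
  let hit : (V → Fin N) → Matching N → Prop := fun p M => ∃ v, ∃ u, M.1 (e u) = p v
  let out : R → (Fin (h + h) → Bool) → Matching N → Fin N × Bool := fun r msg M =>
    if H : hit r.1 M then
      (e H.choose_spec.choose,
        xor (xor (msg (Fin.castAdd h H.choose_spec.choose.1)) (r.2.2.1 H.choose_spec.choose.2))
          (xor (msg (Fin.natAdd h H.choose.1)) (r.2.2.2 H.choose.2)))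
    else (⟨0, hN⟩, r.2.1)
  refine ⟨R, inferInstance, fun _ => 1 / C, μ, out, fun _ => by positivity, ?_, ?_⟩
  · rw [Finset.sum_const, nsmul_eq_mul, Finset.card_univ, hcard]
    field_simp
  intro x M
  let W : R → ℝ := fun r => hmSgn (out r (μ r x) M).2 *
    (hmSgn (x (out r (μ r x) M).1) * hmSgn (x (M.1 (out r (μ r x) M).1)))
  have hsum : ∑ r : R, (1 / C) *
              (if (out r (μ r x) M).2
                  = xor (x (out r (μ r x) M).1) (x (M.1 (out r (μ r x) M).1))
               then (1 : ℝ) else 0) = 1 / 2 + (∑ r : R, W r) / (2 * C) := by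
    simp only [hm_win]
    rw [← Finset.mul_sum, ← Finset.sum_div, Finset.sum_add_distrib, Finset.sum_const,
      nsmul_eq_mul, Finset.card_univ, hcard]
    change 1 / C * ((C * 1 + ∑ r : R, W r) / 2) = _
    field_simp
  rw [hsum]
  set β : ℝ := 2 ^ s / (3 * Real.sqrt s) with hβ
  have hβ0 : 0 ≤ β := by positivity
  have hp : ∀ p : V → Fin N, (if hit p M then 2 * (β * β) else 0) ≤
      ∑ q : Bool × (Fin s → Bool) × (Fin s → Bool), W (p, q) := by
    intro p
    by_cases H : hit p M
    · rw [if_pos H]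
      obtain ⟨u, hu⟩ : ∃ u, u = H.choose_spec.choose := ⟨_, rfl⟩
      obtain ⟨v, hv⟩ : ∃ v, v = H.choose := ⟨_, rfl⟩
      have huv : M.1 (e u) = p v := by rw [hu, hv]; exact H.choose_spec.choose_spec
      have hW : ∀ b r1 r2, W (p, b, r1, r2) =
          (hmSgn (hmMaj (fun t => xor (y1 x u.1 t) (r1 t))) * (hmSgn (r1 u.2) * hmSgn (y1 x u.1 u.2)))
          * (hmSgn (hmMaj (fun t => xor (y2 x p v.1 t) (r2 t))) *
              (hmSgn (r2 v.2) * hmSgn (y2 x p v.1 v.2))) := by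
        intro b r1 r2
        have ho : out (p, b, r1, r2) (μ (p, b, r1, r2) x) M =
          (e u, xor (xor (hmMaj (fun t => xor (y1 x u.1 t) (r1 t))) (r1 u.2))
            (xor (hmMaj (fun t => xor (y2 x p v.1 t) (r2 t))) (r2 v.2))) := by
          subst hu
          subst hv
          simp only [out, dif_pos H, μ, Fin.append_left, Fin.append_right]
        simp only [W, ho, hmSgn_xor, huv, y1, y2]
        ring
      simp only [Fintype.sum_prod_type, hW, ← Finset.mul_sum, ← Finset.sum_mul]
      rw [Finset.sum_const]
      simp only [Finset.card_univ, Fintype.card_bool, nsmul_eq_mul, Nat.cast_ofNat]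
      have h1 := hm_beta_mask u.2 (y1 x u.1)
      have h2 := hm_beta_mask v.2 (y2 x p v.1)
      have h3 := mul_le_mul h1 h2 hβ0 (hβ0.trans h1)
      refine le_trans ?_ (le_of_eq (mul_left_comm _ _ _))
      exact mul_le_mul_of_nonneg_left h3 (by norm_num : (0 : ℝ) ≤ 2)
    · rw [if_neg H]
      have ho : ∀ q, out (p, q) (μ (p, q) x) M = (⟨0, hN⟩, q.1) := by
        intro q; simp only [out, dif_neg H]
      simp only [W, ho]
      rw [Fintype.sum_prod_type]
      simp [hmSgn]
  have hWsum : ∑ r : R, W r = ∑ p : V → Fin N,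
      ∑ q : Bool × (Fin s → Bool) × (Fin s → Bool), W (p, q) := Fintype.sum_prod_type _
  have hge := Finset.sum_le_sum fun p (_ : p ∈ (Finset.univ : Finset (V → Fin N))) => hp p
  rw [← hWsum, ← Finset.sum_filter, Finset.sum_const, nsmul_eq_mul] at hge
  -- hitting probability
  have hMinj : Function.Injective M.1 := by
    intro a b hab
    have := congrArg M.1 hab
    rwa [M.2.1, M.2.1] at this
  let T : Finset (Fin N) := Finset.univ.image (fun u : V => M.1 (e u))
  have hT : T.card = Fintype.card V := by
    exact (Finset.card_image_of_injective _ (hMinj.comp e.injective)).trans Finset.card_univ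
  have hmiss := hm_miss T hT hN (by rw [hV]; exact hlam)
  have hfeq : (Finset.univ.filter fun p : V → Fin N => ∃ v, p v ∈ T)
      = Finset.univ.filter fun p : V → Fin N => hit p M := by
    ext p; simp [T, hit]
  rw [hfeq, hV] at hmiss
  have hfin : (N : ℝ) ^ (h * s) / 5 * (2 * (β * β)) ≤ ∑ r : R, W r :=
    le_trans (mul_le_mul_of_nonneg_right hmiss (by positivity)) hge
  have hββ : β * β = 2 ^ s * 2 ^ s / (9 * s) := by
    have hqq : Real.sqrt s * Real.sqrt s = s := Real.mul_self_sqrt hs'.le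
    rw [hβ, div_mul_div_comm]
    congr 1
    linear_combination 9 * hqq
  rw [hββ] at hfin
  have : 1 / (90 * (s : ℝ)) ≤ (∑ r : R, W r) / (2 * C) := by
    rw [le_div_iff₀ (by positivity)]
    refine le_trans (le_of_eq ?_) hfin
    simp only [C]
    field_simp
    norm_num
  linarith

/-- There are constants `K > 0` and `n₀` such that for every power of two
`n = 2^k ≥ n₀` and every even `c` with `4 ≤ c ≤ √n` there is a randomized one-way
protocol for Hidden Matching with shared randomness (a finitely supported probability
distribution, with weights `w`, over deterministic protocols `(μ r, out r)`) using `c`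
bits of communication, which for EVERY input pair `(x, M)` wins (i.e. Bob's output
`(i, v)` with `j = M i` satisfies `v = x_i ⊕ x_j`) with probability at least
`1/2 + K·c/√n` over the shared randomness. -/
theorem hidden_matching_classical_protocol :
    ∃ K : ℝ, 0 < K ∧ ∃ n₀ : ℕ,
      ∀ k : ℕ, n₀ ≤ 2 ^ k →
      ∀ c : ℕ, 2 ∣ c → 4 ≤ c → (c : ℝ) ≤ Real.sqrt (2 ^ k) →
      ∃ (R : Type) (_ : Fintype R) (w : R → ℝ)
        (μ : R → (Fin (2 ^ k) → Bool) → (Fin c → Bool))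
        (out : R → (Fin c → Bool) → Matching (2 ^ k) → Fin (2 ^ k) × Bool),
        (∀ r, 0 ≤ w r) ∧ (∑ r, w r) = 1 ∧
        ∀ (x : Fin (2 ^ k) → Bool) (M : Matching (2 ^ k)),
          1 / 2 + K * c / Real.sqrt (2 ^ k) ≤
            ∑ r, w r *
              (if (out r (μ r x) M).2
                  = xor (x (out r (μ r x) M).1) (x (M.1 (out r (μ r x) M).1))
               then (1 : ℝ) else 0) := by
  refine ⟨1 / 180, by norm_num, 0, ?_⟩
  intro k _ c h2 h4 hcn
  obtain ⟨h, rfl⟩ := h2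
  have hh : 0 < h := by omega
  have hh' : (0 : ℝ) < h := by exact_mod_cast hh
  set q : ℝ := Real.sqrt (2 ^ k) with hq
  have hqq : q * q = 2 ^ k := Real.mul_self_sqrt (by positivity)
  have hq1 : 1 ≤ q := by
    rw [hq, Real.one_le_sqrt]; exact one_le_pow₀ (by norm_num)
  push_cast at hcn
  have hqh : 2 ≤ q / h := by rw [le_div_iff₀ hh']; exact hcn
  set s : ℕ := ⌊q / h⌋₊ with hs
  have hs1 : (s : ℝ) ≤ q / h := Nat.floor_le (by positivity)
  have hs2 : q / h < s + 1 := Nat.lt_floor_add_one _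
  have hs0 : 0 < s := Nat.floor_pos.mpr (by linarith)
  have hs0' : (1 : ℝ) ≤ s := by exact_mod_cast hs0
  have hm1 : (h : ℝ) * s ≤ q := by
    rw [le_div_iff₀ hh'] at hs1; linarith
  have hm2 : q ≤ 2 * (h * s) := by
    rw [div_lt_iff₀ hh'] at hs2; nlinarith
  have hle : h * s ≤ 2 ^ k := by
    have : ((h * s : ℕ) : ℝ) ≤ ((2 ^ k : ℕ) : ℝ) := by
      push_cast; nlinarith
    exact_mod_cast this
  have hlam : ((2 ^ k : ℕ) : ℝ) ≤ 4 * ((h * s : ℕ) : ℝ) ^ 2 := by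
    push_cast; nlinarith
  obtain ⟨R, hR, w, μ, out, hw0, hw1, hall⟩ :=
    hm_protocol (2 ^ k) h s (by positivity) hs0 hle hlam (2 * h) (by ring)
  refine ⟨R, hR, w, μ, out, hw0, hw1, fun x M => le_trans ?_ (hall x M)⟩
  have : 1 / 180 * ((2 * h : ℕ) : ℝ) / q ≤ 1 / (90 * (s : ℝ)) := by
    push_cast
    rw [div_le_div_iff₀ (by linarith) (by linarith)]
    nlinarith
  linarith
end

section
/- There exists a universal constant C > 0 such that for every n = 2^k and every deterministic strategy for the non-local Hidden Matching game HM_nl(n) (a function A : {0,1}^n → {0,1}^k for Alice, and for Bob a function assigning to each perfect matching M of {0,1}^k a pair (i,j) ∈ M and a bit d), the winning probability p = Pr[(A(x)·(i⊕j)) ⊕ d = x_i ⊕ x_j] over uniformly random x and M satisfies |p − 1/2| ≤ C·(log n)/√n. -/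
open scoped Classical
open Finset

/-- Inner product mod 2 on `{0,1}^k`, as a Boolean. -/
def bdot {k : ℕ} (a b : Fin k → Bool) : Bool :=
  decide ((Finset.univ.filter fun t => a t && b t).card % 2 = 1)

/-- Bitwise XOR on `{0,1}^k`. -/
def bxor {k : ℕ} (a b : Fin k → Bool) : Fin k → Bool := fun t => xor (a t) (b t)

/-- A perfect matching on `{0,1}^k`, represented as a fixed-point-free involution:
the pair `(i, M i)` is matched for every `i`. -/
def MatchingV (k : ℕ) : Type :=
  {M : (Fin k → Bool) → (Fin k → Bool) // (∀ i, M (M i) = i) ∧ ∀ i, M i ≠ i}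

noncomputable instance (k : ℕ) : Fintype (MatchingV k) :=
  Subtype.fintype _

lemma hmSgn_sq_s5 (b : Bool) : hmSgn b ^ 2 = 1 := by cases b <;> simp [hmSgn]

lemma hmSgn_cases (b : Bool) : hmSgn b = 1 ∨ hmSgn b = -1 := by cases b <;> simp [hmSgn]

lemma hmSgn_not (b : Bool) : hmSgn (!b) = - hmSgn b := by cases b <;> simp [hmSgn]

/-- `(u-v)(u^r-v^r) ≤ r (u-v)^2 (u^(r-1)+v^(r-1))`. -/
lemma hm_powdiff (u v : ℝ) (hu : 0 ≤ u) (hv : 0 ≤ v) (r : ℕ) :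
    (u - v) * (u ^ (r+1) - v ^ (r+1)) ≤ (r+1) * (u - v) ^ 2 * (u ^ r + v ^ r) := by
  induction r with
  | zero => norm_num; nlinarith [sq_nonneg (u - v)]
  | succ r ih =>
    have hp : 0 ≤ u ^ r := pow_nonneg hu r
    have hq : 0 ≤ v ^ r := pow_nonneg hv r
    have key : ∀ u v : ℝ, 0 ≤ u → 0 ≤ v → v ≤ u →
        (u - v) * (u ^ (r+1+1) - v ^ (r+1+1))
          ≤ ((r+1 : ℕ) + 1) * (u - v) ^ 2 * (u ^ (r+1) + v ^ (r+1)) := by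
      intro u v hu hv h
      have h1 : u ^ (r+1+1) - v ^ (r+1+1) ≤ ((r+1 : ℕ) + 1) * (u - v) * u ^ (r+1) := by
        have := abs_pow_sub_pow_le u v (r+1+1)
        rw [abs_of_nonneg (sub_nonneg.2 (pow_le_pow_left₀ hv h _)), abs_of_nonneg (sub_nonneg.2 h),
          abs_of_nonneg hu, abs_of_nonneg hv, max_eq_left h] at this
        calc _ ≤ _ := this
          _ = _ := by rw [Nat.add_sub_cancel]; push_cast; ring
      have h2 : 0 ≤ ((r+1 : ℕ) + 1) * (u - v) ^ 2 * v ^ (r+1) := by positivity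
      have h3 := mul_le_mul_of_nonneg_left h1 (sub_nonneg.2 h)
      nlinarith
    rcases le_total v u with h | h
    · exact key u v hu hv h
    · have := key v u hv hu h
      nlinarith

lemma hm_twopoint (F G K : ℝ) (r : ℕ) (hK : (8 * r + 1 : ℝ) ≤ K) :
    (F + G) ^ (2 * r) + (F - G) ^ (2 * r) ≤ 2 * (F ^ 2 + K * G ^ 2) ^ r := by
  have hK0 : 1 ≤ K := le_trans (by linarith [Nat.cast_nonneg (α := ℝ) r]) hK
  simp only [pow_mul]
  set u := (F + G) ^ 2 with hu
  set v := (F - G) ^ 2 with hv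
  have hu0 : 0 ≤ u := sq_nonneg _
  have hv0 : 0 ≤ v := sq_nonneg _
  have hsum : u + v = 2 * (F ^ 2 + G ^ 2) := by rw [hu, hv]; ring
  have hdiff : (u - v) ^ 2 = 16 * F ^ 2 * G ^ 2 := by rw [hu, hv]; ring
  clear_value u v
  set X := F ^ 2 + K * G ^ 2 with hX
  have hX0 : 0 ≤ X := by positivity
  have hFX : F ^ 2 ≤ X := by
    have : 0 ≤ K * G ^ 2 := by positivity
    linarith
  have main : ∀ s : ℕ, s ≤ r → u ^ s + v ^ s ≤ 2 * X ^ s := by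
    intro s
    induction s using Nat.strong_induction_on with
    | _ s ih =>
      intro hs
      match s with
      | 0 => norm_num
      | 1 => simp only [pow_one]; nlinarith [sq_nonneg G]
      | s + 2 =>
        have i1 := ih (s+1) (by omega) (by omega)
        have i0 := ih s (by omega) (by omega)
        have hd := hm_powdiff u v hu0 hv0 s
        have e : u ^ (s+2) + v ^ (s+2)
            = (F ^ 2 + G ^ 2) * (u ^ (s+1) + v ^ (s+1))
              + ((u - v) * (u ^ (s+1) - v ^ (s+1))) / 2 := by
          have : F ^ 2 + G ^ 2 = (u + v) / 2 := by linarith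
          rw [this]; ring
        have hXs : 0 ≤ X ^ s := pow_nonneg hX0 s
        have a1 : (F ^ 2 + G ^ 2) * (u ^ (s+1) + v ^ (s+1)) ≤ (F ^ 2 + G ^ 2) * (2 * X ^ (s+1)) :=
          mul_le_mul_of_nonneg_left i1 (by positivity)
        have a2 : (s+1) * (u - v) ^ 2 * (u ^ s + v ^ s)
            ≤ (s+1) * (16 * F ^ 2 * G ^ 2) * (2 * X ^ s) := by
          rw [hdiff]
          exact mul_le_mul_of_nonneg_left i0 (by positivity)
        have a3 : (s+1) * (16 * F ^ 2 * G ^ 2) * (2 * X ^ s)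
            ≤ (s+1) * (16 * X * G ^ 2) * (2 * X ^ s) := by gcongr
        have a4 : ((8 * (s+1) + 1) * G ^ 2) * X ^ (s+1) ≤ (K * G ^ 2) * X ^ (s+1) := by
          have : ((s:ℝ)+2) ≤ r := by exact_mod_cast hs
          gcongr
          linarith
        have e2 : 2 * X ^ (s+2) = 2 * F ^ 2 * X ^ (s+1) + 2 * ((K * G ^ 2) * X ^ (s+1)) := by
          rw [hX]; ring
        have e3 : (s+1) * (16 * X * G ^ 2) * (2 * X ^ s) = 32 * (s+1) * G ^ 2 * X ^ (s+1) := by ring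
        rw [e, e2]
        nlinarith
  exact main r le_rfl

lemma hm_minkowski {ι : Type*} (s : Finset ι) (f g : ι → ℝ) (hf : ∀ i, 0 ≤ f i) (hg : ∀ i, 0 ≤ g i)
    (r : ℕ) (hr : 1 ≤ r) (N a b : ℝ) (hN : 0 ≤ N) (ha : 0 ≤ a) (hb : 0 ≤ b)
    (h1 : ∑ i ∈ s, f i ^ r ≤ N * a ^ r) (h2 : ∑ i ∈ s, g i ^ r ≤ N * b ^ r) :
    ∑ i ∈ s, (f i + g i) ^ r ≤ N * (a + b) ^ r := by
  have hr1 : (1:ℝ) ≤ r := by exact_mod_cast hr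
  have hr0 : (r:ℝ) ≠ 0 := by positivity
  have h := Real.Lp_add_le_of_nonneg s hr1 (fun i _ => hf i) (fun i _ => hg i)
  simp only [Real.rpow_natCast] at h
  have aux : ∀ c : ℝ, 0 ≤ c → (N * c ^ r) ^ (1 / (r:ℝ)) = N ^ (1 / (r:ℝ)) * c := by
    intro c hc
    rw [Real.mul_rpow hN (pow_nonneg hc r), one_div, Real.pow_rpow_inv_natCast hc (by omega)]
  have b1 := Real.rpow_le_rpow (Finset.sum_nonneg fun i _ => pow_nonneg (hf i) r) h1
    (by positivity : 0 ≤ 1 / (r:ℝ))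
  have b2 := Real.rpow_le_rpow (Finset.sum_nonneg fun i _ => pow_nonneg (hg i) r) h2
    (by positivity : 0 ≤ 1 / (r:ℝ))
  rw [aux a ha] at b1
  rw [aux b hb] at b2
  have h3 : (∑ i ∈ s, (f i + g i) ^ r) ^ (1 / (r:ℝ)) ≤ (N * (a + b) ^ r) ^ (1 / (r:ℝ)) := by
    rw [aux _ (by positivity)]
    linarith
  exact (Real.rpow_le_rpow_iff (Finset.sum_nonneg fun i _ => pow_nonneg (add_nonneg (hf i) (hg i)) r)
    (by positivity) (by positivity)).1 h3

section chaos
variable {V : Type} [Fintype V] [DecidableEq V]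

/-- flip coordinate m -/
def hmFlip (m : V) (x : V → Bool) : V → Bool := fun i => if i = m then !(x i) else x i

lemma hmFlip_invol (m : V) : Function.Involutive (hmFlip m) := by
  intro x; ext i; by_cases h : i = m <;> simp [hmFlip, h]

lemma hm_step (m : V) (F G : (V → Bool) → ℝ) (hF : ∀ x, F (hmFlip m x) = F x)
    (hG : ∀ x, G (hmFlip m x) = G x) (r : ℕ) (hr : 1 ≤ r) (K N a b : ℝ)
    (hK : (8 * r + 1 : ℝ) ≤ K) (hN : 0 ≤ N) (ha : 0 ≤ a) (hb : 0 ≤ b)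
    (h1 : ∑ x, F x ^ (2 * r) ≤ N * a ^ r) (h2 : ∑ x, G x ^ (2 * r) ≤ N * b ^ r) :
    ∑ x, (F x + hmSgn (x m) * G x) ^ (2 * r) ≤ N * (a + K * b) ^ r := by
  have hK0 : 0 ≤ K := le_trans (by positivity) hK
  have e : ∑ x, (F x + hmSgn (x m) * G x) ^ (2 * r)
      = ∑ x, (F x - hmSgn (x m) * G x) ^ (2 * r) := by
    rw [← Equiv.sum_comp (hmFlip_invol m).toPerm]
    apply Finset.sum_congr rfl
    intro x _
    have : hmFlip m x m = !(x m) := by simp [hmFlip]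
    simp only [Function.Involutive.coe_toPerm, hF, hG, this, hmSgn_not]
    ring
  have h3 : 2 * ∑ x, (F x + hmSgn (x m) * G x) ^ (2 * r)
      ≤ 2 * ∑ x, (F x ^ 2 + K * G x ^ 2) ^ r := by
    rw [two_mul]
    nth_rewrite 2 [e]
    rw [← Finset.sum_add_distrib, Finset.mul_sum]
    apply Finset.sum_le_sum
    intro x _
    have := hm_twopoint (F x) (hmSgn (x m) * G x) K r hK
    rwa [mul_pow, hmSgn_sq_s5, one_mul] at this
  have h4 := hm_minkowski Finset.univ (fun x => F x ^ 2) (fun x => K * G x ^ 2)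
    (fun x => sq_nonneg _) (fun x => by positivity) r hr N a (K * b) hN ha (by positivity)
    (by simpa only [← pow_mul] using h1)
    (by
      simp only [mul_pow, ← pow_mul, ← Finset.mul_sum]
      have := mul_le_mul_of_nonneg_left h2 (pow_nonneg hK0 r)
      linarith)
  linarith

lemma hm_khin (c : V → ℝ) (r : ℕ) (hr : 1 ≤ r) (K N : ℝ)
    (hK : (8 * r + 1 : ℝ) ≤ K) (hN : 0 ≤ N) (S : Finset V) :
    (∑ x : V → Bool, (∑ i ∈ S, c i * hmSgn (x i)) ^ (2 * r)
      ≤ Fintype.card (V → Bool) * (K * ∑ i ∈ S, c i ^ 2) ^ r) := by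
  have hK0 : 0 ≤ K := le_trans (by positivity) hK
  induction S using Finset.induction_on with
  | empty => simp [show r ≠ 0 by omega]
  | insert m S hm ih =>
    have h := hm_step m (fun x => ∑ i ∈ S, c i * hmSgn (x i)) (fun _ => c m)
      (by
        intro x
        apply Finset.sum_congr rfl
        intro i hi
        have : i ≠ m := fun h => hm (h ▸ hi)
        simp [hmFlip, this]) (fun _ => rfl) r hr K (Fintype.card (V → Bool))
      (K * ∑ i ∈ S, c i ^ 2) (c m ^ 2) hK (by positivity)
      (mul_nonneg hK0 (Finset.sum_nonneg fun i _ => sq_nonneg _)) (sq_nonneg _) ih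
      (by simp [← pow_mul])
    refine le_trans (le_of_eq ?_) (le_trans h (le_of_eq ?_))
    · apply Finset.sum_congr rfl
      intro x _
      rw [Finset.sum_insert hm]
      ring
    · rw [Finset.sum_insert hm]; ring

lemma hm_chaos (w : V → V → ℝ) (hs : ∀ i j, w i j = w j i) (hd : ∀ i, w i i = 0)
    (r : ℕ) (hr : 1 ≤ r) (K : ℝ) (hK : (8 * r + 1 : ℝ) ≤ K) (S : Finset V) :
    (∑ x : V → Bool, (∑ i ∈ S, ∑ j ∈ S, w i j * hmSgn (x i) * hmSgn (x j)) ^ (2 * r)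
      ≤ Fintype.card (V → Bool) * (2 * K ^ 2 * ∑ i ∈ S, ∑ j ∈ S, w i j ^ 2) ^ r) := by
  have hK0 : 0 ≤ K := le_trans (by positivity) hK
  have hK1 : 1 ≤ K := le_trans (by linarith [Nat.cast_nonneg (α := ℝ) r]) hK
  induction S using Finset.induction_on with
  | empty => simp [show r ≠ 0 by omega]
  | insert m S hm ih =>
    have hne : ∀ i ∈ S, i ≠ m := fun i hi h => hm (h ▸ hi)
    have h := hm_step m (fun x => ∑ i ∈ S, ∑ j ∈ S, w i j * hmSgn (x i) * hmSgn (x j))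
      (fun x => ∑ i ∈ S, (2 * w m i) * hmSgn (x i))
      (by
        intro x
        apply Finset.sum_congr rfl
        intro i hi
        apply Finset.sum_congr rfl
        intro j hj
        simp [hmFlip, hne i hi, hne j hj])
      (by
        intro x
        apply Finset.sum_congr rfl
        intro i hi
        simp [hmFlip, hne i hi]) r hr K (Fintype.card (V → Bool))
      (2 * K ^ 2 * ∑ i ∈ S, ∑ j ∈ S, w i j ^ 2) (K * ∑ i ∈ S, (2 * w m i) ^ 2) hK (by positivity)
      (by positivity) (by positivity) ih
      (hm_khin (fun i => 2 * w m i) r hr K 0 hK le_rfl S)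
    refine le_trans (le_of_eq ?_) (le_trans h (le_of_eq ?_))
    · apply Finset.sum_congr rfl
      intro x _
      simp only [Finset.sum_insert hm, hd, Finset.sum_add_distrib]
      have : ∑ i ∈ S, w i m * hmSgn (x i) * hmSgn (x m)
          = ∑ i ∈ S, w m i * hmSgn (x m) * hmSgn (x i) :=
        Finset.sum_congr rfl fun i _ => by rw [hs i m]; ring
      rw [this, Finset.mul_sum]
      have h2 : ∑ i ∈ S, hmSgn (x m) * (2 * w m i * hmSgn (x i))
          = 2 * ∑ i ∈ S, w m i * hmSgn (x m) * hmSgn (x i) := by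
        rw [Finset.mul_sum]
        exact Finset.sum_congr rfl fun i _ => by ring
      rw [h2]
      ring
    · simp only [Finset.sum_insert hm, hd, Finset.sum_add_distrib]
      have : ∑ i ∈ S, w i m ^ 2 = ∑ i ∈ S, w m i ^ 2 :=
        Finset.sum_congr rfl fun i _ => by rw [hs i m]
      rw [this]
      have h4 : ∑ i ∈ S, (2 * w m i) ^ 2 = 4 * ∑ i ∈ S, w m i ^ 2 := by
        rw [Finset.mul_sum]
        exact Finset.sum_congr rfl fun i _ => by ring
      rw [h4]
      congr 2
      ring

end chaos

/-- The correlation of Alice's answer with the pair `(i,j)`. -/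
noncomputable def hmBeta {k : ℕ} (A : ((Fin k → Bool) → Bool) → (Fin k → Bool))
    (i j : Fin k → Bool) : ℝ :=
  if i = j then 0 else
  (∑ x : (Fin k → Bool) → Bool, hmSgn (bdot (A x) (bxor i j)) * hmSgn (x i) * hmSgn (x j))
    / (2:ℝ) ^ (2 ^ k)

lemma hm_bxor_comm {k : ℕ} (i j : Fin k → Bool) : bxor i j = bxor j i := by
  ext t; simp [bxor, Bool.xor_comm]

lemma hmBeta_comm {k : ℕ} (A : ((Fin k → Bool) → Bool) → (Fin k → Bool))
    (i j : Fin k → Bool) : hmBeta A i j = hmBeta A j i := by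
  unfold hmBeta
  by_cases h : i = j
  · simp [h]
  · rw [if_neg h, if_neg (Ne.symm h)]
    congr 1
    apply Finset.sum_congr rfl
    intro x _
    rw [hm_bxor_comm]; ring

lemma hm_B_bound {k : ℕ} (hk : 1 ≤ k) (A : ((Fin k → Bool) → Bool) → (Fin k → Bool)) :
    ∑ i, ∑ j, hmBeta A i j ^ 2 ≤ 4 * (9 * k : ℝ) ^ 2 := by
  set w := hmBeta A with hw
  set B := ∑ i, ∑ j, w i j ^ 2 with hB
  have hB0 : 0 ≤ B := Finset.sum_nonneg fun i _ => Finset.sum_nonneg fun j _ => sq_nonneg _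
  set N : ℝ := (2:ℝ) ^ (2 ^ k) with hN
  have hN0 : 0 < N := by positivity
  have hcard : ((Fintype.card ((Fin k → Bool) → Bool) : ℕ) : ℝ) = N := by simp [hN]
  let Q : (Fin k → Bool) → ((Fin k → Bool) → Bool) → ℝ := fun a x =>
    ∑ i, ∑ j, (w i j * hmSgn (bdot a (bxor i j))) * hmSgn (x i) * hmSgn (x j)
  have hQB : ∑ x, Q (A x) x = N * B := by
    simp only [Q, hB]
    rw [Finset.sum_comm, Finset.mul_sum]
    apply Finset.sum_congr rfl
    intro i _
    rw [Finset.sum_comm, Finset.mul_sum]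
    apply Finset.sum_congr rfl
    intro j _
    by_cases h : i = j
    · have : w i j = 0 := by simp [hw, hmBeta, h]
      simp [this]
    · have e : w i j * N = ∑ x : (Fin k → Bool) → Bool,
          hmSgn (bdot (A x) (bxor i j)) * hmSgn (x i) * hmSgn (x j) := by
        simp only [hw, hmBeta, if_neg h]
        rw [← hN]
        field_simp
      calc _ = w i j * ∑ x : (Fin k → Bool) → Bool,
          hmSgn (bdot (A x) (bxor i j)) * hmSgn (x i) * hmSgn (x j) := by
            rw [Finset.mul_sum]
            exact Finset.sum_congr rfl fun x _ => by ring
        _ = _ := by rw [← e]; ring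
  have hK : (8 * (k:ℝ) + 1) ≤ 9 * k := by
    have : (1:ℝ) ≤ k := by exact_mod_cast hk
    linarith
  have hQa : ∀ a, ∑ x, Q a x ^ (2 * k) ≤ N * (2 * (9 * k : ℝ) ^ 2 * B) ^ k := by
    intro a
    have h := hm_chaos (fun i j => w i j * hmSgn (bdot a (bxor i j)))
      (fun i j => by
        have : w i j = w j i := hmBeta_comm A i j
        simp only [this, hm_bxor_comm i j])
      (fun i => by
        have : w i i = 0 := by simp [hw, hmBeta]
        simp [this]) k hk (9 * k) hK Finset.univ
    simp only [mul_pow (w _ _), hmSgn_sq_s5, mul_one] at h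
    rw [hcard] at h
    exact h
  have hsum : ∑ x, Q (A x) x ^ (2 * k) ≤ 2 ^ k * (N * (2 * (9 * k : ℝ) ^ 2 * B) ^ k) := by
    calc ∑ x, Q (A x) x ^ (2 * k) ≤ ∑ x, ∑ a, Q a x ^ (2 * k) := by
          apply Finset.sum_le_sum
          intro x _
          exact Finset.single_le_sum (f := fun a => Q a x ^ (2 * k))
            (fun a _ => by rw [pow_mul]; positivity) (Finset.mem_univ (A x))
      _ = ∑ a, ∑ x, Q a x ^ (2 * k) := Finset.sum_comm
      _ ≤ ∑ a : Fin k → Bool, N * (2 * (9 * k : ℝ) ^ 2 * B) ^ k := Finset.sum_le_sum fun a _ => hQa a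
      _ = _ := by simp
  have hjen : (N * B) ^ (2 * k) ≤ N ^ (2 * k - 1) * ∑ x, Q (A x) x ^ (2 * k) := by
    have h1 : |∑ x, Q (A x) x| ≤ ∑ x, |Q (A x) x| := Finset.abs_sum_le_sum_abs _ _
    have h3 := pow_sum_div_card_le_sum_pow (s := Finset.univ) (f := fun x => |Q (A x) x|)
      (fun x _ => abs_nonneg _) (2 * k - 1)
    rw [show 2 * k - 1 + 1 = 2 * k by omega, Finset.card_univ, hcard,
      div_le_iff₀ (by positivity)] at h3
    have h4 : ∀ x, |Q (A x) x| ^ (2 * k) = Q (A x) x ^ (2 * k) := fun x => by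
      rw [pow_mul, sq_abs, ← pow_mul]
    simp only [h4] at h3
    rw [hQB, abs_of_nonneg (by positivity)] at h1
    calc (N * B) ^ (2 * k) ≤ (∑ x, |Q (A x) x|) ^ (2 * k) :=
          pow_le_pow_left₀ (by positivity) h1 _
      _ ≤ _ := h3
      _ = _ := mul_comm _ _
  have hfin : B ^ k * B ^ k ≤ (4 * (9 * k : ℝ) ^ 2) ^ k * B ^ k := by
    have h : (N * B) ^ (2 * k) ≤ N ^ (2 * k - 1) * (2 ^ k * (N * (2 * (9 * k : ℝ) ^ 2 * B) ^ k)) :=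
      hjen.trans (mul_le_mul_of_nonneg_left hsum (by positivity))
    have e : N ^ (2 * k - 1) * (2 ^ k * (N * (2 * (9 * k : ℝ) ^ 2 * B) ^ k))
        = N ^ (2 * k) * ((4 * (9 * k : ℝ) ^ 2) ^ k * B ^ k) := by
      have : N ^ (2 * k) = N ^ (2 * k - 1) * N := by
        rw [← pow_succ]; congr 1; omega
      rw [this, show (4:ℝ) = 2 * 2 by norm_num]
      simp only [mul_pow]
      ring
    rw [e, mul_pow] at h
    have := le_of_mul_le_mul_left h (by positivity)
    calc _ = B ^ (2 * k) := by ring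
      _ ≤ _ := this
  rcases hB0.eq_or_lt with h | h
  · rw [← h]; positivity
  · have := le_of_mul_le_mul_right hfin (by positivity)
    exact (pow_le_pow_iff_left₀ hB0 (by positivity) (by omega)).1 this

/-- conjugating a matching by a permutation -/
def hmConj {k : ℕ} (σ : Equiv.Perm (Fin k → Bool)) (M : MatchingV k) : MatchingV k :=
  ⟨fun i => σ (M.1 (σ.symm i)), by
    refine ⟨fun i => by simp [M.2.1], fun i h => M.2.2 (σ.symm i) ?_⟩
    have h' : σ (M.1 (σ.symm i)) = i := h
    exact (Equiv.eq_symm_apply σ).2 h'⟩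

lemma hm_count {k : ℕ} (i j j' : Fin k → Bool) (hj : j ≠ i) (hj' : j' ≠ i) :
    (Finset.univ.filter fun M : MatchingV k => M.1 i = j).card
      ≤ (Finset.univ.filter fun M : MatchingV k => M.1 i = j').card := by
  apply Finset.card_le_card_of_injOn (hmConj (Equiv.swap j j'))
  · intro M hM
    have hM' : M.1 i = j := by simpa using hM
    refine Finset.mem_coe.2 (Finset.mem_filter.2 ⟨Finset.mem_univ _, ?_⟩)
    simp [hmConj, Equiv.swap_apply_of_ne_of_ne hj.symm hj'.symm, hM']
  · intro M _ M' _ h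
    apply Subtype.ext
    funext t
    have := congrFun (congrArg Subtype.val h) (Equiv.swap j j' t)
    simpa [hmConj] using this

lemma hm_count_mul {k : ℕ} (i j : Fin k → Bool) (hj : j ≠ i) :
    ((Finset.univ.filter fun M : MatchingV k => M.1 i = j).card : ℝ) * ((2:ℝ) ^ k - 1)
      = Fintype.card (MatchingV k) := by
  have h : Fintype.card (MatchingV k)
      = ∑ j' : Fin k → Bool, (Finset.univ.filter fun M : MatchingV k => M.1 i = j').card := by
    rw [← Finset.card_univ]
    exact Finset.card_eq_sum_card_fiberwise (fun _ _ => Finset.mem_coe.2 (Finset.mem_univ _))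
  rw [← Finset.add_sum_erase _ _ (Finset.mem_univ i)] at h
  have h0 : (Finset.univ.filter fun M : MatchingV k => M.1 i = i).card = 0 := by
    rw [Finset.card_eq_zero, Finset.filter_eq_empty_iff]
    intro M _
    exact M.2.2 i
  rw [h0, zero_add, Finset.sum_congr rfl (g := fun _ =>
    (Finset.univ.filter fun M : MatchingV k => M.1 i = j).card) (by
      intro j' hj'
      have := Finset.ne_of_mem_erase hj'
      exact le_antisymm (hm_count i j' j this hj) (hm_count i j j' hj this))] at h
  rw [h]
  simp [Finset.card_erase_of_mem]
  ring

lemma hm_M_bound {k : ℕ} (A : ((Fin k → Bool) → Bool) → (Fin k → Bool))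
    (f : MatchingV k → (Fin k → Bool)) :
    (∑ M : MatchingV k, hmBeta A (f M) (M.1 (f M)) ^ 2) * ((2:ℝ) ^ k - 1)
      ≤ Fintype.card (MatchingV k) * ∑ i, ∑ j, hmBeta A i j ^ 2 := by
  have h1 : (0:ℝ) ≤ (2:ℝ) ^ k - 1 := sub_nonneg.2 (one_le_pow₀ (by norm_num))
  calc _ ≤ (∑ M : MatchingV k, ∑ i, hmBeta A i (M.1 i) ^ 2) * ((2:ℝ) ^ k - 1) := by
        apply mul_le_mul_of_nonneg_right _ h1
        apply Finset.sum_le_sum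
        intro M _
        exact Finset.single_le_sum (f := fun i => hmBeta A i (M.1 i) ^ 2)
          (fun a _ => sq_nonneg _) (Finset.mem_univ (f M))
    _ = (∑ M : MatchingV k, ∑ i, ∑ j, if M.1 i = j then hmBeta A i j ^ 2 else 0)
          * ((2:ℝ) ^ k - 1) := by simp
    _ = (∑ i, ∑ j, ∑ M : MatchingV k, if M.1 i = j then hmBeta A i j ^ 2 else 0)
          * ((2:ℝ) ^ k - 1) := by
        rw [Finset.sum_comm]
        congr 1
        exact Finset.sum_congr rfl fun i _ => Finset.sum_comm
    _ = _ := by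
        rw [Finset.sum_mul, Finset.mul_sum]
        apply Finset.sum_congr rfl
        intro i _
        rw [Finset.sum_mul, Finset.mul_sum]
        apply Finset.sum_congr rfl
        intro j _
        by_cases h : j = i
        · simp [hmBeta, h]
        · rw [← hm_count_mul i j h, ← Finset.sum_filter, Finset.sum_const, nsmul_eq_mul]
          ring
    _ ≤ _ := le_rfl

lemma hm_ind (a d u v : Bool) :
    (if xor a d = xor u v then (1:ℝ) else 0)
      = 1 / 2 + hmSgn d * (hmSgn a * hmSgn u * hmSgn v) / 2 := by
  cases a <;> cases d <;> cases u <;> cases v <;> norm_num [hmSgn]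

lemma hm_nonempty {k : ℕ} (hk : 1 ≤ k) : 0 < Fintype.card (MatchingV k) := by
  apply Fintype.card_pos_iff.2
  refine ⟨⟨fun i t => !(i t), fun i => by simp, fun i h => ?_⟩⟩
  have := congrFun h ⟨0, hk⟩
  simp at this

set_option maxHeartbeats 2000000 in
/-- There is a universal constant `C > 0` such that for every `n = 2^k`
and every deterministic strategy for the non-local Hidden Matching game (Alice's
output function `A : {0,1}^n → {0,1}^k`; Bob's output, for each matching `M`, an
index `i` (matched to `j = M i`) and a bit `d`), the winning probability `p` over
uniform `x` and `M` satisfies `|p − 1/2| ≤ C·(log n)/√n`. -/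
theorem hidden_matching_nonlocal_classical_upper_bound :
    ∃ C : ℝ, 0 < C ∧
      ∀ k : ℕ, 1 ≤ k →
      ∀ (A : ((Fin k → Bool) → Bool) → (Fin k → Bool))
        (Bob : MatchingV k → (Fin k → Bool) × Bool),
        |(∑ x : (Fin k → Bool) → Bool, ∑ M : MatchingV k,
              if xor (bdot (A x) (bxor (Bob M).1 (M.1 (Bob M).1))) (Bob M).2
                  = xor (x (Bob M).1) (x (M.1 (Bob M).1))
              then (1 : ℝ) else 0)
            / ((2 : ℝ) ^ (2 ^ k) * (Fintype.card (MatchingV k)))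
          - 1 / 2|
        ≤ C * Real.log (2 ^ k) / Real.sqrt (2 ^ k) := by
  refine ⟨20, by norm_num, ?_⟩
  intro k hk A Bob
  have hm0 : (0:ℝ) < Fintype.card (MatchingV k) := by exact_mod_cast hm_nonempty hk
  set m : ℝ := (Fintype.card (MatchingV k) : ℝ) with hm
  set N : ℝ := (2:ℝ) ^ (2 ^ k) with hN
  have hN0 : 0 < N := by positivity
  set g : MatchingV k → ℝ := fun M => hmBeta A (Bob M).1 (M.1 (Bob M).1) with hg
  have hcard : ((Fintype.card ((Fin k → Bool) → Bool) : ℕ) : ℝ) = N := by simp [hN]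
  have hS : (∑ x : (Fin k → Bool) → Bool, ∑ M : MatchingV k,
              if xor (bdot (A x) (bxor (Bob M).1 (M.1 (Bob M).1))) (Bob M).2
                  = xor (x (Bob M).1) (x (M.1 (Bob M).1))
              then (1 : ℝ) else 0)
      = N * m / 2 + N * (∑ M, hmSgn (Bob M).2 * g M) / 2 := by
    rw [Finset.sum_comm]
    have : ∀ M : MatchingV k, (∑ x : (Fin k → Bool) → Bool,
              if xor (bdot (A x) (bxor (Bob M).1 (M.1 (Bob M).1))) (Bob M).2
                  = xor (x (Bob M).1) (x (M.1 (Bob M).1))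
              then (1 : ℝ) else 0) = N / 2 + N / 2 * (hmSgn (Bob M).2 * g M) := by
      intro M
      simp only [hm_ind, Finset.sum_add_distrib, Finset.sum_const, Finset.card_univ, nsmul_eq_mul]
      rw [hcard, ← Finset.sum_div, ← Finset.mul_sum]
      have hne : (Bob M).1 ≠ M.1 (Bob M).1 := (M.2.2 _).symm
      simp only [hg, hmBeta, if_neg hne]
      rw [← hN]
      field_simp
    rw [Finset.sum_congr rfl fun M _ => this M, Finset.sum_add_distrib, ← Finset.mul_sum]
    simp only [Finset.sum_const, Finset.card_univ, nsmul_eq_mul]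
    rw [← hm]
    ring
  rw [hS]
  set T := ∑ M, hmSgn (Bob M).2 * g M with hT
  have e : (N * m / 2 + N * T / 2) / (N * m) - 1 / 2 = T / (2 * m) := by
    field_simp
    ring
  rw [e]
  have hT2 : T ^ 2 ≤ m * ∑ M, g M ^ 2 := by
    have h := Finset.sum_mul_sq_le_sq_mul_sq Finset.univ (fun M => hmSgn (Bob M).2) g
    simpa [hmSgn_sq_s5, ← hm] using h
  have hb := hm_M_bound A (fun M => (Bob M).1)
  have hB := hm_B_bound hk A
  have h2k : (2:ℝ) ≤ 2 ^ k := by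
    calc (2:ℝ) = 2 ^ 1 := by norm_num
      _ ≤ 2 ^ k := pow_le_pow_right₀ (by norm_num) hk
  set n : ℝ := (2:ℝ) ^ k with hn
  have hn0 : 0 < n := by positivity
  have h3 : T ^ 2 * n ≤ m ^ 2 * (8 * (9 * k : ℝ) ^ 2) := by
    have hg0 : 0 ≤ ∑ M, g M ^ 2 := Finset.sum_nonneg fun _ _ => sq_nonneg _
    have a1 : (∑ M, g M ^ 2) * (n - 1) ≤ m * (4 * (9 * k : ℝ) ^ 2) :=
      hb.trans (mul_le_mul_of_nonneg_left hB hm0.le)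
    have a2 : (∑ M, g M ^ 2) * n ≤ 2 * (m * (4 * (9 * k : ℝ) ^ 2)) := by nlinarith
    calc T ^ 2 * n ≤ (m * ∑ M, g M ^ 2) * n := mul_le_mul_of_nonneg_right hT2 hn0.le
      _ = m * ((∑ M, g M ^ 2) * n) := by ring
      _ ≤ m * (2 * (m * (4 * (9 * k : ℝ) ^ 2))) := mul_le_mul_of_nonneg_left a2 hm0.le
      _ = _ := by ring
  have hlog : Real.log n = k * Real.log 2 := by rw [hn, Real.log_pow]
  have hsq : 0 < Real.sqrt n := Real.sqrt_pos.2 hn0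
  have hk0 : (0:ℝ) ≤ k := Nat.cast_nonneg k
  rw [le_div_iff₀ hsq, hlog]
  have hl2 := Real.log_two_gt_d9
  have h5 : (|T / (2 * m)| * Real.sqrt n) ^ 2 ≤ (13 * (k:ℝ)) ^ 2 := by
    rw [mul_pow, sq_abs, Real.sq_sqrt hn0.le, div_pow, div_mul_eq_mul_div,
      div_le_iff₀ (by positivity)]
    nlinarith [mul_nonneg (sq_nonneg m) (sq_nonneg (k:ℝ))]
  have h6 := (pow_le_pow_iff_left₀ (by positivity) (by positivity) (two_ne_zero)).1 h5
  nlinarith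
end

section
/- There exist constants K > 0 and n₀ such that for every n = 2^k with n ≥ n₀ there exists a deterministic strategy for the non-local Hidden Matching game HM_nl(n) whose winning probability under the uniform input distribution is at least 1/2 + K·√((log n)/n). -/
open scoped Classical
open Finset

noncomputable def sg (b : Bool) : ℝ := if b then -1 else 1

noncomputable def chi {k : ℕ} (a j : Fin k → Bool) : ℝ := ∏ t, sg (a t && j t)

lemma sg_xor (a b : Bool) : sg (xor a b) = sg a * sg b := by
  cases a <;> cases b <;> simp [sg]

lemma sg_cases (a : Bool) : sg a = 1 ∨ sg a = -1 := by
  cases a <;> simp [sg]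

lemma sg_ind (a b : Bool) : (if a = b then (1 : ℝ) else 0) = 1 / 2 + 1 / 2 * (sg a * sg b) := by
  cases a <;> cases b <;> norm_num [sg]

lemma chi_eq {k : ℕ} (a j : Fin k → Bool) : chi a j = sg (bdot a j) := by
  have h : chi a j = (-1 : ℝ) ^ (Finset.univ.filter fun t => a t && j t).card := by
    unfold chi sg
    rw [Finset.prod_ite]
    simp
  rw [h]
  unfold bdot sg
  clear h
  rcases Nat.mod_two_eq_zero_or_one (Finset.univ.filter fun t => a t && j t).card with h | h
  · rw [Even.neg_one_pow (Nat.even_iff.2 h), h]; simp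
  · rw [Odd.neg_one_pow (Nat.odd_iff.2 h), h]; simp

lemma chi_cases {k : ℕ} (a j : Fin k → Bool) : chi a j = 1 ∨ chi a j = -1 := by
  rw [chi_eq]; exact sg_cases _

lemma chi_comm {k : ℕ} (a j : Fin k → Bool) : chi a j = chi j a := by
  unfold chi; simp only [Bool.and_comm]

lemma chi_zero {k : ℕ} (a : Fin k → Bool) : chi a (fun _ => false) = 1 := by
  simp [chi, sg]

lemma sum_fun_prod {ι : Type*} [Fintype ι] [DecidableEq ι] (f : ι → Bool → ℝ) :
    ∑ y : ι → Bool, ∏ t, f t (y t) = ∏ t, (f t false + f t true) := by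
  have := Finset.prod_univ_sum (fun _ : ι => (Finset.univ : Finset Bool)) f
  simp only [Fintype.piFinset_univ] at this
  rw [← this]
  refine Finset.prod_congr rfl fun t _ => ?_
  simp [add_comm]

lemma chi_orth {k : ℕ} (a b : Fin k → Bool) :
    ∑ j, chi a j * chi b j = if a = b then (2 : ℝ) ^ k else 0 := by
  have h : ∀ j, chi a j * chi b j = ∏ t, (fun t v => sg (a t && v) * sg (b t && v)) t (j t) := by
    intro j; simp [chi, Finset.prod_mul_distrib]
  simp only [h]
  rw [sum_fun_prod (fun t v => sg (a t && v) * sg (b t && v))]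
  split_ifs with hab
  · subst hab
    have : ∀ t, sg (a t && false) * sg (a t && false) + sg (a t && true) * sg (a t && true) = 2 := by
      intro t; cases a t <;> norm_num [sg]
    simp only [this]; simp
  · obtain ⟨t, ht⟩ := Function.ne_iff.1 hab
    apply Finset.prod_eq_zero (Finset.mem_univ t)
    revert ht
    cases a t <;> cases b t <;> simp [sg]

/-- signed sum -/
noncomputable def TT {k : ℕ} (a : Fin k → Bool) (y : (Fin k → Bool) → Bool) : ℝ :=
  ∑ j, (if j = (fun _ => false) then 0 else chi a j) * sg (y j)

lemma sum_TT {k : ℕ} (y : (Fin k → Bool) → Bool) : ∑ a, TT a y = 0 := by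
  unfold TT
  rw [Finset.sum_comm]
  apply Finset.sum_eq_zero
  intro j _
  rw [← Finset.sum_mul]
  split_ifs with h
  · simp
  · have := chi_orth j (fun _ => false)
    rw [if_neg h] at this
    have h2 : ∑ a, chi a j = 0 := by
      rw [← this]
      refine Finset.sum_congr rfl fun a _ => ?_
      rw [chi_comm (fun _ => false) a, chi_zero, mul_one, chi_comm]
    rw [h2, zero_mul]

lemma sum_exp {ι : Type*} [Fintype ι] [DecidableEq ι] (c : ι → ℝ) :
    ∑ y : ι → Bool, Real.exp (∑ j, c j * sg (y j)) =
      2 ^ (Fintype.card ι) * ∏ j, Real.cosh (c j) := by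
  have h : ∀ y : ι → Bool, Real.exp (∑ j, c j * sg (y j)) =
      ∏ j, (fun j v => Real.exp (c j * sg v)) j (y j) := by
    intro y; rw [Real.exp_sum]
  simp only [h]
  rw [sum_fun_prod (fun j v => Real.exp (c j * sg v))]
  have h2 : ∀ j, Real.exp (c j * sg false) + Real.exp (c j * sg true) = 2 * Real.cosh (c j) := by
    intro j; rw [Real.cosh_eq]; simp [sg]; ring
  simp only [h2]
  rw [Finset.prod_mul_distrib]
  simp

lemma sum_chi_ne {k : ℕ} (a b : Fin k → Bool) :
    ∑ j ∈ Finset.univ.erase (fun _ => false), chi a j * chi b j =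
      (if a = b then (2 : ℝ) ^ k else 0) - 1 := by
  rw [← chi_orth, ← Finset.sum_erase_add _ _ (Finset.mem_univ (fun _ => false))]
  simp [chi_zero]

lemma card_erase {k : ℕ} :
    ((Finset.univ.erase (fun _ => false : Fin k → Bool)).card : ℝ) = 2 ^ k - 1 := by
  rw [Finset.card_erase_of_mem (Finset.mem_univ _), Finset.card_univ]
  simp

noncomputable def ZZ {k : ℕ} (l : ℝ) (y : (Fin k → Bool) → Bool) : ℝ :=
  ∑ a, Real.exp (l * TT a y)

lemma first_moment {k : ℕ} (l : ℝ) :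
    ∑ y : (Fin k → Bool) → Bool, ZZ l y =
      2 ^ (2 ^ k) * (2 ^ k * Real.exp (Real.log (Real.cosh l) * (2 ^ k - 1))) := by
  unfold ZZ
  rw [Finset.sum_comm]
  have h : ∀ a : Fin k → Bool, ∑ y : (Fin k → Bool) → Bool, Real.exp (l * TT a y) =
      2 ^ (2 ^ k) * Real.exp (Real.log (Real.cosh l) * (2 ^ k - 1)) := by
    intro a
    have h1 : ∀ y, l * TT a y =
        ∑ j, (l * (if j = (fun _ => false) then 0 else chi a j)) * sg (y j) := by
      intro y; unfold TT; rw [Finset.mul_sum]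
      refine Finset.sum_congr rfl fun j _ => by ring
    simp only [h1]
    rw [sum_exp]
    congr 1
    · simp
    · rw [← Finset.prod_erase_mul _ _ (Finset.mem_univ (fun _ => false : Fin k → Bool))]
      rw [← card_erase, mul_comm (Real.log _), Real.exp_nat_mul, Real.exp_log (Real.cosh_pos _)]
      simp only [if_true, mul_zero, Real.cosh_zero, mul_one]
      apply Finset.prod_eq_pow_card
      intro j hj
      rw [if_neg (Finset.ne_of_mem_erase hj)]
      rcases chi_cases a j with h | h <;> simp [h]
  simp only [h]
  simp
  ring

lemma cosh_pair (l u v : ℝ) (hu : u = 1 ∨ u = -1) (hv : v = 1 ∨ v = -1) :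
    Real.cosh (l * u + l * v) ≤ Real.exp (Real.log (Real.cosh l) * (2 + 2 * (u * v))) := by
  have h4 : Real.cosh (l + l) ≤ Real.exp (Real.log (Real.cosh l) * 4) := by
    rw [mul_comm, show (4 : ℝ) = ((4 : ℕ) : ℝ) by norm_num, Real.exp_nat_mul,
      Real.exp_log (Real.cosh_pos _), ← two_mul, Real.cosh_two_mul, Real.sinh_sq]
    nlinarith [sq_nonneg (Real.cosh l ^ 2 - 1)]
  rcases hu with rfl | rfl <;> rcases hv with rfl | rfl
  · convert h4 using 2 <;> ring_nf
  · norm_num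
  · norm_num
  · rw [← Real.cosh_neg]
    convert h4 using 2 <;> ring_nf

lemma second_moment {k : ℕ} (l : ℝ) :
    ∑ y : (Fin k → Bool) → Bool, (ZZ l y) ^ 2 ≤
      2 ^ (2 ^ k) * ((2 ^ k) ^ 2 * Real.exp (2 * (Real.log (Real.cosh l) * (2 ^ k - 1)))
        + 2 ^ k * Real.exp (4 * (Real.log (Real.cosh l) * (2 ^ k - 1)))) := by
  set L := Real.log (Real.cosh l) with hL
  have hL0 : 0 ≤ L := Real.log_nonneg (Real.one_le_cosh l)
  have hk : (1 : ℝ) ≤ 2 ^ k := one_le_pow₀ (by norm_num)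
  have hpair : ∀ a b : Fin k → Bool,
      ∑ y : (Fin k → Bool) → Bool, Real.exp (l * TT a y) * Real.exp (l * TT b y) ≤
      2 ^ (2 ^ k) * (Real.exp (2 * (L * (2 ^ k - 1)))
        + if a = b then Real.exp (4 * (L * (2 ^ k - 1))) else 0) := by
    intro a b
    have h1 : ∀ y, Real.exp (l * TT a y) * Real.exp (l * TT b y) =
        Real.exp (∑ j, (l * (if j = (fun _ => false) then 0 else chi a j) +
          l * (if j = (fun _ => false) then 0 else chi b j)) * sg (y j)) := by
      intro y; rw [← Real.exp_add]; unfold TT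
      rw [Finset.mul_sum, Finset.mul_sum, ← Finset.sum_add_distrib]
      congr 1
      refine Finset.sum_congr rfl fun j _ => by ring
    simp only [h1]
    rw [sum_exp]
    have hc : Fintype.card (Fin k → Bool) = 2 ^ k := by simp
    rw [hc]
    apply mul_le_mul_of_nonneg_left _ (by positivity)
    rw [← Finset.prod_erase_mul _ _ (Finset.mem_univ (fun _ => false : Fin k → Bool))]
    simp only [if_true, mul_zero, add_zero, Real.cosh_zero, mul_one]
    calc _ ≤ ∏ j ∈ Finset.univ.erase (fun _ => false : Fin k → Bool),
          Real.exp (L * (2 + 2 * (chi a j * chi b j))) := by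
          apply Finset.prod_le_prod
          · intro j _; exact (Real.cosh_pos _).le
          · intro j hj
            rw [if_neg (Finset.ne_of_mem_erase hj), if_neg (Finset.ne_of_mem_erase hj)]
            exact cosh_pair l _ _ (chi_cases a j) (chi_cases b j)
      _ = Real.exp (L * (2 * (2 ^ k - 1) + 2 * ((if a = b then (2 : ℝ) ^ k else 0) - 1))) := by
          rw [← Real.exp_sum, ← Finset.mul_sum, Finset.sum_add_distrib, ← Finset.mul_sum,
            sum_chi_ne, Finset.sum_const, nsmul_eq_mul, card_erase]
          congr 2; ring
      _ ≤ _ := by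
          split_ifs with hab
          · have := Real.exp_pos (2 * (L * (2 ^ k - 1)))
            refine le_trans (le_of_eq ?_) (le_add_of_nonneg_left this.le)
            congr 1; ring
          · rw [add_zero]
            apply Real.exp_le_exp.2
            nlinarith
  calc _ = ∑ a : Fin k → Bool, ∑ b : Fin k → Bool, ∑ y : (Fin k → Bool) → Bool,
        Real.exp (l * TT a y) * Real.exp (l * TT b y) := by
        unfold ZZ
        simp only [sq, Finset.sum_mul_sum]
        rw [Finset.sum_comm]
        refine Finset.sum_congr rfl fun a _ => ?_
        rw [Finset.sum_comm]
    _ ≤ ∑ a : Fin k → Bool, ∑ b : Fin k → Bool, 2 ^ (2 ^ k) * (Real.exp (2 * (L * (2 ^ k - 1)))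
        + if a = b then Real.exp (4 * (L * (2 ^ k - 1))) else 0) :=
        Finset.sum_le_sum fun a _ => Finset.sum_le_sum fun b _ => hpair a b
    _ = _ := by
        simp only [← Finset.mul_sum, Finset.sum_add_distrib]
        simp
        ring

lemma point_bound {n m C Z T : ℝ} (hn0 : 0 < n) (hm : m = n * Real.exp C)
    (hD : 0 ≤ C - Real.log 2) (hT : 0 ≤ T) (hZ : Z ≤ n * Real.exp T) :
    (C - Real.log 2) / 4 * (9 / 2 * (Z / m) - (Z / m) ^ 2 - 2) ≤ T := by
  have hm0 : 0 < m := by rw [hm]; positivity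
  generalize hW : Z / m = W
  rcases le_or_gt (1 / 2) W with h | h
  · have h1 : 1 / 2 * m ≤ n * Real.exp T := by
      rw [← hW, le_div_iff₀ hm0] at h; linarith
    have h2 : Real.exp (C - Real.log 2) ≤ Real.exp T := by
      rw [Real.exp_sub, Real.exp_log (by norm_num)]
      rw [hm] at h1
      have : n * (Real.exp C / 2) ≤ n * Real.exp T := by linarith
      exact le_of_mul_le_mul_left this hn0
    have h3 := Real.exp_le_exp.1 h2
    have h4 : 9 / 2 * W - W ^ 2 - 2 ≤ 4 := by nlinarith [sq_nonneg (W - 9 / 4)]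
    have h5 := mul_le_mul_of_nonneg_left h4 hD
    linarith
  · have h4 : 9 / 2 * W - W ^ 2 - 2 ≤ 0 := by nlinarith
    have h5 := mul_le_mul_of_nonneg_left h4 hD
    linarith

set_option maxHeartbeats 1000000 in
lemma max_bound {k : ℕ} (hk : 12 ≤ k) (l : ℝ) (hl : l = √(Real.log (2 ^ k) / (2 ^ k)))
    (B : ((Fin k → Bool) → Bool) → (Fin k → Bool)) (hB : ∀ y a, TT a y ≤ TT (B y) y) :
    2 ^ (2 ^ k) * (l * (2 ^ k - 1) / 48) ≤ ∑ y, TT (B y) y := by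
  have hn : (4096 : ℝ) ≤ 2 ^ k := by
    calc (4096 : ℝ) = 2 ^ 12 := by norm_num
      _ ≤ _ := pow_le_pow_right₀ (by norm_num) hk
  have hlog : Real.log (2 ^ k) = k * Real.log 2 := Real.log_pow 2 k
  have hlog2 : 0 < Real.log 2 := Real.log_pos (by norm_num)
  have hk' : (12 : ℝ) ≤ k := by exact_mod_cast hk
  set n : ℝ := 2 ^ k with hnn
  have hn0 : 0 < n := by linarith
  have hlogpos : 0 < Real.log n := Real.log_pos (by linarith)
  have hl0 : 0 < l := by rw [hl]; positivity
  have hl2 : l ^ 2 = Real.log n / n := by rw [hl]; exact Real.sq_sqrt (by positivity)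
  have hl2n : l ^ 2 * n = Real.log n := by rw [hl2]; field_simp
  have hl1 : l ^ 2 ≤ 1 := by
    rw [hl2, div_le_one hn0]
    linarith [Real.log_le_sub_one_of_pos hn0]
  set L := Real.log (Real.cosh l) with hL
  have hLu : L ≤ l ^ 2 / 2 := by
    rw [hL, Real.log_le_iff_le_exp (Real.cosh_pos _)]
    exact Real.cosh_le_exp_half_sq l
  have hLl : l ^ 2 / 3 ≤ L := by
    have h1 : 1 + l ^ 2 / 2 ≤ Real.cosh l := by
      have := Real.one_sub_sq_div_two_le_cos (x := l)
      have h2 : Real.cosh l = 1 + 2 * Real.sinh (l / 2) ^ 2 := by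
        have := Real.cosh_two_mul (l / 2)
        rw [Real.cosh_sq, show 2 * (l / 2) = l by ring] at this
        linarith
      have h3 : l / 2 ≤ Real.sinh (l / 2) := Real.self_le_sinh_iff.2 (by linarith)
      rw [h2]; nlinarith
    have h2 := Real.one_sub_inv_le_log_of_pos (x := 1 + l ^ 2 / 2) (by positivity)
    have h3 : Real.log (1 + l ^ 2 / 2) ≤ L := Real.log_le_log (by positivity) h1
    have h4 : l ^ 2 / 3 ≤ 1 - (1 + l ^ 2 / 2)⁻¹ := by
      have : 1 - (1 + l ^ 2 / 2)⁻¹ = (l ^ 2 / 2) / (1 + l ^ 2 / 2) := by field_simp; ring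
      rw [this, le_div_iff₀ (by positivity)]
      nlinarith [sq_nonneg l]
    linarith
  set C := L * (n - 1) with hC
  have hCl : l ^ 2 * (n - 1) / 6 + Real.log 2 ≤ C := by
    have h1 : l ^ 2 / 3 * (n - 1) ≤ C := mul_le_mul_of_nonneg_right hLl (by linarith)
    have h2 : Real.log 2 ≤ Real.log n / 12 := by rw [hlog]; nlinarith
    nlinarith [sq_nonneg l]
  have hCu : Real.exp (2 * C) ≤ n := by
    rw [← Real.le_log_iff_exp_le hn0]
    have : C ≤ l ^ 2 / 2 * (n - 1) := mul_le_mul_of_nonneg_right hLu (by linarith)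
    nlinarith [sq_nonneg l]
  set m := n * Real.exp C with hm
  have hm0 : 0 < m := by positivity
  set N : ℝ := 2 ^ (2 ^ k) with hN
  have hN0 : 0 < N := by positivity
  have hW1 : ∑ y : (Fin k → Bool) → Bool, ZZ l y / m = N := by
    rw [← Finset.sum_div, first_moment]
    rw [← hL, ← hnn, ← hN, ← hC, ← hm, mul_div_assoc, div_self hm0.ne', mul_one]
  have hW2 : ∑ y : (Fin k → Bool) → Bool, (ZZ l y / m) ^ 2 ≤ 2 * N := by
    simp only [div_pow]
    rw [← Finset.sum_div, div_le_iff₀ (by positivity)]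
    refine (second_moment l).trans ?_
    rw [← hL, ← hnn, ← hN, ← hC]
    have e2 : Real.exp (2 * C) = Real.exp C ^ 2 := by rw [← Real.exp_nat_mul]; norm_num
    have e4 : Real.exp (4 * C) = Real.exp C ^ 2 * Real.exp (2 * C) := by
      rw [← e2, ← Real.exp_add]; ring_nf
    rw [e4, hm, mul_pow, e2]
    rw [e2] at hCu
    have : n * (Real.exp C ^ 2 * Real.exp C ^ 2) ≤ n * (Real.exp C ^ 2 * n) := by gcongr
    nlinarith
  have hpt : ∀ y : (Fin k → Bool) → Bool,
      (C - Real.log 2) / 4 * (9 / 2 * (ZZ l y / m) - (ZZ l y / m) ^ 2 - 2) ≤ l * TT (B y) y := by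
    intro y
    have hD : 0 ≤ C - Real.log 2 := by
      have : 0 ≤ l ^ 2 * (n - 1) / 6 := by
        have : 0 ≤ n - 1 := by linarith
        positivity
      linarith
    have hT0 : 0 ≤ TT (B y) y := by
      by_contra hneg
      push Not at hneg
      have : ∑ a, TT a y < 0 :=
        Finset.sum_neg (fun a _ => (hB y a).trans_lt hneg) Finset.univ_nonempty
      rw [sum_TT] at this
      exact lt_irrefl _ this
    have hZ : ZZ l y ≤ n * Real.exp (l * TT (B y) y) := by
      unfold ZZ
      refine (Finset.sum_le_card_nsmul _ _ (Real.exp (l * TT (B y) y)) ?_).trans ?_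
      · intro a _
        exact Real.exp_le_exp.2 (mul_le_mul_of_nonneg_left (hB y a) hl0.le)
      · rw [nsmul_eq_mul]; simp [hnn]
    exact point_bound hn0 hm hD (mul_nonneg hl0.le hT0) hZ
  have hsum := Finset.sum_le_sum (s := Finset.univ) fun y _ => hpt y
  rw [← Finset.mul_sum, ← Finset.mul_sum, Finset.sum_sub_distrib, Finset.sum_sub_distrib,
    ← Finset.mul_sum, hW1] at hsum
  have hcard : ∑ y : (Fin k → Bool) → Bool, (2 : ℝ) = 2 * N := by
    simp [hN]; ring
  rw [hcard] at hsum
  have hD : l ^ 2 * (n - 1) / 6 ≤ C - Real.log 2 := by linarith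
  have hfin : l * (N * (l * (n - 1) / 48)) ≤ l * ∑ y, TT (B y) y := by
    refine le_trans ?_ hsum
    have hD0 : 0 ≤ l ^ 2 * (n - 1) / 6 := by
      have : 0 ≤ n - 1 := by linarith
      positivity
    calc l * (N * (l * (n - 1) / 48)) = (l ^ 2 * (n - 1) / 6) / 4 * (N / 2) := by ring
      _ ≤ (C - Real.log 2) / 4 * (N / 2) := by gcongr
      _ ≤ _ := by
        apply mul_le_mul_of_nonneg_left _ (by linarith)
        linarith
  exact le_of_mul_le_mul_left hfin hl0

/-- Uniformity of the partner of `0`. -/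
lemma match_unif {k : ℕ} (h : (Fin k → Bool) → ℝ) (z : Fin k → Bool) :
    ((2 : ℝ) ^ k - 1) * ∑ M : MatchingV k, h (M.1 z) =
      (Fintype.card (MatchingV k)) * ∑ j ∈ Finset.univ.erase z, h j := by
  have key : ∀ i ≠ z, ∀ j ≠ z, ∀ f : (Fin k → Bool) → ℝ,
      ∑ M : MatchingV k, f (M.1 z) = ∑ M : MatchingV k, f (Equiv.swap i j (M.1 z)) := by
    intro i hi j hj f
    let e : MatchingV k → MatchingV k := fun M =>
      ⟨fun v => Equiv.swap i j (M.1 (Equiv.swap i j v)), by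
        intro v; simp [M.2.1], by
        intro v hv
        have := congrArg (Equiv.swap i j) hv
        simp only [Equiv.swap_apply_self] at this
        exact M.2.2 _ this⟩
    have he : Function.Involutive e := by
      intro M
      apply Subtype.ext
      funext v
      simp [e]
    rw [← Equiv.sum_comp he.toPerm]
    refine Finset.sum_congr rfl fun M _ => ?_
    change f (Equiv.swap i j (M.1 (Equiv.swap i j z))) = _
    rw [Equiv.swap_apply_of_ne_of_ne hi.symm hj.symm]
  have hN : ∀ f : (Fin k → Bool) → ℝ, ∑ M : MatchingV k, f (M.1 z) =
      ∑ j ∈ Finset.univ.erase z, (∑ M : MatchingV k, if M.1 z = j then (1 : ℝ) else 0) * f j := by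
    intro f
    simp only [Finset.sum_mul]
    rw [Finset.sum_comm]
    refine Finset.sum_congr rfl fun M _ => ?_
    rw [Finset.sum_eq_single_of_mem (M.1 z) (Finset.mem_erase.2 ⟨M.2.2 z, Finset.mem_univ _⟩)]
    · simp
    · intro b _ hb; simp [hb.symm]
  have hconst : ∀ i ≠ z, ∀ j ≠ z, (∑ M : MatchingV k, if M.1 z = j then (1 : ℝ) else 0) =
      ∑ M : MatchingV k, if M.1 z = i then (1 : ℝ) else 0 := by
    intro i hi j hj
    rw [key i hi j hj (fun v => if v = j then (1 : ℝ) else 0)]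
    refine Finset.sum_congr rfl fun M _ => ?_
    have : (Equiv.swap i j (M.1 z) = j) ↔ M.1 z = i := by
      rw [← Equiv.eq_symm_apply]; simp
    simp only [this]
  by_cases hne : ∃ i, i ≠ z
  · obtain ⟨i, hi⟩ := hne
    set c := ∑ M : MatchingV k, if M.1 z = i then (1 : ℝ) else 0 with hc
    have h1 : ∀ f : (Fin k → Bool) → ℝ, ∑ M : MatchingV k, f (M.1 z) =
        c * ∑ j ∈ Finset.univ.erase z, f j := by
      intro f
      rw [hN, Finset.mul_sum]
      refine Finset.sum_congr rfl fun j hj => ?_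
      rw [hconst i hi j (Finset.ne_of_mem_erase hj)]
    have h2 := h1 (fun _ => 1)
    have hcz : ((Finset.univ.erase z).card : ℝ) = 2 ^ k - 1 := by
      rw [Finset.card_erase_of_mem (Finset.mem_univ _), Finset.card_univ]
      simp
    rw [Finset.sum_const, Finset.sum_const, nsmul_eq_mul, nsmul_eq_mul, hcz, mul_one, mul_one,
      Finset.card_univ] at h2
    rw [h1, h2]; ring
  · push Not at hne
    have hE : IsEmpty (MatchingV k) := ⟨fun M => M.2.2 z (hne _)⟩
    simp

lemma match_nonempty {k : ℕ} (hk : 0 < k) : Nonempty (MatchingV k) := by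
  refine ⟨⟨fun v => Function.update v ⟨0, hk⟩ (!(v ⟨0, hk⟩)), ?_, ?_⟩⟩
  · intro v; simp
  · intro v hv
    have := congrFun hv ⟨0, hk⟩
    simp at this

/-- There are constants `K > 0` and `n₀` such that for every `n = 2^k`
with `n ≥ n₀` there is a deterministic strategy for the non-local Hidden Matching
game whose winning probability over uniform inputs `x, M` is at least
`1/2 + K·√((log n)/n)`. -/
theorem hidden_matching_nonlocal_classical_strategy :
    ∃ K : ℝ, 0 < K ∧ ∃ n₀ : ℕ,
      ∀ k : ℕ, n₀ ≤ 2 ^ k →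
      ∃ (A : ((Fin k → Bool) → Bool) → (Fin k → Bool))
        (Bob : MatchingV k → (Fin k → Bool) × Bool),
        1 / 2 + K * Real.sqrt (Real.log (2 ^ k) / (2 ^ k)) ≤
          (∑ x : (Fin k → Bool) → Bool, ∑ M : MatchingV k,
              if xor (bdot (A x) (bxor (Bob M).1 (M.1 (Bob M).1))) (Bob M).2
                  = xor (x (Bob M).1) (x (M.1 (Bob M).1))
              then (1 : ℝ) else 0)
            / ((2 : ℝ) ^ (2 ^ k) * (Fintype.card (MatchingV k))) := by
  refine ⟨1 / 96, by norm_num, 2 ^ 12, ?_⟩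
  intro k hk0
  have hk : 12 ≤ k := (Nat.pow_le_pow_iff_right (by norm_num)).1 hk0
  have hex : ∀ y : (Fin k → Bool) → Bool, ∃ b, ∀ a, TT a y ≤ TT b y := by
    intro y
    obtain ⟨b, _, hb⟩ := Finset.exists_max_image Finset.univ (fun a => TT a y)
      Finset.univ_nonempty
    exact ⟨b, fun a => hb a (Finset.mem_univ _)⟩
  choose B hB using hex
  set z : Fin k → Bool := fun _ => false with hz
  let Φ : ((Fin k → Bool) → Bool) → ((Fin k → Bool) → Bool) :=
    fun x j => if j = z then x z else xor (x z) (x j)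
  have hΦ : Function.Involutive Φ := by
    intro x
    funext j
    by_cases h : j = z
    · simp [Φ, h]
    · simp [Φ, h]
  refine ⟨fun x => B (Φ x), fun _ => (z, false), ?_⟩
  have hmb := max_bound hk _ rfl B hB
  set l := √(Real.log (2 ^ k) / (2 ^ k)) with hl
  have hn : (4096 : ℝ) ≤ 2 ^ k := by
    calc (4096 : ℝ) = 2 ^ 12 := by norm_num
      _ ≤ _ := pow_le_pow_right₀ (by norm_num) hk
  have hcard : (0 : ℝ) < Fintype.card (MatchingV k) := by
    have := match_nonempty (k := k) (by omega)
    exact_mod_cast Fintype.card_pos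
  set cM : ℝ := ((Fintype.card (MatchingV k) : ℕ) : ℝ) with hcM
  have hx : ∀ x : (Fin k → Bool) → Bool,
      (∑ M : MatchingV k, if xor (bdot (B (Φ x)) (bxor z (M.1 z))) false = xor (x z) (x (M.1 z))
        then (1 : ℝ) else 0) = cM / 2 + cM / (2 * (2 ^ k - 1)) * TT (B (Φ x)) (Φ x) := by
    intro x
    have h1 : ∀ M : MatchingV k,
        (if xor (bdot (B (Φ x)) (bxor z (M.1 z))) false = xor (x z) (x (M.1 z))
        then (1 : ℝ) else 0) = 1 / 2 + 1 / 2 *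
          (fun j => chi (B (Φ x)) j * sg (xor (x z) (x j))) (M.1 z) := by
      intro M
      have hb : bxor z (M.1 z) = M.1 z := by funext t; simp [bxor, hz]
      rw [sg_ind, hb, Bool.xor_false, ← chi_eq]
    have h2 : ∑ j ∈ Finset.univ.erase z, chi (B (Φ x)) j * sg (xor (x z) (x j)) =
        TT (B (Φ x)) (Φ x) := by
      unfold TT
      rw [← Finset.sum_erase_add _ _ (Finset.mem_univ z)]
      simp only [← hz, if_true, zero_mul, add_zero]
      refine Finset.sum_congr rfl fun j hj => ?_
      have hj' := Finset.ne_of_mem_erase hj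
      simp [hj', Φ]
    have h3 := match_unif (fun j => chi (B (Φ x)) j * sg (xor (x z) (x j))) z
    rw [h2] at h3
    simp only [h1]
    rw [Finset.sum_add_distrib, ← Finset.mul_sum, Finset.sum_const, nsmul_eq_mul,
      Finset.card_univ, ← hcM]
    have hne : (2 : ℝ) ^ k - 1 ≠ 0 := by linarith
    rw [← hcM] at h3
    field_simp
    linarith
  have hsum : (∑ x : (Fin k → Bool) → Bool, ∑ M : MatchingV k,
      if xor (bdot (B (Φ x)) (bxor z (M.1 z))) false = xor (x z) (x (M.1 z))
        then (1 : ℝ) else 0) =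
      2 ^ (2 ^ k) * (cM / 2) + cM / (2 * (2 ^ k - 1)) * ∑ y, TT (B y) y := by
    simp only [hx]
    rw [Finset.sum_add_distrib, ← Finset.mul_sum]
    have h4 := Equiv.sum_comp hΦ.toPerm (fun y => TT (B y) y)
    simp only [Function.Involutive.coe_toPerm] at h4
    rw [h4]
    simp
  rw [le_div_iff₀ (by positivity)]
  refine le_trans ?_ (le_of_eq hsum.symm)
  have hn1 : (0 : ℝ) < 2 ^ k - 1 := by linarith
  have h5 : cM / (2 * (2 ^ k - 1)) * (2 ^ (2 ^ k) * (l * (2 ^ k - 1) / 48)) ≤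
      cM / (2 * (2 ^ k - 1)) * ∑ y, TT (B y) y := by gcongr
  refine le_trans (le_of_eq ?_) (add_le_add_right h5 _)
  field_simp
  ring
end

section
/- Let k ≥ 1, n = 2^k, and identify [n] with {0,1}^k. For a ∈ {0,1}^k and x : {0,1}^k → {0,1}, let J_{a,x} = |{ j ∈ {0,1}^k : j ≠ 0^k and a·j = x_{0^k} ⊕ x_j }|, where · is the inner product mod 2. For a real threshold t, let Z_a(x) be the indicator that J_{a,x} ≥ t. Then for every threshold t and all a ≠ b in {0,1}^k, the random variables Z_a and Z_b (with x uniformly distributed on {0,1}^n) have non-positive covariance: E_x[Z_a Z_b] ≤ E_x[Z_a]·E_x[Z_b]. -/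
open scoped Classical
open Finset

/-- `J a x` counts the `j ≠ 0^k` with `a·j = x_{0^k} ⊕ x_j`. -/
def Jcount {k : ℕ} (a : Fin k → Bool) (x : (Fin k → Bool) → Bool) : ℕ :=
  (Finset.univ.filter fun j : Fin k → Bool =>
    j ≠ (fun _ => false) ∧ bdot a j = xor (x fun _ => false) (x j)).card

/-- Number of sign sequences of length `s` with sum at least `d`. -/
def walkTail : ℕ → ℤ → ℝ
  | 0, d => if d ≤ 0 then 1 else 0
  | s + 1, d => walkTail s (d - 1) + walkTail s (d + 1)

/-- Number of sign sequences of length `s` with sum exactly `d`. -/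
def walkPoint : ℕ → ℤ → ℝ
  | 0, d => if d = 0 then 1 else 0
  | s + 1, d => walkPoint s (d - 1) + walkPoint s (d + 1)

lemma walkTail_sub (s : ℕ) : ∀ d, walkTail s d - walkTail s (d + 1) = walkPoint s d := by
  induction s with
  | zero =>
    intro d
    simp only [walkTail, walkPoint]
    split_ifs <;> first | omega | norm_num
  | succ s ih =>
    intro d
    simp only [walkTail, walkPoint]
    have h1 := ih (d - 1)
    have h2 := ih (d + 1)
    rw [show d - 1 + 1 = d by ring] at h1
    rw [show d + 1 - 1 = d by ring]
    linarith

lemma walkPoint_nonneg (s : ℕ) : ∀ d, 0 ≤ walkPoint s d := by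
  induction s with
  | zero => intro d; simp only [walkPoint]; split_ifs <;> norm_num
  | succ s ih => intro d; simp only [walkPoint]; exact add_nonneg (ih _) (ih _)

lemma walkPoint_neg (s : ℕ) : ∀ d, walkPoint s (-d) = walkPoint s d := by
  induction s with
  | zero => intro d; simp only [walkPoint, neg_eq_zero]
  | succ s ih =>
    intro d
    simp only [walkPoint]
    rw [← ih (d - 1), ← ih (d + 1), add_comm]
    congr 2 <;> ring

lemma walkPoint_unimodal (s : ℕ) :
    ∀ c : ℤ, 0 ≤ c → walkPoint s (c + 1) ≤ walkPoint s (c - 1) := by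
  induction s with
  | zero =>
    intro c hc
    simp only [walkPoint]
    split_ifs <;> first | omega | norm_num
  | succ s ih =>
    intro c hc
    rcases hc.eq_or_lt with rfl | hc
    · apply le_of_eq
      rw [← walkPoint_neg]
      congr 1
    · simp only [walkPoint]
      have h1 := ih (c - 1) (by omega)
      have h2 := ih (c + 1) (by omega)
      rw [show c + 1 - 1 = c by ring] at *
      rw [show c - 1 + 1 = c by ring] at *
      linarith

lemma walkPoint_unimodal' (s : ℕ) (c : ℤ) (hc : c ≤ 0) :
    walkPoint s (c - 1) ≤ walkPoint s (c + 1) := by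
  have h := walkPoint_unimodal s (-c) (by omega)
  rw [← walkPoint_neg s (c - 1), ← walkPoint_neg s (c + 1)]
  convert h using 2 <;> ring

/-- Normalised smoothed tail. -/
noncomputable def smoothTail (c : ℤ) (s : ℕ) : ℝ :=
  (walkTail s c + walkTail s (c + 1)) / 2 ^ s

lemma smoothTail_succ (c : ℤ) (s : ℕ) :
    smoothTail c (s + 1) - smoothTail c s
      = (walkPoint s (c - 1) - walkPoint s (c + 1)) / 2 ^ (s + 1) := by
  have h1 := walkTail_sub s (c - 1)
  have h2 := walkTail_sub s (c + 1)
  rw [← h1, ← h2]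
  simp only [smoothTail, walkTail]
  rw [show c + 1 - 1 = c by ring, show c - 1 + 1 = c by ring, pow_succ]
  field_simp
  ring

lemma smoothTail_mono_or (c : ℤ) : Monotone (smoothTail c) ∨ Antitone (smoothTail c) := by
  rcases le_total 0 c with hc | hc
  · left
    apply monotone_nat_of_le_succ
    intro s
    have h := smoothTail_succ c s
    have h2 := walkPoint_unimodal s c hc
    have h3 : 0 ≤ (walkPoint s (c - 1) - walkPoint s (c + 1)) / 2 ^ (s + 1) :=
      div_nonneg (by linarith) (by positivity)
    linarith
  · right
    apply antitone_nat_of_succ_le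
    intro s
    have h := smoothTail_succ c s
    have h2 := walkPoint_unimodal' s c hc
    have h3 : (walkPoint s (c - 1) - walkPoint s (c + 1)) / 2 ^ (s + 1) ≤ 0 :=
      div_nonpos_of_nonpos_of_nonneg (by linarith) (by positivity)
    linarith

lemma sum_powerset_walk {I : Type*} [DecidableEq I] (S : Finset I) :
    ∀ d : ℤ, ∑ A ∈ S.powerset, (if d ≤ 2 * (A.card : ℤ) - S.card then (1 : ℝ) else 0)
      = walkTail S.card d := by
  induction S using Finset.induction_on with
  | empty => intro d; rw [Finset.powerset_empty, Finset.sum_singleton]; simp [walkTail]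
  | insert x S hx ih =>
    intro d
    rw [Finset.sum_powerset_insert hx, Finset.card_insert_of_notMem hx]
    simp only [walkTail]
    rw [← ih (d - 1), ← ih (d + 1), add_comm]
    congr 1
    · apply Finset.sum_congr rfl
      intro A hA
      have : x ∉ A := fun h => hx (Finset.mem_powerset.1 hA h)
      rw [Finset.card_insert_of_notMem this]
      congr 1
      push_cast
      apply propext
      constructor <;> intro h <;> linarith
    · apply Finset.sum_congr rfl
      intro A hA
      congr 1
      push_cast
      apply propext
      constructor <;> intro h <;> linarith

lemma sum_finset_split {I : Type*} [Fintype I] [DecidableEq I] (S : Finset I)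
    (F G : ℕ → ℝ) :
    ∑ W : Finset I, F (W ∩ S).card * G (W ∩ Sᶜ).card
      = (∑ A ∈ S.powerset, F A.card) * ∑ B ∈ Sᶜ.powerset, G B.card := by
  rw [Finset.sum_mul_sum, ← Finset.sum_product']
  refine Finset.sum_bij' (fun W _ => (W ∩ S, W ∩ Sᶜ)) (fun p _ => p.1 ∪ p.2) ?_ ?_ ?_ ?_ ?_
  · intro W _; simp [Finset.inter_subset_right]
  · intro p _; simp
  · intro W _; ext i; simp; tauto
  · rintro ⟨A, B⟩ h
    simp only [Finset.mem_product, Finset.mem_powerset] at h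
    obtain ⟨h1, h2⟩ := h
    have h2' : ∀ i ∈ B, i ∉ S := fun i hi => Finset.mem_compl.1 (h2 hi)
    have h1' : ∀ i ∈ A, i ∈ S := fun i hi => h1 hi
    ext i
    · simp; have := h1' i; have := h2' i; tauto
    · simp; have := h1' i; have := h2' i; tauto
  · intro W _; rfl

/-- The core inequality in the reparametrised form. -/
lemma core_ineq {I : Type*} [Fintype I] [DecidableEq I] (T : ℤ) (p q : Finset I → Finset I → Bool → ℝ)
    (hp : ∀ S W v, p S W v =
      if T ≤ (Sᶜ.card : ℤ) + 2 * (W ∩ S).card + (if v then 1 else 0) then 1 else 0)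
    (hq : ∀ S W v, q S W v =
      if T ≤ (S.card : ℤ) + 2 * (W ∩ Sᶜ).card + (if v then 0 else 1) then 1 else 0) :
    (∑ S, ∑ W, ∑ v, p S W v * q S W v) * (2 * 2 ^ Fintype.card I * 2 ^ Fintype.card I)
      ≤ (∑ S, ∑ W, ∑ v, p S W v) * (∑ S, ∑ W, ∑ v, q S W v) := by
  set N := Fintype.card I with hN
  obtain ⟨c, hc⟩ : ∃ c : ℤ, c = T - N - 1 := ⟨_, rfl⟩
  have hcard : ∀ S : Finset I, (S.card : ℤ) + (Sᶜ.card : ℤ) = N := by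
    intro S; exact_mod_cast Finset.card_add_card_compl S
  have hcardn : ∀ S : Finset I, S.card + Sᶜ.card = N := fun S => Finset.card_add_card_compl S
  have hp' : ∀ S W v, p S W v =
      (fun i : ℕ => if (if v then c else c + 1) ≤ 2 * (i : ℤ) - S.card then (1 : ℝ) else 0)
        (W ∩ S).card := by
    intro S W v
    have := hcard S
    rw [hp]
    refine if_congr ?_ rfl rfl
    cases v <;> simp <;> constructor <;> intro h <;> linarith
  have hq' : ∀ S W v, q S W v =
      (fun i : ℕ => if (if v then c + 1 else c) ≤ 2 * (i : ℤ) - Sᶜ.card then (1 : ℝ) else 0)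
        (W ∩ Sᶜ).card := by
    intro S W v
    have := hcard S
    rw [hq]
    refine if_congr ?_ rfl rfl
    cases v <;> simp <;> constructor <;> intro h <;> linarith
  have spq : ∀ S v, ∑ W, p S W v * q S W v
      = walkTail S.card (if v then c else c + 1) * walkTail Sᶜ.card (if v then c + 1 else c) := by
    intro S v
    have h := sum_finset_split S
      (fun i : ℕ => if (if v then c else c + 1) ≤ 2 * (i : ℤ) - S.card then (1 : ℝ) else 0)
      (fun i : ℕ => if (if v then c + 1 else c) ≤ 2 * (i : ℤ) - Sᶜ.card then (1 : ℝ) else 0)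
    rw [sum_powerset_walk, sum_powerset_walk] at h
    rw [← h]
    exact Finset.sum_congr rfl fun W _ => by rw [hp', hq']
  have sp : ∀ S v, ∑ W, p S W v
      = walkTail S.card (if v then c else c + 1) * 2 ^ Sᶜ.card := by
    intro S v
    have h := sum_finset_split S
      (fun i : ℕ => if (if v then c else c + 1) ≤ 2 * (i : ℤ) - S.card then (1 : ℝ) else 0)
      (fun _ => 1)
    rw [sum_powerset_walk] at h
    simp only [Finset.sum_const, Finset.card_powerset, nsmul_eq_mul, mul_one] at h
    push_cast at h
    rw [← h]
    exact Finset.sum_congr rfl fun W _ => by rw [hp']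
  have sq : ∀ S v, ∑ W, q S W v
      = 2 ^ S.card * walkTail Sᶜ.card (if v then c + 1 else c) := by
    intro S v
    have h := sum_finset_split S (fun _ => 1)
      (fun i : ℕ => if (if v then c + 1 else c) ≤ 2 * (i : ℤ) - Sᶜ.card then (1 : ℝ) else 0)
    rw [sum_powerset_walk] at h
    simp only [Finset.sum_const, Finset.card_powerset, nsmul_eq_mul, mul_one, one_mul] at h
    push_cast at h
    rw [← h]
    exact Finset.sum_congr rfl fun W _ => by rw [hq']
  have hpow : ∀ S : Finset I, (2 : ℝ) ^ S.card * 2 ^ Sᶜ.card = 2 ^ N := by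
    intro S; rw [← pow_add, hcardn]
  have hs : ∀ s, walkTail s c + walkTail s (c + 1) = 2 ^ s * smoothTail c s := by
    intro s; rw [smoothTail]; field_simp
  have Sp : ∑ S, ∑ W, ∑ v, p S W v = 2 ^ N * ∑ S : Finset I, smoothTail c S.card := by
    rw [Finset.mul_sum]
    refine Finset.sum_congr rfl fun S _ => ?_
    rw [Finset.sum_comm, Fintype.sum_bool, sp, sp, ← hpow S]
    simp only [if_true, Bool.false_eq_true, if_false]
    rw [← add_mul, hs]; ring
  have Sq : ∑ S, ∑ W, ∑ v, q S W v = 2 ^ N * ∑ S : Finset I, smoothTail c Sᶜ.card := by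
    rw [Finset.mul_sum]
    refine Finset.sum_congr rfl fun S _ => ?_
    rw [Finset.sum_comm, Fintype.sum_bool, sq, sq, ← hpow S]
    simp only [if_true, Bool.false_eq_true, if_false]
    rw [← mul_add, add_comm (walkTail _ (c + 1)), hs]; ring
  have Spq : (∑ S, ∑ W, ∑ v, p S W v * q S W v) * 2
      ≤ 2 ^ N * ∑ S : Finset I, smoothTail c S.card * smoothTail c Sᶜ.card := by
    rw [Finset.mul_sum, Finset.sum_mul]
    refine Finset.sum_le_sum fun S _ => ?_
    rw [Finset.sum_comm, Fintype.sum_bool, spq, spq, ← hpow S]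
    simp only [if_true, Bool.false_eq_true, if_false]
    have e : (2 : ℝ) ^ S.card * 2 ^ Sᶜ.card * (smoothTail c S.card * smoothTail c Sᶜ.card)
        = (walkTail S.card c + walkTail S.card (c + 1))
          * (walkTail Sᶜ.card c + walkTail Sᶜ.card (c + 1)) := by
      rw [hs, hs]; ring
    rw [e]
    have h1 := walkTail_sub S.card c
    have h2 := walkTail_sub Sᶜ.card c
    have h3 := mul_nonneg (walkPoint_nonneg S.card c) (walkPoint_nonneg Sᶜ.card c)
    rw [← h1, ← h2] at h3
    nlinarith
  have anti : AntivaryOn (fun S : Finset I => smoothTail c S.card)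
      (fun S : Finset I => smoothTail c Sᶜ.card) (Finset.univ : Finset (Finset I)) := by
    intro S _ S' _ hlt
    have e1 := hcardn S
    have e2 := hcardn S'
    simp only at hlt ⊢
    rcases smoothTail_mono_or c with hm | hm
    · have : Sᶜ.card < S'ᶜ.card := by
        by_contra h
        exact absurd (hm (not_lt.1 h)) (not_le.2 hlt)
      exact hm (by omega)
    · have : S'ᶜ.card < Sᶜ.card := by
        by_contra h
        exact absurd (hm (not_lt.1 h)) (not_le.2 hlt)
      exact hm (by omega)
  have cheb := anti.card_mul_sum_le_sum_mul_sum
  rw [Finset.card_univ, Fintype.card_finset] at cheb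
  push_cast at cheb
  rw [Sp, Sq]
  have hpos : (0 : ℝ) ≤ 2 ^ N * 2 ^ N := by positivity
  calc _ = ((∑ S, ∑ W, ∑ v, p S W v * q S W v) * 2) * (2 ^ N * 2 ^ N) := by ring
    _ ≤ (2 ^ N * ∑ S : Finset I, smoothTail c S.card * smoothTail c Sᶜ.card)
        * (2 ^ N * 2 ^ N) := mul_le_mul_of_nonneg_right Spq hpos
    _ ≤ ((∑ S : Finset I, smoothTail c S.card) * ∑ S : Finset I, smoothTail c Sᶜ.card)
        * (2 ^ N * 2 ^ N) := mul_le_mul_of_nonneg_right cheb hpos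
    _ = _ := by ring

lemma bdot_flip {k : ℕ} (a j : Fin k → Bool) (i : Fin k) :
    bdot a (Function.update j i (!j i)) = xor (bdot a j) (a i) := by
  have key : ∀ j : Fin k → Bool, (Finset.univ.filter fun t => a t && j t).card
      = (if a i && j i then 1 else 0)
        + ∑ t ∈ ({i}ᶜ : Finset (Fin k)), if a t && j t then 1 else 0 := by
    intro j
    rw [Finset.card_filter, Fintype.sum_eq_add_sum_compl i]
  have h2 : ∑ t ∈ ({i}ᶜ : Finset (Fin k)),
      (if a t && (Function.update j i (!j i)) t then 1 else 0)
      = ∑ t ∈ ({i}ᶜ : Finset (Fin k)), if a t && j t then 1 else 0 := by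
    refine Finset.sum_congr rfl fun t ht => ?_
    have : t ≠ i := by simpa using ht
    rw [Function.update_of_ne this]
  unfold bdot
  rw [key, key j, h2, Function.update_self]
  generalize (∑ t ∈ ({i}ᶜ : Finset (Fin k)), if a t && j t then 1 else 0) = m
  rcases Nat.mod_two_eq_zero_or_one m with h | h <;>
  cases a i <;> cases j i <;> simp [Nat.add_mod, h]

/-- Splitting a sum over `X` using an involution swapping `P` and its complement. -/
lemma sum_pairing {X : Type*} [Fintype X] (o : X) (φ : X → X) (hφ : Function.Involutive φ)
    (P : X → Prop) (hPo : P o) (hP : ∀ j, P (φ j) ↔ ¬ P j)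
    [Fintype {j : X // j ≠ o ∧ P j}] (f : X → ℕ) :
    ∑ j, f j = f o + f (φ o) + ∑ j : {j : X // j ≠ o ∧ P j}, (f j + f (φ j)) := by
  have h1 : ∑ j, f j = ∑ j ∈ univ.filter P, (f j + f (φ j)) := by
    rw [← Finset.sum_filter_add_sum_filter_not univ P, Finset.sum_add_distrib]
    congr 1
    refine Finset.sum_bij' (fun j _ => φ j) (fun j _ => φ j) ?_ ?_ ?_ ?_ ?_
    · intro j hj; simpa [hP] using hj
    · intro j hj; simpa [hP] using hj
    · intro j _; exact hφ j
    · intro j _; exact hφ j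
    · intro j _; rw [hφ j]
  have h2 : univ.filter P = insert o (univ.filter fun j => j ≠ o ∧ P j) := by
    ext j
    by_cases h : j = o <;> simp [h, hPo]
  rw [h1, h2, Finset.sum_insert (by simp)]
  congr 1
  exact Finset.sum_subtype _ (by simp) _

lemma abstract_cov {X : Type*} [Fintype X] [DecidableEq X] (o : X) (φ : X → X) (hφ : Function.Involutive φ)
    (α β : X → Bool) (h0 : α o = β o) (hP : ∀ j, α (φ j) = β (φ j) ↔ ¬ α j = β j) (T : ℕ)
    (Ja Jb : (X → Bool) → ℕ)
    (hJa : ∀ x, Ja x = (univ.filter fun j => j ≠ o ∧ α j = xor (x o) (x j)).card)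
    (hJb : ∀ x, Jb x = (univ.filter fun j => j ≠ o ∧ β j = xor (x o) (x j)).card) :
    (∑ x : X → Bool, (if T ≤ Ja x then (1 : ℝ) else 0) * (if T ≤ Jb x then (1 : ℝ) else 0))
        * 2 ^ Fintype.card X
      ≤ (∑ x : X → Bool, if T ≤ Ja x then (1 : ℝ) else 0)
        * ∑ x : X → Bool, if T ≤ Jb x then (1 : ℝ) else 0 := by
  let I := {j : X // j ≠ o ∧ α j = β j}
  have pair := sum_pairing o φ hφ (fun j => α j = β j) h0 hP
  have hcard : Fintype.card X = 2 + 2 * Fintype.card I := by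
    have := pair (fun _ => 1)
    simp only [Finset.sum_const, Finset.card_univ, smul_eq_mul, mul_one] at this
    show _ = 2 + 2 * Fintype.card {j : X // j ≠ o ∧ α j = β j}
    rw [this]; ring
  have hφo : φ o ≠ o := by
    intro h
    have := hP o
    rw [h] at this
    tauto
  have hφne : ∀ j : I, φ j ≠ o := by
    intro j h
    have := (hP j).1 (by rw [h]; exact h0)
    exact this j.2.2
  let ag : (X → Bool) → X → Bool := fun x j => α j == xor (x o) (x j)
  let enc : (X → Bool) → Bool × Finset I × Finset I × Bool := fun x =>
    (x o, univ.filter (fun j : I => ag x j = ag x (φ j)), univ.filter (fun j : I => ag x j = true),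
      ag x (φ o))
  have henc : Function.Bijective enc := by
    rw [Fintype.bijective_iff_injective_and_card]
    constructor
    · intro x x' h
      simp only [enc, Prod.mk.injEq] at h
      obtain ⟨e0, eS, eW, ev⟩ := h
      have hag : ∀ j, ag x j = ag x' j → x j = x' j := by
        intro j hj
        simp only [ag, e0] at hj
        revert hj
        cases α j <;> cases x' o <;> cases x j <;> cases x' j <;> simp
      have hW : ∀ j : I, ag x j = ag x' j := by
        intro j
        have := Finset.ext_iff.1 eW j
        simp only [mem_filter, mem_univ, true_and] at this
        exact Bool.eq_iff_iff.2 this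
      have hS : ∀ j : I, ag x (φ j) = ag x' (φ j) := by
        intro j
        have := Finset.ext_iff.1 eS j
        simp only [mem_filter, mem_univ, true_and] at this
        rw [hW j] at this
        revert this
        cases ag x' j <;> cases ag x (φ j) <;> cases ag x' (φ j) <;> simp
      funext j
      by_cases hj : j = o
      · rw [hj]; exact e0
      by_cases hj2 : j = φ o
      · rw [hj2]; exact hag _ ev
      by_cases hj3 : α j = β j
      · exact hag _ (hW ⟨j, hj, hj3⟩)
      · have := hS ⟨φ j, fun h => hj2 (by rw [← h, hφ j]), (hP j).2 hj3⟩
        simp only [hφ j] at this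
        exact hag _ this
    · simp only [Fintype.card_fun, Fintype.card_prod, Fintype.card_bool, Fintype.card_finset]
      rw [hcard, pow_add, pow_mul']
      ring
  have cA : ∀ x, ((Ja x : ℕ) : ℤ) = (((enc x).2.1)ᶜ.card : ℤ)
      + 2 * ((enc x).2.2.1 ∩ (enc x).2.1).card + (if (enc x).2.2.2 then 1 else 0) := by
    intro x
    rw [hJa, Finset.card_filter, pair]
    simp only [enc]
    rw [Finset.compl_filter, ← Finset.filter_and, Finset.card_filter, Finset.card_filter]
    push_cast
    rw [Finset.mul_sum, add_comm, ← Finset.sum_add_distrib]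
    congr 1
    · refine Finset.sum_congr rfl fun j _ => ?_
      simp only [ne_eq, j.2.1, hφne j, not_false_eq_true, true_and, ag]
      rcases Bool.eq_false_or_eq_true (α j) with h1 | h1 <;> rcases Bool.eq_false_or_eq_true (α (φ j)) with h2 | h2 <;> rcases Bool.eq_false_or_eq_true (x o) with h3 | h3 <;> rcases Bool.eq_false_or_eq_true (x j) with h4 | h4 <;>
        rcases Bool.eq_false_or_eq_true (x (φ j)) with h5 | h5 <;> simp [h1, h2, h3, h4, h5]
    · simp [hφo, ag]
  have cB : ∀ x, ((Jb x : ℕ) : ℤ) = (((enc x).2.1).card : ℤ)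
      + 2 * ((enc x).2.2.1 ∩ ((enc x).2.1)ᶜ).card + (if (enc x).2.2.2 then 0 else 1) := by
    intro x
    have hneg : ∀ j, α j = β j → β (φ j) = !α (φ j) := by
      intro j hj
      have := (hP j).not.2 (by simpa using hj)
      revert this
      cases α (φ j) <;> cases β (φ j) <;> simp
    rw [hJb, Finset.card_filter, pair]
    simp only [enc]
    rw [Finset.compl_filter, ← Finset.filter_and, Finset.card_filter, Finset.card_filter]
    push_cast
    rw [Finset.mul_sum, add_comm, ← Finset.sum_add_distrib]
    congr 1
    · refine Finset.sum_congr rfl fun j _ => ?_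
      simp only [ne_eq, j.2.1, hφne j, not_false_eq_true, true_and, ag, hneg j j.2.2, ← j.2.2]
      rcases Bool.eq_false_or_eq_true (α j) with h1 | h1 <;> rcases Bool.eq_false_or_eq_true (α (φ j)) with h2 | h2 <;> rcases Bool.eq_false_or_eq_true (x o) with h3 | h3 <;> rcases Bool.eq_false_or_eq_true (x j) with h4 | h4 <;>
        rcases Bool.eq_false_or_eq_true (x (φ j)) with h5 | h5 <;> simp [h1, h2, h3, h4, h5]
    · simp only [ne_eq, hφo, not_false_eq_true, true_and, ag, hneg o h0]
      rcases Bool.eq_false_or_eq_true (α (φ o)) with h1 | h1 <;> rcases Bool.eq_false_or_eq_true (x o) with h2 | h2 <;> rcases Bool.eq_false_or_eq_true (x (φ o)) with h3 | h3 <;> simp [h1, h2, h3]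
  let p : Finset I → Finset I → Bool → ℝ := fun S W v =>
    if (T : ℤ) ≤ (Sᶜ.card : ℤ) + 2 * (W ∩ S).card + (if v then 1 else 0) then 1 else 0
  let q : Finset I → Finset I → Bool → ℝ := fun S W v =>
    if (T : ℤ) ≤ (S.card : ℤ) + 2 * (W ∩ Sᶜ).card + (if v then 0 else 1) then 1 else 0
  have hp : ∀ x, (if T ≤ Ja x then (1 : ℝ) else 0)
      = p (enc x).2.1 (enc x).2.2.1 (enc x).2.2.2 := by
    intro x
    simp only [p]
    rw [← cA]
    simp only [Nat.cast_le]
  have hq : ∀ x, (if T ≤ Jb x then (1 : ℝ) else 0)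
      = q (enc x).2.1 (enc x).2.2.1 (enc x).2.2.2 := by
    intro x
    simp only [q]
    rw [← cB]
    simp only [Nat.cast_le]
  have tot : ∀ g : Finset I → Finset I → Bool → ℝ,
      ∑ x, g (enc x).2.1 (enc x).2.2.1 (enc x).2.2.2 = 2 * ∑ S, ∑ W, ∑ v, g S W v := by
    intro g
    rw [henc.sum_comp (fun y => g y.2.1 y.2.2.1 y.2.2.2)]
    simp only [Fintype.sum_prod_type, Finset.sum_const, Finset.card_univ, Fintype.card_bool]
    simp
  simp only [hp, hq]
  rw [tot (fun S W v => p S W v * q S W v), tot p, tot q, hcard]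
  have core := core_ineq (T : ℤ) p q (fun _ _ _ => rfl) (fun _ _ _ => rfl)
  rw [pow_add, two_mul (Fintype.card I), pow_add]
  nlinarith [core]

/-- With `x` uniform on `{0,1}^n` (`n = 2^k`), `J_{a,x}` as above, and
`Z_a` the indicator of `J_{a,x} ≥ t`, for every threshold `t` and all `a ≠ b`
the indicators `Z_a, Z_b` have non-positive covariance:
`E[Z_a Z_b] ≤ E[Z_a]·E[Z_b]`. -/
theorem Jcount_indicators_nonpositive_covariance
    (k : ℕ) (hk : 1 ≤ k) (t : ℝ) (a b : Fin k → Bool) (hab : a ≠ b) :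
    (∑ x : (Fin k → Bool) → Bool,
        (if t ≤ (Jcount a x : ℝ) then (1 : ℝ) else 0)
          * (if t ≤ (Jcount b x : ℝ) then (1 : ℝ) else 0)) / (2 : ℝ) ^ (2 ^ k)
      ≤ ((∑ x : (Fin k → Bool) → Bool,
            if t ≤ (Jcount a x : ℝ) then (1 : ℝ) else 0) / (2 : ℝ) ^ (2 ^ k))
        * ((∑ x : (Fin k → Bool) → Bool,
            if t ≤ (Jcount b x : ℝ) then (1 : ℝ) else 0) / (2 : ℝ) ^ (2 ^ k)) := by
  obtain ⟨i, hi⟩ : ∃ i, a i ≠ b i := Function.ne_iff.1 hab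
  have hz : ∀ c : Fin k → Bool, bdot c (fun _ => false) = false := by
    intro c; simp [bdot]
  have main := abstract_cov (X := Fin k → Bool) (fun _ => false)
    (fun j => Function.update j i (!j i)) (by intro j; simp) (bdot a) (bdot b)
    (by rw [hz, hz])
    (by
      intro j
      rw [bdot_flip, bdot_flip]
      revert hi
      cases a i <;> cases b i <;> cases bdot a j <;> cases bdot b j <;> simp)
    ⌈t⌉₊ (Jcount a) (Jcount b)
    (by intro x; unfold Jcount; congr) (by intro x; unfold Jcount; congr)
  have hX : Fintype.card (Fin k → Bool) = 2 ^ k := by simp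
  rw [hX] at main
  simp only [Nat.ceil_le] at main
  have hpos : (0 : ℝ) < 2 ^ (2 ^ k) := by positivity
  rw [div_mul_div_comm, div_le_div_iff₀ hpos (by positivity), ← mul_assoc]
  exact mul_le_mul_of_nonneg_right main hpos.le
end

section
/- For every n = 2^k that is a power of 2 and every η ∈ [0, 1/2], every deterministic classical strategy for the Khot–Vishnoi game KV(n, η) has winning probability Pr_{u,z}[A(u) ⊕ B(u⊕z) = z] at most 1/n^{η/(1−η)}. -/
open scoped Classical
open Finset

/-- The Hadamard codeword associated with `s ∈ {0,1}^k`: the string in `{0,1}^n`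
(`n = 2^k`, indices identified with `{0,1}^k`) whose `j`-th bit is `s·j mod 2`. -/
def had {k : ℕ} (s : Fin k → Bool) : (Fin k → Bool) → Bool := fun j => bdot s j

/-- Bitwise XOR of two strings in `{0,1}^n`, `n = 2^k`. -/
def sxor {k : ℕ} (w w' : (Fin k → Bool) → Bool) : (Fin k → Bool) → Bool :=
  fun j => xor (w j) (w' j)

/-- Hamming weight of a string in `{0,1}^n`, `n = 2^k`. -/
def wt {k : ℕ} (z : (Fin k → Bool) → Bool) : ℕ :=
  (Finset.univ.filter fun j => z j = true).card

lemma kv_sub_rpow (q b : ℝ) (hq0 : 0 ≤ q) (hq1 : q ≤ 1) (hb0 : 0 ≤ b) (hb1 : b ≤ 1) :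
    2 * q * b ≤ (1 + b) ^ q - (1 - b) ^ q := by
  rcases hq0.eq_or_lt with rfl | hq
  · simp
  have hmono : MonotoneOn (fun b : ℝ => (1 + b) ^ q - (1 - b) ^ q - 2 * q * b) (Set.Icc 0 1) := by
    have hd : ∀ x ∈ Set.Ioo (0:ℝ) 1, HasDerivAt (fun b : ℝ => (1 + b) ^ q - (1 - b) ^ q - 2 * q * b)
        (1 * q * (1 + x) ^ (q - 1) - (-1) * q * (1 - x) ^ (q - 1) - 2 * q * 1) x := by
      intro x hx
      have h1 : (1 + x) ≠ 0 := by linarith [hx.1]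
      have h2 : (1 - x) ≠ 0 := by linarith [hx.2]
      exact ((((hasDerivAt_id' x).const_add 1).rpow_const (Or.inl h1)).sub
        (((hasDerivAt_id' x).const_sub 1).rpow_const (Or.inl h2))).sub
        ((hasDerivAt_id' x).const_mul (2*q))
    apply monotoneOn_of_deriv_nonneg (convex_Icc 0 1)
    · refine ContinuousOn.sub (ContinuousOn.sub ?_ ?_) (by fun_prop)
      · exact ContinuousOn.rpow_const (by fun_prop) (fun x hx => Or.inr hq.le)
      · exact ContinuousOn.rpow_const (by fun_prop) (fun x hx => Or.inr hq.le)
    · rw [interior_Icc]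
      exact fun x hx => (hd x hx).differentiableAt.differentiableWithinAt
    · rw [interior_Icc]
      intro x hx
      rw [(hd x hx).deriv]
      have h1 : 0 < 1 + x := by linarith [hx.1]
      have h2 : 0 < 1 - x := by linarith [hx.2]
      have hp : 1 ≤ (1 + x) ^ (q - 1) * (1 - x) ^ (q - 1) := by
        rw [← Real.mul_rpow h1.le h2.le]
        apply Real.one_le_rpow_of_pos_of_le_one_of_nonpos (by positivity) (by nlinarith [sq_nonneg x]) (by linarith)
      have e1 := Real.rpow_pos_of_pos h1 (q-1)
      have e2 := Real.rpow_pos_of_pos h2 (q-1)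
      set X := (1 + x) ^ (q - 1)
      set Y := (1 - x) ^ (q - 1)
      have : 2 ≤ X + Y := by nlinarith [sq_nonneg (X - Y)]
      nlinarith
  have := hmono (Set.left_mem_Icc.2 zero_le_one) ⟨hb0, hb1⟩ hb0
  simp at this
  linarith

lemma kv_two_point_one (p b : ℝ) (hp1 : 1 ≤ p) (hp2 : p ≤ 2) (hb0 : 0 ≤ b) (hb1 : b ≤ 1) :
    1 + p / 2 * (p - 1) * b ^ 2 ≤ ((1 + b) ^ p + (1 - b) ^ p) / 2 := by
  have hmono : MonotoneOn (fun b : ℝ => (1 + b) ^ p + (1 - b) ^ p - p * (p - 1) * b ^ 2)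
      (Set.Icc 0 1) := by
    have hd : ∀ x ∈ Set.Ioo (0:ℝ) 1, HasDerivAt
        (fun b : ℝ => (1 + b) ^ p + (1 - b) ^ p - p * (p - 1) * b ^ 2)
        (1 * p * (1 + x) ^ (p - 1) + (-1) * p * (1 - x) ^ (p - 1)
          - p * (p - 1) * (2 * x)) x := by
      intro x hx
      have h1 : (1 + x) ≠ 0 := by linarith [hx.1]
      have h2 : (1 - x) ≠ 0 := by linarith [hx.2]
      have h3 : HasDerivAt (fun b : ℝ => b ^ 2) (2 * x) x := by simpa using hasDerivAt_pow 2 x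
      exact ((((hasDerivAt_id' x).const_add 1).rpow_const (Or.inl h1)).add
        (((hasDerivAt_id' x).const_sub 1).rpow_const (Or.inl h2))).sub
        (h3.const_mul (p * (p-1)))
    apply monotoneOn_of_deriv_nonneg (convex_Icc 0 1)
    · refine ContinuousOn.sub (ContinuousOn.add ?_ ?_) (by fun_prop)
      · exact ContinuousOn.rpow_const (by fun_prop) (fun x hx => Or.inr (by linarith))
      · exact ContinuousOn.rpow_const (by fun_prop) (fun x hx => Or.inr (by linarith))
    · rw [interior_Icc]
      exact fun x hx => (hd x hx).differentiableAt.differentiableWithinAt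
    · rw [interior_Icc]
      intro x hx
      rw [(hd x hx).deriv]
      have := kv_sub_rpow (p - 1) x (by linarith) (by linarith) hx.1.le hx.2.le
      nlinarith
  have := hmono (Set.left_mem_Icc.2 zero_le_one) ⟨hb0, hb1⟩ hb0
  simp at this
  linarith

lemma kv_two_point_sq (p x y : ℝ) (hp1 : 1 ≤ p) (hp2 : p ≤ 2) (hx : 0 ≤ x) (hy : 0 ≤ y) :
    (((x + y) / 2) ^ 2 + (p - 1) * ((x - y) / 2) ^ 2) ^ (p / 2) ≤ (x ^ p + y ^ p) / 2 := by
  wlog h : y ≤ x generalizing x y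
  · have := this y x hy hx (by linarith)
    rw [add_comm (x ^ p)]
    convert this using 2
    ring
  rcases (add_nonneg hx hy).eq_or_lt with h0 | h0
  · have e1 : x = 0 := by linarith
    have e2 : y = 0 := by linarith
    subst e1 e2
    have : p / 2 ≠ 0 := by linarith
    have : p ≠ 0 := by linarith
    simp only [add_zero, zero_div, sub_zero, mul_zero, ne_eq, OfNat.ofNat_ne_zero,
      not_false_eq_true, zero_pow]
    rw [Real.zero_rpow (by assumption), Real.zero_rpow (by assumption)]; norm_num
  set a := (x + y) / 2 with ha
  have ha0 : 0 < a := by positivity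
  set t := (x - y) / 2 / a with ht
  have ht0 : 0 ≤ t := by apply div_nonneg _ ha0.le; linarith
  have ht1 : t ≤ 1 := by rw [ht, div_le_one ha0]; linarith
  have hat : a * t = (x - y) / 2 := by rw [ht]; field_simp
  have ex : x = a * (1 + t) := by rw [mul_add, hat]; linarith
  have ey : y = a * (1 - t) := by rw [mul_sub, hat]; linarith
  rw [← hat]
  have h1 : a ^ 2 + (p - 1) * (a * t) ^ 2 = a ^ 2 * (1 + (p - 1) * t ^ 2) := by ring
  have hnn : 0 ≤ (p - 1) * t ^ 2 := by
    apply mul_nonneg <;> nlinarith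
  rw [h1, Real.mul_rpow (by positivity) (by linarith)]
  have h2 : (a ^ 2) ^ (p / 2) = a ^ p := by
    rw [← Real.rpow_natCast, ← Real.rpow_mul ha0.le]; congr 1; push_cast; ring
  rw [h2]
  have h3 : (x ^ p + y ^ p) / 2 = a ^ p * (((1 + t) ^ p + (1 - t) ^ p) / 2) := by
    rw [ex, ey, Real.mul_rpow ha0.le (by linarith), Real.mul_rpow ha0.le (by linarith)]; ring
  rw [h3]
  apply mul_le_mul_of_nonneg_left _ (by positivity)
  have h4 := rpow_one_add_le_one_add_mul_self (s := (p - 1) * t ^ 2) (by linarith)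
    (p := p / 2) (by linarith) (by linarith)
  have h5 := kv_two_point_one p t hp1 hp2 ht0 ht1
  linarith

lemma kv_two_point (p x y x' y' : ℝ) (hp1 : 1 ≤ p) (hp2 : p ≤ 2) (hx : 0 ≤ x) (hy : 0 ≤ y)
    (hx' : 0 ≤ x') (hy' : 0 ≤ y') :
    (p / 2) * (x * x' + y * y') + (1 - p / 2) * (x * y' + y * x') ≤
      (2:ℝ) ^ (1 - 2 / p) * ((x ^ p + y ^ p) ^ (1 / p) * (x' ^ p + y' ^ p) ^ (1 / p)) := by
  have key : ∀ x y : ℝ, 0 ≤ x → 0 ≤ y →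
      ((x + y) / 2) ^ 2 + (p - 1) * ((x - y) / 2) ^ 2 ≤ (((x ^ p + y ^ p) / 2) ^ (1 / p)) ^ 2 := by
    intro x y hx hy
    have h := kv_two_point_sq p x y hp1 hp2 hx hy
    have hn : 0 ≤ ((x + y) / 2) ^ 2 + (p - 1) * ((x - y) / 2) ^ 2 := by
      have : 0 ≤ p - 1 := by linarith
      positivity
    have h' := Real.rpow_le_rpow (by positivity) h (z := 2 / p) (by positivity)
    rw [← Real.rpow_mul hn] at h'
    have e : p / 2 * (2 / p) = 1 := by field_simp
    rw [e, Real.rpow_one] at h'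
    refine h'.trans_eq ?_
    rw [← Real.rpow_natCast, ← Real.rpow_mul (by positivity)]
    congr 1; push_cast; ring
  have k1 := key x y hx hy
  have k2 := key x' y' hx' hy'
  have eX : (2:ℝ) ^ (1 - 2 / p) * ((x ^ p + y ^ p) ^ (1 / p) * (x' ^ p + y' ^ p) ^ (1 / p))
      = 2 * (((x ^ p + y ^ p) / 2) ^ (1 / p) * ((x' ^ p + y' ^ p) / 2) ^ (1 / p)) := by
    rw [Real.div_rpow (by positivity) (by positivity), Real.div_rpow (by positivity) (by positivity)]
    have : (2:ℝ) ^ (1 - 2 / p) = 2 / (2 ^ (1/p) * 2 ^ (1/p)) := by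
      rw [Real.rpow_sub (by norm_num), Real.rpow_one, ← Real.rpow_add (by norm_num)]
      congr 2; ring
    rw [this]
    field_simp
  rw [eX]
  set F := ((x ^ p + y ^ p) / 2) ^ (1 / p)
  set G := ((x' ^ p + y' ^ p) / 2) ^ (1 / p)
  have hF : 0 ≤ F := by positivity
  have hG : 0 ≤ G := by positivity
  have hq : 0 ≤ p - 1 := by linarith
  set a := (x + y) / 2 with ha
  set b := (x - y) / 2 with hb
  set a' := (x' + y') / 2 with ha'
  set b' := (x' - y') / 2 with hb'
  have hl : (p / 2) * (x * x' + y * y') + (1 - p / 2) * (x * y' + y * x')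
      = 2 * (a * a' + (p - 1) * (b * b')) := by
    rw [ha, hb, ha', hb']; ring
  rw [hl]
  have : a * a' + (p - 1) * (b * b') ≤ F * G := by
    apply abs_le_of_sq_le_sq' _ (by positivity) |>.2
    have hcs : (a * a' + (p - 1) * (b * b')) ^ 2 ≤
        (a ^ 2 + (p - 1) * b ^ 2) * (a' ^ 2 + (p - 1) * b' ^ 2) := by
      nlinarith [mul_nonneg hq (sq_nonneg (a * b' - b * a'))]
    refine hcs.trans ?_
    rw [mul_pow]
    apply mul_le_mul k1 k2 (by positivity) (by positivity)
  linarith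

/-- two-function hypercontractivity on the cube -/
lemma kv_hyper (p : ℝ) (hp1 : 1 ≤ p) (hp2 : p ≤ 2) (ι : Type) [Fintype ι] [DecidableEq ι] :
    ∀ (f g : (ι → Bool) → ℝ), (∀ x, 0 ≤ f x) → (∀ x, 0 ≤ g x) →
    ∑ x, ∑ y, (∏ i, (if x i = y i then p / 2 else 1 - p / 2)) * (f x * g y) ≤
      ((2:ℝ) ^ (1 - 2 / p)) ^ (Fintype.card ι) *
        ((∑ x, f x ^ p) ^ (1 / p) * (∑ x, g x ^ p) ^ (1 / p)) := by
  have hp0 : p ≠ 0 := by linarith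
  refine Fintype.induction_empty_option (P := fun ι _ =>
    ∀ [DecidableEq ι] (f g : (ι → Bool) → ℝ), (∀ x, 0 ≤ f x) → (∀ x, 0 ≤ g x) →
    ∑ x, ∑ y, (∏ i, (if x i = y i then p / 2 else 1 - p / 2)) * (f x * g y) ≤
      ((2:ℝ) ^ (1 - 2 / p)) ^ (Fintype.card ι) *
        ((∑ x, f x ^ p) ^ (1 / p) * (∑ x, g x ^ p) ^ (1 / p))) ?_ ?_ ?_ ι
  · intro α β _ e ih
    let _ := Fintype.ofEquiv β e.symm
    intro _ f g hf hg
    let E : (α → Bool) ≃ (β → Bool) := Equiv.arrowCongr e (Equiv.refl Bool)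
    have h := ih (fun x => f (E x)) (fun x => g (E x)) (fun x => hf _) (fun x => hg _)
    rw [E.sum_comp (fun x => f x ^ p), E.sum_comp (fun x => g x ^ p),
      Fintype.card_congr e] at h
    convert h using 1
    rw [← E.sum_comp]
    refine Finset.sum_congr rfl fun x _ => ?_
    rw [← E.sum_comp]
    refine Finset.sum_congr rfl fun y _ => ?_
    congr 1
    rw [← e.prod_comp]
    simp [E, Equiv.arrowCongr]
  · intro _ f g hf hg
    simp [Real.rpow_rpow_inv (hf _) hp0, Real.rpow_rpow_inv (hg _) hp0]
  · intro α _ ih inst f g hf hg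
    obtain rfl : inst = Option.instDecidableEq := Subsingleton.elim _ _
    let E : (Option α → Bool) ≃ Bool × (α → Bool) := Equiv.piOptionEquivProd
    have hs : ∀ F : (Option α → Bool) → ℝ, ∑ x, F x = ∑ a : Bool, ∑ x, F (E.symm (a, x)) := by
      intro F
      rw [← E.symm.sum_comp, Fintype.sum_prod_type]
    have hN : ∀ a : Bool, ∀ F : (Option α → Bool) → ℝ, (∀ x, 0 ≤ F x) →
        ((∑ x, F (E.symm (a, x)) ^ p) ^ (1 / p)) ^ p = ∑ x, F (E.symm (a, x)) ^ p := by
      intro a F hF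
      rw [one_div, Real.rpow_inv_rpow (Finset.sum_nonneg fun x _ => Real.rpow_nonneg (hF _) _) hp0]
    have hN0 : ∀ a : Bool, ∀ F : (Option α → Bool) → ℝ, (∀ x, 0 ≤ F x) →
        0 ≤ (∑ x, F (E.symm (a, x)) ^ p) ^ (1 / p) := fun a F hF =>
      Real.rpow_nonneg (Finset.sum_nonneg fun x _ => Real.rpow_nonneg (hF _) _) _
    have hL : ∑ x, ∑ y, (∏ i, (if x i = y i then p / 2 else 1 - p / 2)) * (f x * g y)
        = ∑ a : Bool, ∑ b : Bool, (if a = b then p / 2 else 1 - p / 2) *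
          ∑ x, ∑ y, (∏ i, (if x i = y i then p / 2 else 1 - p / 2)) *
            (f (E.symm (a, x)) * g (E.symm (b, y))) := by
      rw [hs]
      refine Finset.sum_congr rfl fun a _ => ?_
      simp_rw [hs]
      rw [Finset.sum_comm]
      refine Finset.sum_congr rfl fun b _ => ?_
      rw [Finset.mul_sum]
      refine Finset.sum_congr rfl fun x _ => ?_
      rw [Finset.mul_sum]
      refine Finset.sum_congr rfl fun y _ => ?_
      rw [Fintype.prod_option]
      simp [E, Equiv.piOptionEquivProd, mul_assoc]
    rw [hL]
    set C := (2:ℝ) ^ (1 - 2 / p) with hC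
    have hC0 : 0 < C := by positivity
    have step : ∀ a b : Bool, (if a = b then p / 2 else 1 - p / 2) *
          ∑ x, ∑ y, (∏ i, (if x i = y i then p / 2 else 1 - p / 2)) *
            (f (E.symm (a, x)) * g (E.symm (b, y))) ≤
          (if a = b then p / 2 else 1 - p / 2) * (C ^ Fintype.card α *
            ((∑ x, f (E.symm (a, x)) ^ p) ^ (1 / p) * (∑ x, g (E.symm (b, x)) ^ p) ^ (1 / p))) := by
      intro a b
      apply mul_le_mul_of_nonneg_left
      · exact ih (fun x => f (E.symm (a, x))) (fun x => g (E.symm (b, x)))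
          (fun x => hf _) (fun x => hg _)
      · split_ifs <;> linarith
    refine (Finset.sum_le_sum fun a _ => Finset.sum_le_sum fun b _ => step a b).trans ?_
    have h2 := kv_two_point p _ _ _ _ hp1 hp2 (hN0 true f hf) (hN0 false f hf)
      (hN0 true g hg) (hN0 false g hg)
    rw [hN _ f hf, hN _ f hf, hN _ g hg, hN _ g hg] at h2
    rw [hs (fun x => f x ^ p), hs (fun x => g x ^ p)]
    simp only [Fintype.sum_bool, Fintype.card_option]
    have h3 := mul_le_mul_of_nonneg_left h2 (pow_pos hC0 (Fintype.card α)).le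
    refine le_trans (le_of_eq ?_) (h3.trans (le_of_eq ?_))
    · simp; ring
    · rw [← hC]; ring

lemma kv_had_inj {k : ℕ} : Function.Injective (had (k := k)) := by
  intro s t h
  funext i
  have := congrFun h (Pi.single i true)
  have key : ∀ s : Fin k → Bool, had s (Pi.single i true) = s i := by
    intro s
    unfold had bdot
    have : (Finset.univ.filter fun t => s t && (Pi.single i true : Fin k → Bool) t)
        = if s i then {i} else ∅ := by
      ext j
      by_cases hj : j = i
      · subst hj; cases h : s j <;> simp [h]
      · cases h : s i <;> simp [Pi.single_apply, hj]
    rw [this]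
    cases s i <;> simp
  rwa [key, key] at this

lemma kv_sxor_sxor {k : ℕ} (w v : (Fin k → Bool) → Bool) : sxor (sxor w v) v = w := by
  funext j; simp [sxor]

lemma kv_sxor_left_inj {k : ℕ} (w : (Fin k → Bool) → Bool) : Function.Injective (sxor w) := by
  intro a b h; funext j; simpa [sxor] using congrFun h j

/-- translation by `v` -/
def kvShift {k : ℕ} (v : (Fin k → Bool) → Bool) :
    ((Fin k → Bool) → Bool) ≃ ((Fin k → Bool) → Bool) where
  toFun w := sxor w v
  invFun w := sxor w v
  left_inv w := kv_sxor_sxor w v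
  right_inv w := kv_sxor_sxor w v

/-- translation of `w` -/
def kvShiftL {k : ℕ} (w : (Fin k → Bool) → Bool) :
    ((Fin k → Bool) → Bool) ≃ ((Fin k → Bool) → Bool) where
  toFun v := sxor w v
  invFun v := sxor w v
  left_inv v := by funext j; simp [sxor]
  right_inv v := by funext j; simp [sxor]

lemma kv_weight {k : ℕ} (η : ℝ) (u z : (Fin k → Bool) → Bool) :
    η ^ (wt z) * (1 - η) ^ (2 ^ k - wt z)
      = ∏ j, (if u j = sxor u z j then 1 - η else η) := by
  have h : ∀ j, (if u j = sxor u z j then 1 - η else η) = if z j = true then η else 1 - η := by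
    intro j
    unfold sxor
    cases u j <;> cases z j <;> simp
  simp_rw [h]
  rw [Finset.prod_ite, Finset.prod_const, Finset.prod_const]
  have hc : (Finset.univ.filter fun j => z j = true).card
      + (Finset.univ.filter fun j => ¬ z j = true).card = 2 ^ k := by
    rw [Finset.card_filter_add_card_filter_not]; simp
  have : 2 ^ k - wt z = (Finset.univ.filter fun j => ¬ z j = true).card := by
    unfold wt; omega
  rw [this]; rfl

lemma kv_count {k : ℕ} (A : ((Fin k → Bool) → Bool) → ((Fin k → Bool) → Bool))
    (hAcoset : ∀ w s, A (sxor w (had s)) = A w) :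
    (2 ^ k : ℝ) * ∑ w, (if A w = w then (1:ℝ) else 0) ≤ 2 ^ (2 ^ k) := by
  have h1 : (2 ^ k : ℝ) * ∑ w, (if A w = w then (1:ℝ) else 0)
      = ∑ s : Fin k → Bool, ∑ w, (if A w = w then (1:ℝ) else 0) := by
    simp
  have h2 : ∀ s : Fin k → Bool, ∑ w, (if A w = w then (1:ℝ) else 0)
      = ∑ w, (if A w = sxor w (had s) then (1:ℝ) else 0) := by
    intro s
    rw [← (kvShift (had s)).sum_comp]
    refine Finset.sum_congr rfl fun w _ => ?_
    simp only [kvShift, Equiv.coe_fn_mk, hAcoset]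
  rw [h1, Finset.sum_congr rfl fun s _ => h2 s, Finset.sum_comm]
  have h3 : ∀ w, ∑ s, (if A w = sxor w (had s) then (1:ℝ) else 0) ≤ 1 := by
    intro w
    rw [Finset.sum_boole]
    norm_cast
    rw [Finset.card_le_one]
    intro a ha b hb
    simp only [Finset.mem_filter, Finset.mem_univ, true_and] at ha hb
    exact kv_had_inj (kv_sxor_left_inj w (ha.symm.trans hb))
  refine (Finset.sum_le_sum fun w _ => h3 w).trans ?_
  simp


/-- For every power of two `n = 2^k` and `η ∈ [0,1/2]`, every
deterministic classical strategy for the Khot–Vishnoi game — functions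
`A, B : {0,1}^n → {0,1}^n` that are constant on cosets of the Hadamard subgroup `H`
and output an element of the input coset — wins with probability (over a uniform `u`
and an `η`-biased `z`) at most `1/n^{η/(1−η)}`. -/
theorem khot_vishnoi_classical_upper_bound
    (k : ℕ) (η : ℝ) (hη0 : 0 ≤ η) (hη1 : η ≤ 1 / 2)
    (A B : ((Fin k → Bool) → Bool) → ((Fin k → Bool) → Bool))
    (hAcoset : ∀ w s, A (sxor w (had s)) = A w)
    (hAmem : ∀ w, ∃ s, A w = sxor w (had s))
    (hBcoset : ∀ w s, B (sxor w (had s)) = B w)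
    (hBmem : ∀ w, ∃ s, B w = sxor w (had s)) :
    (∑ u : (Fin k → Bool) → Bool, ∑ z : (Fin k → Bool) → Bool,
        η ^ (wt z) * (1 - η) ^ (2 ^ k - wt z) *
          (if sxor (A u) (B (sxor u z)) = z then (1 : ℝ) else 0))
      / (2 : ℝ) ^ (2 ^ k)
    ≤ 1 / ((2 ^ k : ℝ) ^ (η / (1 - η))) := by
  have hp1 : 1 ≤ 2 - 2 * η := by linarith
  have hp2 : 2 - 2 * η ≤ 2 := by linarith
  have h1η : 0 < 1 - η := by linarith
  set f : ((Fin k → Bool) → Bool) → ℝ := fun w => if A w = w then (1:ℝ) else 0 with hf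
  set g : ((Fin k → Bool) → Bool) → ℝ := fun w => if B w = w then (1:ℝ) else 0 with hg
  have hf0 : ∀ w, 0 ≤ f w := fun w => by simp only [hf]; split_ifs <;> norm_num
  have hg0 : ∀ w, 0 ≤ g w := fun w => by simp only [hg]; split_ifs <;> norm_num
  have hfp : ∀ w, f w ^ (2 - 2 * η) = f w := fun w => by
    simp only [hf]; split_ifs
    · simp
    · rw [Real.zero_rpow (by linarith)]
  have hgp : ∀ w, g w ^ (2 - 2 * η) = g w := fun w => by
    simp only [hg]; split_ifs
    · simp
    · rw [Real.zero_rpow (by linarith)]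
  have hH := kv_hyper (2 - 2 * η) hp1 hp2 (Fin k → Bool) f g hf0 hg0
  simp_rw [hfp, hgp] at hH
  have e1 : (2 - 2 * η) / 2 = 1 - η := by ring
  have e2 : 1 - (1 - η) = η := by ring
  have e3 : 2 / (2 - 2 * η) = 1 / (1 - η) := by
    rw [div_eq_div_iff (by linarith) (by linarith)]; ring
  rw [e1, e2, e3] at hH
  -- pointwise bound for the winning indicator
  have hwin : ∀ u z, (if sxor (A u) (B (sxor u z)) = z then (1 : ℝ) else 0)
      ≤ ∑ s, f (sxor u (had s)) * g (sxor (sxor u (had s)) z) := by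
    intro u z
    have hnn : ∀ s ∈ Finset.univ, 0 ≤ f (sxor u (had s)) * g (sxor (sxor u (had s)) z) :=
      fun s _ => mul_nonneg (hf0 _) (hg0 _)
    split_ifs with hw
    · obtain ⟨s, hs⟩ := hAmem u
      refine le_trans (le_of_eq ?_) (Finset.single_le_sum hnn (Finset.mem_univ s))
      have c : sxor (sxor u (had s)) z = sxor (sxor u z) (had s) := by
        funext j; simp only [sxor]; cases u j <;> cases had s j <;> cases z j <;> rfl
      have hB : B (sxor u z) = sxor (sxor u z) (had s) := by
        funext j
        have h1 := congrFun hw j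
        rw [hs] at h1
        simp only [sxor] at h1 ⊢
        revert h1
        generalize B _ j = b
        cases u j <;> cases had s j <;> cases z j <;> cases b <;> decide
      simp only [hf, hg]
      rw [c, hAcoset, hBcoset, if_pos hs, if_pos hB, mul_one]
    · exact Finset.sum_nonneg hnn
  set S := ∑ u, ∑ z, (∏ j, (if u j = z j then 1 - η else η)) * (f u * g z) with hS
  have hmain : (∑ u : (Fin k → Bool) → Bool, ∑ z : (Fin k → Bool) → Bool,
        η ^ (wt z) * (1 - η) ^ (2 ^ k - wt z) *
          (if sxor (A u) (B (sxor u z)) = z then (1 : ℝ) else 0)) ≤ (2 ^ k : ℝ) * S := by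
    calc _ ≤ ∑ u : (Fin k → Bool) → Bool, ∑ z : (Fin k → Bool) → Bool,
        η ^ (wt z) * (1 - η) ^ (2 ^ k - wt z) *
          ∑ s, f (sxor u (had s)) * g (sxor (sxor u (had s)) z) := by
          refine Finset.sum_le_sum fun u _ => Finset.sum_le_sum fun z _ => ?_
          exact mul_le_mul_of_nonneg_left (hwin u z) (by positivity)
      _ = ∑ s : Fin k → Bool, ∑ u : (Fin k → Bool) → Bool, ∑ z : (Fin k → Bool) → Bool,
        η ^ (wt z) * (1 - η) ^ (2 ^ k - wt z) *
          (f (sxor u (had s)) * g (sxor (sxor u (had s)) z)) := by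
          simp_rw [Finset.mul_sum]
          conv_rhs => rw [Finset.sum_comm]
          refine Finset.sum_congr rfl fun u _ => ?_
          rw [Finset.sum_comm]
      _ = ∑ s : Fin k → Bool, S := by
          refine Finset.sum_congr rfl fun s _ => ?_
          refine ((kvShift (had s)).sum_comp (fun u => ∑ z : (Fin k → Bool) → Bool,
            η ^ (wt z) * (1 - η) ^ (2 ^ k - wt z) * (f u * g (sxor u z)))).trans ?_
          refine Finset.sum_congr rfl fun u _ => ?_
          rw [← (kvShiftL u).sum_comp]
          refine Finset.sum_congr rfl fun z _ => ?_
          have hz : sxor u (kvShiftL u z) = z := (kvShiftL u).left_inv z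
          rw [kv_weight η u (kvShiftL u z), hz]
      _ = (2 ^ k : ℝ) * S := by simp
  have cf := kv_count A hAcoset
  have cg := kv_count B hBcoset
  have hSf : ∑ w, f w ≤ 2 ^ (2 ^ k) / 2 ^ k := by
    rw [le_div_iff₀ (by positivity), mul_comm]; exact cf
  have hSg : ∑ w, g w ≤ 2 ^ (2 ^ k) / 2 ^ k := by
    rw [le_div_iff₀ (by positivity), mul_comm]; exact cg
  have hSf0 : 0 ≤ ∑ w, f w := Finset.sum_nonneg fun w _ => hf0 w
  have hSg0 : 0 ≤ ∑ w, g w := Finset.sum_nonneg fun w _ => hg0 w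
  set N : ℝ := 2 ^ (2 ^ k) with hN
  set n : ℝ := 2 ^ k with hn
  have hN0 : 0 < N := by positivity
  have hn0 : 0 < n := by positivity
  have hpi : 0 ≤ 1 / (2 - 2 * η) := by apply div_nonneg <;> linarith
  have hbound : S ≤ N ^ (1 - 1 / (1 - η)) * (N / n) ^ (1 / (1 - η)) := by
    have hC : ((2:ℝ) ^ (1 - 1 / (1 - η))) ^ (Fintype.card (Fin k → Bool))
        = N ^ (1 - 1 / (1 - η)) := by
      rw [hN, ← Real.rpow_natCast, ← Real.rpow_natCast, ← Real.rpow_mul (by norm_num),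
        ← Real.rpow_mul (by norm_num), mul_comm]
      simp
    rw [hC] at hH
    refine hH.trans (mul_le_mul_of_nonneg_left ?_ (by positivity))
    have : (N / n) ^ (1 / (1 - η)) = (N / n) ^ (1 / (2 - 2 * η)) * (N / n) ^ (1 / (2 - 2 * η)) := by
      rw [← Real.rpow_add (by positivity), ← e3]; congr 1; ring
    rw [this]
    exact mul_le_mul (Real.rpow_le_rpow hSf0 hSf hpi) (Real.rpow_le_rpow hSg0 hSg hpi)
      (by positivity) (by positivity)
  rw [div_le_iff₀ hN0]
  refine (hmain.trans (mul_le_mul_of_nonneg_left hbound hn0.le)).trans (le_of_eq ?_)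
  have e4 : η / (1 - η) = 1 / (1 - η) - 1 := by field_simp; ring
  rw [e4, Real.div_rpow hN0.le hn0.le, Real.rpow_sub hN0, Real.rpow_sub hn0, Real.rpow_one,
    Real.rpow_one]
  field_simp
end
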